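/- arXiv:1710.08143 — 3 statements merged into one kernel-verified Lean document; each statement's English description precedes it below -/
import Mathlib

section
/- Let G be a finite connected simple graph that contains at least one cycle. Then the distinguishing index of G is at most the distinguishing number of G, i.e., D'(G) ≤ D(G). -/
open SimpleGraph

/-- The distinguishing number of a simple graph `G`: the least `d` such that there is a
vertex labeling with `d` labels preserved only by the trivial automorphism. -/
noncomputable def distinguishingNumber {V : Type*} (G : SimpleGraph V) : ℕ :=
  sInf {d : ℕ | ∃ φ : V → Fin d,
    ∀ f : G ≃g G, (∀ x : V, φ (f x) = φ x) → ∀ x : V, f x = x}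

/-- The distinguishing index of a simple graph `G`: the least `d` such that there is an
edge labeling with `d` labels preserved only by the trivial automorphism. -/
noncomputable def distinguishingIndex {V : Type*} (G : SimpleGraph V) : ℕ :=
  sInf {d : ℕ | ∃ ψ : G.edgeSet → Fin d,
    ∀ f : G ≃g G, (∀ e : G.edgeSet, ψ (f.mapEdgeSet e) = ψ e) → ∀ x : V, f x = x}


section DI1

variable {V : Type*} {G : SimpleGraph V}

theorem di_sym2_cases (e : Sym2 V) : ∃ a b, e = s(a, b) := by
  induction e using Sym2.ind with
  | _ a b => exact ⟨a, b, rfl⟩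

theorem di_cyc_nojump {u : V} (w : G.Walk u u) (hw : w.IsCycle) (a b : V)
    (hab : s(a, b) ∈ w.edges) (P : V → Prop)
    (hP : ∀ x y, s(x, y) ∈ w.edges → s(x, y) ≠ s(a, b) → (P x ↔ P y)) : P a ↔ P b := by
  set H : SimpleGraph V := SimpleGraph.fromEdgeSet {e | e ∈ w.edges} with hH
  have hmem : ∀ e ∈ w.edges, e ∈ H.edgeSet := by
    intro e he
    rw [hH, SimpleGraph.edgeSet_fromEdgeSet]
    refine ⟨he, ?_⟩
    exact G.not_isDiag_of_mem_edgeSet (w.edges_subset_edgeSet he)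
  have hc : (w.transfer H hmem).IsCycle := hw.transfer hmem
  have h1 := (SimpleGraph.adj_and_reachable_delete_edges_iff_exists_cycle (G := H) (v := a) (w := b)).2
    ⟨u, w.transfer H hmem, hc, by rwa [SimpleGraph.Walk.edges_transfer]⟩
  obtain ⟨_, ⟨q⟩⟩ := h1
  have key : ∀ (x y : V) (q : (H \ SimpleGraph.fromEdgeSet {s(a, b)}).Walk x y), P x ↔ P y := by
    intro x y q
    induction q with
    | nil => exact Iff.rfl
    | cons h q ih =>
      refine Iff.trans ?_ ih
      simp only [SimpleGraph.sdiff_adj, hH, SimpleGraph.fromEdgeSet_adj, Set.mem_singleton_iff,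
        Set.mem_ofPred_eq] at h
      exact hP _ _ h.1.1 (fun h' => h.2 ⟨h', h.1.2⟩)
  exact key a b q

theorem di_walk_const {u v : V} (w : G.Walk u v) (P : V → Prop)
    (hP : ∀ x y, s(x, y) ∈ w.edges → (P x ↔ P y)) : ∀ z ∈ w.support, (P z ↔ P u) := by
  induction w with
  | nil => intro z hz; simp at hz; rw [hz]
  | cons h q ih =>
    intro z hz
    rw [SimpleGraph.Walk.support_cons, List.mem_cons] at hz
    rcases hz with rfl | hz
    · exact Iff.rfl
    · refine (ih (fun x y hxy => hP x y (by simp [hxy])) z hz).trans ?_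
      exact (hP _ _ (by simp)).symm

theorem di_boundary (hconn : G.Connected) (S : Set V) {a b : V} (ha : a ∈ S) (hb : b ∉ S) :
    ∃ x y, G.Adj x y ∧ x ∈ S ∧ y ∉ S := by
  obtain ⟨p⟩ := hconn.preconnected a b
  obtain ⟨d, _, h1, h2⟩ := p.exists_boundary_dart S ha hb
  exact ⟨d.fst, d.snd, d.adj, h1, h2⟩

theorem di_const (hconn : G.Connected) (P : V → Prop) (hP : ∀ x y, G.Adj x y → (P x ↔ P y)) (a b : V) :
    P a ↔ P b := by
  obtain ⟨p⟩ := hconn.preconnected a b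
  induction p with
  | nil => exact Iff.rfl
  | cons h q ih => exact (hP _ _ h).trans ih

def DICut (G : SimpleGraph V) (X : Set V) (e f : Sym2 V) : Prop :=
  e ∈ G.edgeSet ∧ f ∈ G.edgeSet ∧ e ≠ f ∧
    ∀ x y, G.Adj x y → ((x ∈ X ↔ y ∈ X) ↔ (s(x, y) ≠ e ∧ s(x, y) ≠ f))

def DICyc (G : SimpleGraph V) (e : Sym2 V) : Prop :=
  ∃ (u : V) (w : G.Walk u u), w.IsCycle ∧ e ∈ w.edges

def DIHeavy (G : SimpleGraph V) (X : Set V) : Prop :=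
  ∃ (u : V) (w : G.Walk u u), w.IsCycle ∧ ∀ z ∈ w.support, z ∈ X

theorem DIHeavy.mono {X Y : Set V} (h : DIHeavy G X) (hXY : X ⊆ Y) : DIHeavy G Y := by
  obtain ⟨u, w, hw, h⟩ := h
  exact ⟨u, w, hw, fun z hz => hXY (h z hz)⟩

theorem DICyc.mem {e : Sym2 V} (h : DICyc G e) : e ∈ G.edgeSet := by
  obtain ⟨u, w, _, he⟩ := h
  exact w.edges_subset_edgeSet he

theorem DICut.compl {X : Set V} {e f : Sym2 V} (h : DICut G X e f) : DICut G Xᶜ e f := by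
  obtain ⟨h1, h2, h3, h4⟩ := h
  refine ⟨h1, h2, h3, fun x y hxy => ?_⟩
  rw [← h4 x y hxy]
  simp only [Set.mem_compl_iff]; tauto

theorem DICut.symm {X : Set V} {e f : Sym2 V} (h : DICut G X e f) : DICut G X f e := by
  obtain ⟨h1, h2, h3, h4⟩ := h
  refine ⟨h2, h1, h3.symm, fun x y hxy => ?_⟩
  rw [h4 x y hxy]; tauto

theorem DICut.trans {X X' : Set V} {e f h : Sym2 V} (h1 : DICut G X e f) (h2 : DICut G X' f h)
    (heh : e ≠ h) : DICut G {x | ¬ (x ∈ X ↔ x ∈ X')} e h := by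
  obtain ⟨a1, a2, a3, a4⟩ := h1
  obtain ⟨b1, b2, b3, b4⟩ := h2
  refine ⟨a1, b2, heh, fun x y hxy => ?_⟩
  have A := a4 x y hxy
  have B := b4 x y hxy
  simp only [Set.mem_ofPred_eq]
  by_cases q1 : s(x, y) = e
  · have q2 : s(x, y) ≠ f := by rw [q1]; exact a3
    have q3 : s(x, y) ≠ h := by rw [q1]; exact heh
    tauto
  · by_cases q2 : s(x, y) = f
    · have q3 : s(x, y) ≠ h := by rw [q2]; exact b3
      tauto
    · tauto

theorem DICut.jump {X : Set V} {e f : Sym2 V} (h : DICut G X e f) : ∃ a b, e = s(a, b) ∧ G.Adj a b ∧ a ∈ X ∧ b ∉ X := by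
  obtain ⟨h1, h2, h3, h4⟩ := h
  obtain ⟨a, b, rfl⟩ := di_sym2_cases e
  have hab : G.Adj a b := h1
  have := h4 a b hab
  by_cases ha : a ∈ X
  · exact ⟨a, b, rfl, hab, ha, by tauto⟩
  · exact ⟨b, a, Sym2.eq_swap, hab.symm, by tauto, ha⟩

theorem DICut.not_iff {X : Set V} {a b : V} {f : Sym2 V} (h : DICut G X s(a, b) f) : ¬ (a ∈ X ↔ b ∈ X) := by
  have := h.2.2.2 a b h.1
  tauto

theorem DICut.of_jump {X : Set V} {e f : Sym2 V} (h : DICut G X e f) {x y : V} (hxy : G.Adj x y)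
    (hx : ¬ (x ∈ X ↔ y ∈ X)) : s(x, y) = e ∨ s(x, y) = f := by
  have := h.2.2.2 x y hxy
  tauto

theorem DICut.cyc_avoid {X : Set V} {e f : Sym2 V} (h : DICut G X e f) {u : V} (w : G.Walk u u)
    (hw : w.IsCycle) (he : e ∉ w.edges) : f ∉ w.edges := by
  intro hf
  obtain ⟨a, b, rfl⟩ := di_sym2_cases f
  refine h.symm.not_iff (di_cyc_nojump w hw a b hf (· ∈ X) ?_)
  intro x y hxy hne
  refine (h.2.2.2 x y (w.edges_subset_edgeSet hxy)).2 ⟨?_, hne⟩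
  rintro rfl; exact he hxy

theorem DICut.cyc_side {X : Set V} {e f : Sym2 V} (h : DICut G X e f) {u : V} (w : G.Walk u u)
    (hw : w.IsCycle) (he : e ∉ w.edges) : (∀ z ∈ w.support, z ∈ X) ∨ (∀ z ∈ w.support, z ∈ Xᶜ) := by
  have hf := h.cyc_avoid w hw he
  have key := di_walk_const w (· ∈ X) (by
    intro x y hxy
    refine (h.2.2.2 x y (w.edges_subset_edgeSet hxy)).2 ⟨?_, ?_⟩
    · rintro rfl; exact he hxy
    · rintro rfl; exact hf hxy)
  by_cases hu : u ∈ X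
  · left; intro z hz; exact (key z hz).2 hu
  · right; intro z hz hz'; exact hu ((key z hz).1 hz')

theorem DICut.heavy_or {X : Set V} {e f : Sym2 V} (h : DICut G X e f)
    (hnu : ∀ e : Sym2 V, ∃ (u : V) (w : G.Walk u u), w.IsCycle ∧ e ∉ w.edges) :
    DIHeavy G X ∨ DIHeavy G Xᶜ := by
  obtain ⟨u, w, hw, he⟩ := hnu e
  rcases h.cyc_side w hw he with h | h
  · exact Or.inl ⟨u, w, hw, h⟩
  · exact Or.inr ⟨u, w, hw, h⟩

theorem DICut.cyc {X : Set V} {e f : Sym2 V} (h : DICut G X e f) (he : DICyc G e) : DICyc G f := by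
  obtain ⟨u, w, hw, he⟩ := he
  refine ⟨u, w, hw, ?_⟩
  by_contra hf
  exact h.symm.cyc_avoid w hw hf he

theorem di_cyc_not_single {X : Set V} {e : Sym2 V} (he : DICyc G e) {a b : V} (hab : e = s(a, b))
    (ha : a ∈ X) (hb : b ∉ X) : ∃ x y, G.Adj x y ∧ x ∈ X ∧ y ∉ X ∧ s(x, y) ≠ e := by
  obtain ⟨u, w, hw, he⟩ := he
  by_contra hcon
  push Not at hcon
  subst hab
  have := di_cyc_nojump w hw a b he (· ∈ X) (by
    intro x y hxy hne
    have hadj : G.Adj x y := w.edges_subset_edgeSet hxy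
    by_contra hh
    by_cases hx : x ∈ X
    · exact hne (hcon x y hadj hx (by tauto))
    · exact hne (by rw [Sym2.eq_swap]; exact hcon y x hadj.symm (by tauto) hx))
  exact hb (this.1 ha)

theorem DICut.conn (hconn : G.Connected) {X : Set V} {e f : Sym2 V} (h : DICut G X e f) (he : DICyc G e) (P : V → Prop)
    (hP : ∀ x y, G.Adj x y → x ∈ X → y ∈ X → (P x ↔ P y)) {u v : V} (hu : u ∈ X) (hv : v ∈ X) : P u ↔ P v := by
  have hf := h.cyc he
  have main : ∀ u v, u ∈ X → v ∈ X → P u → ¬ P v → False := by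
    intro u v hu hv pu pv
    set Q : Set V := {z | z ∈ X ∧ P z} with hQ
    set Z : Set V := {z | z ∈ X ∧ ¬ P z} with hZ
    obtain ⟨x, y, hxy, hx, hy⟩ := di_boundary hconn Q (a := u) (b := v) ⟨hu, pu⟩ (fun h => pv h.2)
    obtain ⟨x', y', hxy', hx', hy'⟩ := di_boundary hconn Z (a := v) (b := u) ⟨hv, pv⟩ (fun h => h.2 pu)
    have hQout : ∀ x y, G.Adj x y → x ∈ Q → y ∉ Q → y ∉ X := by
      intro x y hxy hx hy hyX
      exact hy ⟨hyX, (hP x y hxy hx.1 hyX).1 hx.2⟩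
    have hZout : ∀ x y, G.Adj x y → x ∈ Z → y ∉ Z → y ∉ X := by
      intro x y hxy hx hy hyX
      exact hy ⟨hyX, fun h => hx.2 ((hP x y hxy hx.1 hyX).2 h)⟩
    have hdis : ∀ x y x' y', x ∈ Q → y ∉ X → x' ∈ Z → y' ∉ X → s(x, y) ≠ s(x', y') := by
      intro x y x' y' hx hy hx' hy' heq
      rw [Sym2.eq_iff] at heq
      rcases heq with ⟨rfl, rfl⟩ | ⟨rfl, rfl⟩
      · exact hx'.2 hx.2
      · exact hy' hx.1
    have hyX := hQout x y hxy hx hy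
    have hyX' := hZout x' y' hxy' hx' hy'
    have c1 := h.of_jump hxy (by have := hx.1; tauto)
    have c2 := h.of_jump hxy' (by have := hx'.1; tauto)
    have c0 := hdis x y x' y' hx hyX hx' hyX'
    have hcy : DICyc G s(x, y) := by rcases c1 with c | c <;> rw [c] <;> assumption
    obtain ⟨x1, y1, ha1, hx1, hy1, hne⟩ := di_cyc_not_single hcy rfl hx hy
    have hy1X := hQout x1 y1 ha1 hx1 hy1
    have c3 := h.of_jump ha1 (by have := hx1.1; tauto)
    have c4 := hdis x1 y1 x' y' hx1 hy1X hx' hyX'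
    rcases c1 with c1 | c1 <;> rcases c2 with c2 | c2 <;> rcases c3 with c3 | c3 <;> simp_all
  by_contra hcon
  by_cases pu : P u
  · exact main u v hu hv pu (by tauto)
  · exact main v u hv hu (by tauto) pu

/-- images under automorphisms -/
theorem DICut.image {X : Set V} {e f : Sym2 V} (h : DICut G X e f) (γ : G ≃g G) :
    DICut G (γ '' X) (e.map γ) (f.map γ) := by
  obtain ⟨h1, h2, h3, h4⟩ := h
  have hinj : Function.Injective (Sym2.map γ) := Sym2.map.injective γ.injective
  have hE : ∀ e ∈ G.edgeSet, Sym2.map γ e ∈ G.edgeSet := by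
    intro e he
    obtain ⟨a, b, rfl⟩ := di_sym2_cases e
    have hab : G.Adj a b := he
    exact γ.map_adj_iff.2 hab
  refine ⟨hE e h1, hE f h2, fun h => h3 (hinj h), fun x y hxy => ?_⟩
  obtain ⟨x, rfl⟩ := γ.surjective x
  obtain ⟨y, rfl⟩ := γ.surjective y
  have hxy' : G.Adj x y := γ.map_adj_iff.1 hxy
  rw [γ.injective.mem_set_image, γ.injective.mem_set_image, h4 x y hxy', ← Sym2.map_mk, hinj.ne_iff, hinj.ne_iff]

theorem DICyc.image {e : Sym2 V} (h : DICyc G e) (γ : G ≃g G) : DICyc G (e.map γ) := by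
  obtain ⟨u, w, hw, he⟩ := h
  refine ⟨γ u, w.map γ.toHom, hw.map γ.injective, ?_⟩
  rw [SimpleGraph.Walk.edges_map]
  exact List.mem_map_of_mem he

theorem DIHeavy.image {X : Set V} (h : DIHeavy G X) (γ : G ≃g G) : DIHeavy G (γ '' X) := by
  obtain ⟨u, w, hw, h⟩ := h
  refine ⟨γ u, w.map γ.toHom, hw.map γ.injective, ?_⟩
  intro z hz
  rw [SimpleGraph.Walk.support_map] at hz
  obtain ⟨z', hz', rfl⟩ := List.mem_map.1 hz
  exact ⟨z', h z' hz', rfl⟩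

end DI1

section DI2
open scoped Classical

variable {V : Type*} {G : SimpleGraph V} {F : Type*} [Field F]

def DIPres {L : Type*} (G : SimpleGraph V) (ψ : Sym2 V → L) (γ : G ≃g G) : Prop :=
  ∀ x y, G.Adj x y → ψ s(γ x, γ y) = ψ s(x, y)

theorem DIPres.symm {L : Type*} {ψ : Sym2 V → L} {γ : G ≃g G} (h : DIPres G ψ γ) :
    DIPres G ψ γ.symm := by
  intro x y hxy
  have := h (γ.symm x) (γ.symm y) (γ.symm.map_adj_iff.2 hxy)
  simpa using this.symm

theorem DIPres.trans {L : Type*} {ψ : Sym2 V → L} {γ δ : G ≃g G} (h : DIPres G ψ γ) (h' : DIPres G ψ δ) :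
    DIPres G ψ (γ.trans δ) := by
  intro x y hxy
  have h1 := h x y hxy
  have h2 := h' (γ x) (γ y) (γ.map_adj_iff.2 hxy)
  simpa using h2.trans h1

def DINT (γ : G ≃g G) : Prop := ∃ x, γ x ≠ x

theorem DINT.symm {γ : G ≃g G} (h : DINT γ) : DINT γ.symm := by
  obtain ⟨x, hx⟩ := h
  exact ⟨x, fun h => hx (by conv_lhs => rw [← h]; simp)⟩

def diSum (c : V → F) : Sym2 V → F := Sym2.lift ⟨fun x y => c x + c y, fun x y => add_comm _ _⟩

@[simp] theorem diSum_mk (c : V → F) (x y : V) : diSum c s(x, y) = c x + c y := rfl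

theorem di_S0_helper (hconn : G.Connected) (c : V → F)
    (hc : ∀ γ : G ≃g G, (∀ x, c (γ x) = c x) → ∀ x, γ x = x) {μ ν : G ≃g G}
    (hμ : DIPres G (diSum c) μ) (hν : DIPres G (diSum c) ν) {a : V} (ha : c (μ a) = c (ν a)) :
    ∀ x, μ x = ν x := by
  have h1 : ∀ x, c (μ x) = c (ν x) := by
    intro x
    refine (di_const hconn (fun x => c (μ x) = c (ν x)) ?_ a x).1 ha
    intro x y hxy
    have e1 := hμ x y hxy
    have e2 := hν x y hxy
    simp only [diSum_mk] at e1 e2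
    constructor
    · intro h; rw [h] at e1; exact add_left_cancel (e1.trans e2.symm)
    · intro h; rw [h] at e1; exact add_right_cancel (e1.trans e2.symm)
  intro x
  have := hc (ν.symm.trans μ) (by intro x; simp [h1]) (ν x)
  simpa using this

theorem di_S0_fix (hconn : G.Connected) (c : V → F)
    (hc : ∀ γ : G ≃g G, (∀ x, c (γ x) = c x) → ∀ x, γ x = x) {μ : G ≃g G}
    (hμ : DIPres G (diSum c) μ) {a : V} (ha : c (μ a) = c a) : ¬ DINT μ := by
  rintro ⟨x, hx⟩
  exact hx (di_S0_helper hconn c hc (ν := RelIso.refl _) hμ (fun x y _ => rfl) ha x)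

theorem di_swap_of_fix {γ : G ≃g G} {x y : V} (h : s(γ x, γ y) = s(x, y)) (hx : γ x ≠ x) : γ x = y ∧ γ y = x := by
  rw [Sym2.eq_iff] at h
  tauto

theorem di_free_edge (hconn : G.Connected) (c : V → F)
    (hc : ∀ γ : G ≃g G, (∀ x, c (γ x) = c x) → ∀ x, γ x = x)
    (hF : ∀ a b : F, a ≠ 0 → b ≠ 0 → b = a ∨ b - a = a)
    {u : V} (w : G.Walk u u) (hw : w.IsCycle) :
    ∃ e ∈ w.edges, ∀ γ : G ≃g G, DIPres G (diSum c) γ → DINT γ → e.map γ ≠ e := by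
  by_contra hcon
  push Not at hcon
  have hnn : ¬ w.Nil := hw.not_nil
  have m1 : s(u, w.snd) ∈ w.edges := w.mk_start_snd_mem_edges hnn
  have m2 : s(w.penultimate, u) ∈ w.edges := w.mk_penultimate_end_mem_edges hnn
  rw [Sym2.eq_swap] at m2
  have hne := hw.snd_ne_penultimate
  have adj1 : G.Adj u w.snd := w.edges_subset_edgeSet m1
  have adj2 : G.Adj u w.penultimate := w.edges_subset_edgeSet m2
  obtain ⟨γ, hγ, hnt, hfix⟩ := hcon _ m1
  obtain ⟨δ, hδ, hnt', hfix'⟩ := hcon _ m2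
  generalize w.snd = x' at *
  generalize w.penultimate = x'' at *
  rw [Sym2.map_mk] at hfix hfix'
  have q1 : c (γ u) ≠ c u := fun h => di_S0_fix hconn c hc hγ h hnt
  have q2 : c (δ u) ≠ c u := fun h => di_S0_fix hconn c hc hδ h hnt'
  obtain ⟨s1, s2⟩ := di_swap_of_fix hfix (fun h => q1 (by rw [h]))
  obtain ⟨t1, t2⟩ := di_swap_of_fix hfix' (fun h => q2 (by rw [h]))
  rcases hF (c (γ u) - c u) (c (δ u) - c u) (sub_ne_zero.2 q1) (sub_ne_zero.2 q2) with h | h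
  · have := di_S0_helper hconn c hc hγ hδ (a := u) (by linear_combination -h) u
    exact hne (by rw [← s1, ← t1, this])
  · have e1 := hγ _ _ adj2
    simp only [diSum_mk] at e1
    have := di_S0_helper hconn c hc (hδ.trans hγ) hγ (a := u) (by
      simp only [RelIso.trans_apply, t1]
      rw [t1] at h
      linear_combination e1 + h) u
    simp only [RelIso.trans_apply] at this
    exact q2 (by rw [γ.injective this])

theorem di_fail (hconn : G.Connected) (c : V → F)
    (hc : ∀ γ : G ≃g G, (∀ x, c (γ x) = c x) → ∀ x, γ x = x)
    (hbad : ∀ ψ : Sym2 V → F, ∃ γ : G ≃g G, DIPres G ψ γ ∧ DINT γ)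
    {e : Sym2 V} (he : DICyc G e) {s : F} (hs : s ≠ 0) :
    ∃ γ : G ≃g G, DINT γ ∧ DIPres G (fun g => diSum c g + if g = e then s else 0) γ ∧
      ((e.map γ = e ∧ DIPres G (diSum c) γ) ∨ (e.map γ ≠ e ∧ ∃ X, DICut G X e (e.map γ))) := by
  obtain ⟨γ0, h0, hn0⟩ := hbad (diSum c)
  have hε : ∀ x, c (γ0 x) - c x ≠ 0 := fun x h => di_S0_fix hconn c hc h0 (sub_eq_zero.1 h) hn0
  have hε2 : ∀ x y, G.Adj x y → (c (γ0 x) - c x) = - (c (γ0 y) - c y) := by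
    intro x y hxy
    have := h0 x y hxy
    simp only [diSum_mk] at this
    linear_combination this
  obtain ⟨γ', hγ', hn'⟩ := hbad (fun g => diSum c g + if g = e then s else 0)
  refine ⟨γ'.symm, hn'.symm, hγ'.symm, ?_⟩
  have hmap : ∀ x y, s(γ' x, γ' y) = e ↔ s(x, y) = e.map γ'.symm := by
    intro x y
    obtain ⟨a, b, rfl⟩ := di_sym2_cases e
    simp only [Sym2.map_mk, Sym2.eq_iff]
    constructor
    · rintro (⟨rfl, rfl⟩ | ⟨rfl, rfl⟩) <;> simp
    · rintro (⟨rfl, rfl⟩ | ⟨rfl, rfl⟩) <;> simp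
  by_cases hfix : e.map γ'.symm = e
  · left
    refine ⟨hfix, DIPres.symm ?_⟩
    intro x y hxy
    have := hγ' x y hxy
    simp only [hmap, hfix] at this
    exact add_right_cancel this
  · right
    refine ⟨hfix, ?_⟩
    set e' := e.map γ'.symm with he'
    set ε : V → F := fun x => c (γ0 x) - c x with hεd
    set f : V → F := fun x => c (γ' x) - c x with hf
    have hfe : ∀ x y, G.Adj x y → f x + f y = (if s(x, y) = e then s else 0) - (if s(x, y) = e' then s else 0) := by
      intro x y hxy
      have := hγ' x y hxy
      simp only [hmap, diSum_mk] at this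
      simp only [hf]
      linear_combination this
    set g : V → F := fun x => f x / ε x with hg
    have hgj : ∀ x y, G.Adj x y → (g x = g y ↔ f x + f y = 0) := by
      intro x y hxy
      have h1 : ε x = - ε y := hε2 x y hxy
      have h2 : ε y ≠ 0 := hε y
      simp only [hg, h1]
      rw [div_neg, neg_eq_iff_add_eq_zero, ← add_div, div_eq_zero_iff]
      tauto
    have heG := he.mem
    obtain ⟨a, b, hab⟩ := di_sym2_cases e
    have hadj : G.Adj a b := by rw [hab] at heG; exact heG
    have jump_e : ∀ x y, G.Adj x y → s(x, y) = e → g x ≠ g y := by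
      intro x y hxy h
      rw [Ne, hgj x y hxy, hfe x y hxy, if_pos h, if_neg (by rw [h]; exact Ne.symm hfix)]
      simpa using hs
    have nojump : ∀ x y, G.Adj x y → s(x, y) ≠ e → s(x, y) ≠ e' → g x = g y := by
      intro x y hxy h h'
      rw [hgj x y hxy, hfe x y hxy, if_neg h, if_neg h', sub_zero]
    obtain ⟨x1, y1, hadj1, hx1, hy1, hne1⟩ := di_cyc_not_single (X := {x | g x = g a}) he hab rfl
      (fun h => jump_e a b hadj hab.symm (Eq.symm h))
    have hx1' : g x1 = g a := hx1
    have hy1' : g y1 ≠ g a := hy1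
    have hs1 : s(x1, y1) = e' := by
      by_contra h
      exact hy1' (by rw [← nojump x1 y1 hadj1 hne1 h, hx1'])
    refine ⟨{x | g x = g a}, heG, ?_, Ne.symm hfix, ?_⟩
    · rw [← hs1]; exact hadj1
    · intro x y hxy
      simp only [Set.mem_ofPred_eq]
      constructor
      · intro h
        refine ⟨fun h' => ?_, fun h' => ?_⟩
        · have hj := jump_e x y hxy h'
          rw [hab, Sym2.eq_iff] at h'
          rcases h' with ⟨rfl, rfl⟩ | ⟨rfl, rfl⟩
          · exact hj (h.1 rfl).symm
          · exact hj (h.2 rfl)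
        · rw [← hs1, Sym2.eq_iff] at h'
          rcases h' with ⟨rfl, rfl⟩ | ⟨rfl, rfl⟩
          · exact hy1' (h.1 hx1')
          · exact hy1' (h.2 hx1')
      · rintro ⟨h1, h2⟩
        rw [nojump x y hxy h1 h2]

theorem di_free_cut (hconn : G.Connected) (c : V → F)
    (hc : ∀ γ : G ≃g G, (∀ x, c (γ x) = c x) → ∀ x, γ x = x)
    (hF : ∀ a b : F, a ≠ 0 → b ≠ 0 → b = a ∨ b - a = a)
    (hbad : ∀ ψ : Sym2 V → F, ∃ γ : G ≃g G, DIPres G ψ γ ∧ DINT γ)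
    {u : V} (w : G.Walk u u) (hw : w.IsCycle) :
    ∃ e ∈ w.edges, ∃ f X, DICut G X e f := by
  obtain ⟨e, he, hfree⟩ := di_free_edge hconn c hc hF w hw
  obtain ⟨γ, hn, _, h⟩ := di_fail hconn c hc hbad ⟨u, w, hw, he⟩ (one_ne_zero (α := F))
  rcases h with ⟨h1, h2⟩ | ⟨_, X, hX⟩
  · exact absurd h1 (hfree γ h2 hn)
  · exact ⟨e, he, _, X, hX⟩

end DI2

section DI3
open scoped Classical

variable {V : Type*} {G : SimpleGraph V}

def DIRel (G : SimpleGraph V) (g h : Sym2 V) : Prop := g = h ∨ ∃ X, DICut G X g h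

theorem DIRel.symm {g h : Sym2 V} (H : DIRel G g h) : DIRel G h g := by
  rcases H with rfl | ⟨X, hX⟩
  · exact Or.inl rfl
  · exact Or.inr ⟨X, hX.symm⟩

theorem DIRel.trans {g h k : Sym2 V} (H : DIRel G g h) (H' : DIRel G h k) : DIRel G g k := by
  rcases H with rfl | ⟨X, hX⟩
  · exact H'
  rcases H' with rfl | ⟨Y, hY⟩
  · exact Or.inr ⟨X, hX⟩
  by_cases hgk : g = k
  · exact Or.inl hgk
  · exact Or.inr ⟨_, hX.trans hY hgk⟩

theorem DIRel.image {g h : Sym2 V} (H : DIRel G g h) (γ : G ≃g G) : DIRel G (g.map γ) (h.map γ) := by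
  rcases H with rfl | ⟨X, hX⟩
  · exact Or.inl rfl
  · exact Or.inr ⟨_, hX.image γ⟩

theorem DIRel.cyc {g h : Sym2 V} (H : DIRel G g h) (hg : DICyc G g) : DICyc G h := by
  rcases H with rfl | ⟨X, hX⟩
  · exact hg
  · exact hX.cyc hg

theorem DIRel.mem_edges {g h : Sym2 V} (H : DIRel G g h) {u : V} (w : G.Walk u u) (hw : w.IsCycle)
    (hg : g ∈ w.edges) : h ∈ w.edges := by
  rcases H with rfl | ⟨X, hX⟩
  · exact hg
  · by_contra hh
    exact hX.symm.cyc_avoid w hw hh hg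

theorem DICut.rel {X : Set V} {g h : Sym2 V} (H : DICut G X g h) : DIRel G g h := Or.inr ⟨X, H⟩

theorem DICut.unique {X : Set V} {e f e' f' : Sym2 V} (h : DICut G X e f) (h' : DICut G X e' f') :
    (e' = e ∧ f' = f) ∨ (e' = f ∧ f' = e) := by
  obtain ⟨a, b, hab, hadj, ha, hb⟩ := h'.jump
  obtain ⟨a', b', hab', hadj', ha', hb'⟩ := h'.symm.jump
  have h1 := h.of_jump hadj (by tauto)
  have h2 := h.of_jump hadj' (by tauto)
  rw [← hab] at h1
  rw [← hab'] at h2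
  have h3 := h'.2.2.1
  rcases h1 with h1 | h1 <;> rcases h2 with h2 | h2
  · exact absurd (h1.trans h2.symm) h3
  · exact Or.inl ⟨h1, h2⟩
  · exact Or.inr ⟨h1, h2⟩
  · exact absurd (h1.trans h2.symm) h3

theorem DIRel.exists_in {e g : Sym2 V} (H : DIRel G e g) (hne : e ≠ g) (b0 : V) : ∃ X, DICut G X e g ∧ b0 ∉ X := by
  rcases H with rfl | ⟨X, hX⟩
  · exact absurd rfl hne
  · by_cases hb : b0 ∈ X
    · exact ⟨_, hX.compl, by simpa using hb⟩
    · exact ⟨X, hX, hb⟩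

theorem di_structure [Finite V] (hconn : G.Connected)
    (hnu : ∀ e : Sym2 V, ∃ (u : V) (w : G.Walk u u), w.IsCycle ∧ e ∉ w.edges)
    (hfree : ∀ (u : V) (w : G.Walk u u), w.IsCycle → ∃ e ∈ w.edges, ∃ f X, DICut G X e f) :
    ∃ (b0 : V) (A : Set V) (e1 ek : Sym2 V), DICut G A e1 ek ∧ b0 ∉ A ∧ DICyc G e1 ∧
      ∀ X g g', DICut G X g g' → DIRel G e1 g → b0 ∉ X → X ⊆ A ∧ ¬ DIHeavy G X := by
  -- minimal heavy side
  have hex : ∃ Y : Set V, DIHeavy G Y ∧ ∃ e f, DICut G Y e f ∧ DICyc G e := by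
    obtain ⟨v⟩ := hconn.nonempty
    obtain ⟨u, w, hw, -⟩ := hnu s(v, v)
    obtain ⟨e, he, f, X, hX⟩ := hfree u w hw
    rcases hX.heavy_or hnu with h | h
    · exact ⟨X, h, e, f, hX, u, w, hw, he⟩
    · exact ⟨_, h, e, f, hX.compl, u, w, hw, he⟩
  obtain ⟨Y, hYmin⟩ := exists_minimal_of_wellFoundedLT _ hex
  obtain ⟨hYh, e, f, hYcut, hYc⟩ := hYmin.prop
  obtain ⟨_, b0, _, _, _, hb0⟩ := hYcut.jump
  obtain ⟨u, w, hw, hwY⟩ := hYh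
  obtain ⟨e2, he2, f2, X2, hX2⟩ := hfree u w hw
  have hends : ∀ g, DIRel G e2 g → ∀ x y, g = s(x, y) → x ∈ Y ∧ y ∈ Y := by
    rintro g hg x y rfl
    have := hg.mem_edges w hw he2
    exact ⟨hwY x (w.fst_mem_support_of_mem_edges this), hwY y (w.snd_mem_support_of_mem_edges this)⟩
  have hIn : ∀ X g g', DICut G X g g' → DIRel G e2 g → b0 ∉ X → ¬ DIHeavy G X := by
    intro X g g' hX hg hbX hheavy
    have hg' := hg.trans hX.rel
    have hsub : X ⊆ Y := by
      intro z hz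
      by_contra hzY
      have := hYcut.compl.conn hconn hYc (· ∈ X) (by
        intro x y hxy hx hy
        by_contra hj
        rcases hX.of_jump hxy hj with h | h
        · exact hx (hends g hg x y h.symm).1
        · exact hx (hends g' hg' x y h.symm).1) (u := z) (v := b0) hzY hb0
      exact hbX (this.1 hz)
    have hYX : Y ⊆ X := hYmin.le_of_le ⟨hheavy, g, g', hX, hg.cyc ⟨u, w, hw, he2⟩⟩ hsub
    obtain ⟨a, b, hab, _, _, hb⟩ := hX.jump
    exact hb (hYX (hends g hg a b hab).2)
  -- maximal In-type set
  have hex2 : {X : Set V | ∃ g g', DICut G X g g' ∧ DIRel G e2 g ∧ b0 ∉ X}.Nonempty := by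
    obtain ⟨X, hX, hb⟩ := DIRel.exists_in hX2.rel hX2.2.2.1 b0
    exact ⟨X, e2, f2, hX, Or.inl rfl, hb⟩
  obtain ⟨A, hAmax⟩ := Set.Finite.exists_maximal (Set.toFinite _) hex2
  obtain ⟨e1, ek, hA, he1, hbA⟩ := hAmax.prop
  have he1c : DICyc G e1 := he1.cyc ⟨u, w, hw, he2⟩
  have hmax : ∀ X g g', DICut G X g g' → DIRel G e2 g → b0 ∉ X → A ⊆ X → X ⊆ A := by
    intro X g g' h1 h2 h3 h4
    exact hAmax.le_of_ge ⟨g, g', h1, h2, h3⟩ h4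
  have hgA : ∀ g, DIRel G e2 g → g ≠ e1 → g ≠ ek → ∀ x y, g = s(x, y) → x ∈ A := by
    intro g hg hg1 hgk x y hxy
    by_contra hxA
    have hrel : DIRel G e1 g := he1.symm.trans hg
    obtain ⟨X, hX, hbX⟩ := hrel.exists_in (Ne.symm hg1) b0
    have hgG : G.Adj x y := by
      have := (hrel.cyc he1c).mem
      rw [hxy] at this; exact this
    have hgj : ¬ (x ∈ X ↔ y ∈ X) := by
      have := hX.symm; rw [hxy] at this; exact this.not_iff
    have hgjA : (x ∈ A ↔ y ∈ A) := by
      refine (hA.2.2.2 x y hgG).2 ?_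
      rw [← hxy]; exact ⟨hg1, hgk⟩
    have hconst : ∀ p ∈ A, ∀ q ∈ A, (p ∈ X ↔ q ∈ X) := by
      intro p hp q hq
      refine hA.conn hconn he1c (· ∈ X) ?_ hp hq
      intro s t hst hs ht
      by_contra hj
      rcases hX.of_jump hst hj with h | h
      · have := (hA.2.2.2 s t hst)
        tauto
      · rw [hxy, Sym2.eq_iff] at h
        rcases h with ⟨rfl, rfl⟩ | ⟨rfl, rfl⟩
        · exact hxA hs
        · exact hxA ht
    obtain ⟨a, b, _, _, haA, _⟩ := hA.jump
    by_cases haX : a ∈ X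
    · have hsub : A ⊆ X := fun p hp => (hconst p hp a haA).2 haX
      have hsub2 := hmax X e1 g hX he1 hbX hsub
      have : A = X := subset_antisymm hsub hsub2
      rw [this] at hgjA
      exact hgj hgjA
    · have hdis : ∀ p ∈ A, p ∉ X := fun p hp h => haX ((hconst p hp a haA).1 h)
      have hT := hA.symm.trans hX (Ne.symm hgk)
      have hsub : A ⊆ {x | ¬ (x ∈ A ↔ x ∈ X)} := by
        intro p hp
        have := hdis p hp
        simp only [Set.mem_ofPred_eq]; tauto
      have hsub2 := hmax _ ek g hT (he1.trans hA.rel) (by simp only [Set.mem_ofPred_eq]; tauto) hsub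
      have q1 : ∀ p ∈ X, p ∈ A := by
        intro p hp
        by_contra hpA
        exact hpA (hsub2 (by simp only [Set.mem_ofPred_eq]; tauto))
      have := q1 x
      have := q1 y
      have := hdis x
      have := hdis y
      tauto
  refine ⟨b0, A, e1, ek, hA, hbA, he1c, ?_⟩
  intro X g g' hX hg hbX
  have hg2 := he1.trans hg
  have hg2' := hg2.trans hX.rel
  refine ⟨?_, hIn X g g' hX hg2 hbX⟩
  intro z hz
  by_contra hzA
  have := hA.compl.conn hconn he1c (· ∈ X) (by
    intro x y hxy hx hy
    by_contra hj
    have hAj := hA.2.2.2 x y hxy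
    have hx' : x ∉ A := hx
    have hy' : y ∉ A := hy
    have hne : s(x, y) ≠ e1 ∧ s(x, y) ≠ ek := by tauto
    rcases hX.of_jump hxy hj with h | h
    · exact hx (hgA g hg2 (h ▸ hne.1) (h ▸ hne.2) x y h.symm)
    · exact hx (hgA g' hg2' (h ▸ hne.1) (h ▸ hne.2) x y h.symm)) (u := z) (v := b0) hzA hbA
  exact hbX (this.1 hz)

theorem di_stepD [Finite V] {b0 : V} {A : Set V} {e1 ek : Sym2 V}
    (hnu : ∀ e : Sym2 V, ∃ (u : V) (w : G.Walk u u), w.IsCycle ∧ e ∉ w.edges)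
    (hA : DICut G A e1 ek) (hbA : b0 ∉ A)
    (hIn : ∀ X g g', DICut G X g g' → DIRel G e1 g → b0 ∉ X → X ⊆ A ∧ ¬ DIHeavy G X)
    (γ : G ≃g G) (g : Sym2 V) (hg : DIRel G e1 g) (hγg : DIRel G e1 (g.map γ)) :
    γ '' A = A ∧ ((e1.map γ = e1 ∧ ek.map γ = ek) ∨ (e1.map γ = ek ∧ ek.map γ = e1)) := by
  have hAl : ¬ DIHeavy G A := (hIn A e1 ek hA (Or.inl rfl) hbA).2
  have hcut := hA.image γ
  have hrel : DIRel G e1 (e1.map γ) := hγg.trans (hg.image γ).symm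
  have hγAl : ¬ DIHeavy G (γ '' A) := by
    intro h
    have := h.image γ.symm
    rw [← Set.image_comp] at this
    apply hAl
    convert this
    ext x; simp
  have hb : b0 ∉ γ '' A := by
    intro hb
    have h1 := (hIn _ _ _ hcut.compl hrel (by simpa using hb)).2
    rcases hcut.heavy_or hnu with h | h
    · exact hγAl h
    · exact h1 h
  have hsub := (hIn _ _ _ hcut hrel hb).1
  have heq : γ '' A = A := by
    refine Set.eq_of_subset_of_ncard_le hsub ?_ (Set.toFinite _)
    rw [Set.ncard_image_of_injective _ γ.injective]
  refine ⟨heq, ?_⟩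
  rw [heq] at hcut
  exact hA.unique hcut

theorem di_fix_end {A : Set V} {γ : G ≃g G} (hA : γ '' A = A) {y u : V} (hy : y ∈ A) (hu : u ∉ A)
    (h : Sym2.map γ s(y, u) = s(y, u)) : γ y = y ∧ γ u = u := by
  rw [Sym2.map_mk, Sym2.eq_iff] at h
  rcases h with h | h
  · exact h
  · exfalso
    apply hu
    rw [← h.1, ← hA]
    exact ⟨y, hy, rfl⟩

end DI3

section DI4
open scoped Classical

variable {V : Type*} {G : SimpleGraph V} {F : Type*} [Field F]

theorem di_stepE [Finite V] {b0 : V} {A : Set V} {e1 ek : Sym2 V} (hconn : G.Connected) (c : V → F)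
    (hc : ∀ γ : G ≃g G, (∀ x, c (γ x) = c x) → ∀ x, γ x = x)
    (hbad : ∀ ψ : Sym2 V → F, ∃ γ : G ≃g G, DIPres G ψ γ ∧ DINT γ)
    (hnu : ∀ e : Sym2 V, ∃ (u : V) (w : G.Walk u u), w.IsCycle ∧ e ∉ w.edges)
    (hA : DICut G A e1 ek) (hbA : b0 ∉ A) (he1 : DICyc G e1)
    (hIn : ∀ X g g', DICut G X g g' → DIRel G e1 g → b0 ∉ X → X ⊆ A ∧ ¬ DIHeavy G X)
    (s : F) (hs : s ≠ 0) : diSum c ek = diSum c e1 + s := by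
  obtain ⟨y, u, hyu, hadj, hy, hu⟩ := hA.jump
  obtain ⟨γ, hn, hpres, hγ⟩ := di_fail hconn c hc hbad he1 hs
  have hrel : DIRel G e1 (e1.map γ) := by
    rcases hγ with ⟨h, _⟩ | ⟨_, X, hX⟩
    · exact Or.inl h.symm
    · exact hX.rel
  obtain ⟨hγA, hsw⟩ := di_stepD hnu hA hbA hIn γ e1 (Or.inl rfl) hrel
  have hek : e1.map γ = ek := by
    rcases hγ with ⟨h, h0⟩ | ⟨h, _⟩
    · exfalso
      rw [hyu] at h
      have := di_fix_end hγA hy hu h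
      exact di_S0_fix hconn c hc h0 (a := y) (by rw [this.1]) hn
    · rcases hsw with h' | h'
      · exact absurd h'.1 h
      · exact h'.1
  have h1 := hpres y u hadj
  rw [← Sym2.map_mk, ← hyu, hek] at h1
  simpa [hA.2.2.1.symm] using h1

variable {b0 : V} {A : Set V} {e1 ek : Sym2 V}

theorem di_stepF1 [Finite V] (hconn : G.Connected) (c : V → ZMod 2)
    (hc : ∀ γ : G ≃g G, (∀ x, c (γ x) = c x) → ∀ x, γ x = x)
    (hbad : ∀ ψ : Sym2 V → ZMod 2, ∃ γ : G ≃g G, DIPres G ψ γ ∧ DINT γ)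
    (hnu : ∀ e : Sym2 V, ∃ (u : V) (w : G.Walk u u), w.IsCycle ∧ e ∉ w.edges)
    (hA : DICut G A e1 ek) (hbA : b0 ∉ A) (he1 : DICyc G e1)
    (hIn : ∀ X g g', DICut G X g g' → DIRel G e1 g → b0 ∉ X → X ⊆ A ∧ ¬ DIHeavy G X)
    (g : Sym2 V) (hg : DIRel G e1 g) : g = e1 ∨ g = ek := by
  have hE := di_stepE hconn c hc hbad hnu hA hbA he1 hIn 1 one_ne_zero
  by_contra hcon
  push Not at hcon
  obtain ⟨hg1, hgk⟩ := hcon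
  obtain ⟨y, u, hyu, hadj, hy, hu⟩ := hA.jump
  obtain ⟨γ, hn, hpres, hγ⟩ := di_fail hconn c hc hbad (hg.cyc he1) (one_ne_zero (α := ZMod 2))
  have hrel : DIRel G e1 (g.map γ) := by
    rcases hγ with ⟨h, _⟩ | ⟨_, X, hX⟩
    · rw [h]; exact hg
    · exact hg.trans hX.rel
  obtain ⟨hγA, hsw⟩ := di_stepD hnu hA hbA hIn γ g hg hrel
  rcases hsw with ⟨hsw, -⟩ | ⟨hsw, -⟩
  swap
  · have h1 := hpres y u hadj
    rw [← Sym2.map_mk, ← hyu, hsw] at h1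
    simp [hg1.symm, hgk.symm, hE] at h1
  have hfix : γ y = y ∧ γ u = u := by
    rw [hyu] at hsw
    exact di_fix_end hγA hy hu hsw
  rcases hγ with ⟨h, h0⟩ | ⟨hgne, -⟩
  · exact di_S0_fix hconn c hc h0 (a := y) (by rw [hfix.1]) hn
  obtain ⟨X, hX, hbX⟩ := hg.exists_in (Ne.symm hg1) b0
  have hXA := (hIn X e1 g hX (Or.inl rfl) hbX).1
  have hX' := hX.image γ
  rw [hsw] at hX'
  have hbX' : b0 ∉ γ '' X := by
    intro h
    apply hbA
    rw [← hγA]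
    exact Set.image_mono hXA h
  have huX : u ∉ X := fun h => hu (hXA h)
  have hyX : y ∈ X := by
    have := hX; rw [hyu] at this
    have := this.not_iff
    tauto
  have hyX' : y ∈ γ '' X := ⟨y, hyX, hfix.1⟩
  have hγg1 : g.map γ ≠ e1 := by
    intro h
    rw [← hsw] at h
    exact hg1 (Sym2.map.injective γ.injective h)
  obtain ⟨a, b, hab⟩ := di_sym2_cases (g.map γ)
  have hadjab : G.Adj a b := by
    have := hX'.2.1; rw [hab] at this; exact this
  have hnj : a ∈ X ↔ b ∈ X := by
    refine (hX.2.2.2 a b hadjab).2 ?_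
    rw [← hab]; exact ⟨hγg1, hgne⟩
  have hcard : (γ '' X).ncard = X.ncard := Set.ncard_image_of_injective _ γ.injective
  have heq : γ '' X = X := by
    by_cases haX : a ∈ X
    · refine Set.eq_of_subset_of_ncard_le ?_ hcard.ge (Set.toFinite _)
      intro z hz
      by_contra hzX
      have := hX.compl.conn hconn he1 (· ∈ γ '' X) (by
        intro p q hpq hp hq
        have hp' : p ∉ X := hp
        have hq' : q ∉ X := hq
        by_contra hj
        rcases hX'.of_jump hpq hj with h | h
        · have := hX.2.2.2 p q hpq
          tauto
        · rw [hab, Sym2.eq_iff] at h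
          rcases h with ⟨rfl, rfl⟩ | ⟨rfl, rfl⟩ <;> tauto) (u := z) (v := b0) hzX hbX
      exact hbX' (this.1 hz)
    · refine (Set.eq_of_subset_of_ncard_le ?_ hcard.le (Set.toFinite _)).symm
      intro z hz
      have := hX.conn hconn he1 (· ∈ γ '' X) (by
        intro p q hpq hp hq
        by_contra hj
        rcases hX'.of_jump hpq hj with h | h
        · have := hX.2.2.2 p q hpq
          tauto
        · rw [hab, Sym2.eq_iff] at h
          rcases h with ⟨rfl, rfl⟩ | ⟨rfl, rfl⟩ <;> tauto) (u := z) (v := y) hz hyX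
      exact this.2 hyX'
  rw [heq] at hX'
  rcases hX.unique hX' with h | h
  · exact hgne h.2
  · exact hg1 h.1.symm

theorem di_other_edge {e : Sym2 V} (he : DICyc G e) {y u : V} (hyu : e = s(y, u)) :
    ∃ y', y' ≠ u ∧ DICyc G s(y, y') := by
  obtain ⟨a, w, hw, he⟩ := he
  subst hyu
  have hys : y ∈ w.support := w.fst_mem_support_of_mem_edges he
  have hw' := hw.rotate hys
  set w' := w.rotate y hys
  have hnn : ¬ w'.Nil := hw'.not_nil
  have m1 : s(y, w'.snd) ∈ w'.edges := w'.mk_start_snd_mem_edges hnn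
  have m2 : s(w'.penultimate, y) ∈ w'.edges := w'.mk_penultimate_end_mem_edges hnn
  rw [Sym2.eq_swap] at m2
  have hne := hw'.snd_ne_penultimate
  by_cases h : w'.snd = u
  · exact ⟨w'.penultimate, fun h' => hne (h.trans h'.symm), y, w', hw', m2⟩
  · exact ⟨w'.snd, h, y, w', hw', m1⟩

theorem di_split (hAl : ¬ DIHeavy G A) {y y' : V} (hy : y ∈ A) (hy' : y' ∈ A) (hadj : G.Adj y y') :
    ∃ X ⊆ A, y ∈ X ∧ y' ∉ X ∧ ∀ p q, G.Adj p q → p ∈ X → q ∈ A → q ∉ X → s(p, q) = s(y, y') := by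
  set H : SimpleGraph V :=
    { Adj := fun a b => G.Adj a b ∧ a ∈ A ∧ b ∈ A
      symm := ⟨fun a b h => ⟨h.1.symm, h.2.2, h.2.1⟩⟩
      loopless := ⟨fun a h => G.loopless.irrefl a h.1⟩ } with hH
  have hle : H ≤ G := fun a b h => h.1
  have hwalk : ∀ (K : SimpleGraph V), K ≤ H → ∀ a b, K.Reachable a b → (b ∈ A ↔ a ∈ A) := by
    rintro K hK a b ⟨q⟩
    refine di_walk_const q (· ∈ A) ?_ b q.end_mem_support
    intro x z hxz
    have : H.Adj x z := hK (q.edges_subset_edgeSet hxz)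
    exact ⟨fun _ => this.2.2, fun _ => this.2.1⟩
  set K := H \ SimpleGraph.fromEdgeSet {s(y, y')} with hK
  have hKle : K ≤ H := sdiff_le
  refine ⟨{x | K.Reachable y x}, ?_, SimpleGraph.Reachable.refl _, ?_, ?_⟩
  · intro x hx
    exact (hwalk K hKle y x hx).2 hy
  · intro hr
    obtain ⟨u, w, hw, -⟩ := SimpleGraph.adj_and_reachable_delete_edges_iff_exists_cycle.1
      (⟨⟨hadj, hy, hy'⟩, hr⟩ : H.Adj y y' ∧ K.Reachable y y')
    apply hAl
    refine ⟨u, w.mapLe hle, hw.mapLe hle, ?_⟩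
    intro z hz
    rw [SimpleGraph.Walk.support_mapLe_eq_support] at hz
    have hsnd : H.Adj u w.snd := w.adj_snd hw.not_nil
    exact (hwalk H le_rfl u z ⟨w.takeUntil z hz⟩).2 hsnd.2.1
  · intro p q hpq hp hq hqX
    by_contra hne
    apply hqX
    have hp' : K.Reachable y p := hp
    refine hp'.trans (SimpleGraph.Adj.reachable ?_)
    rw [hK, SimpleGraph.sdiff_adj, SimpleGraph.fromEdgeSet_adj]
    exact ⟨⟨hpq, (hwalk K hKle y p hp).2 hy, hq⟩, fun h => hne h.1⟩

theorem di_stepF2 (hA : DICut G A e1 ek) (he1 : DICyc G e1) (hAl : ¬ DIHeavy G A)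
    (hF : ∀ g, DIRel G e1 g → g = e1 ∨ g = ek)
    {y u z v : V} (hyu : e1 = s(y, u)) (hzv : ek = s(z, v)) (hy : y ∈ A) (hu : u ∉ A) (hz : z ∈ A)
    (hv : v ∉ A) : y = z := by
  by_contra hyz
  obtain ⟨y', hy'u, hcyc⟩ := di_other_edge he1 hyu
  have hadj : G.Adj y y' := hcyc.mem
  have hne1 : s(y, y') ≠ e1 := by
    rw [hyu, Ne, Sym2.eq_iff]
    rintro (⟨_, h⟩ | ⟨h, _⟩)
    · exact hy'u h
    · exact hu (h ▸ hy)
  have hnek : s(y, y') ≠ ek := by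
    rw [hzv, Ne, Sym2.eq_iff]
    rintro (⟨h, _⟩ | ⟨h, _⟩)
    · exact hyz h
    · exact hv (h ▸ hy)
  have hy' : y' ∈ A := ((hA.2.2.2 y y' hadj).2 ⟨hne1, hnek⟩).1 hy
  obtain ⟨X, hXA, hyX, hy'X, hX⟩ := di_split hAl hy hy' hadj
  have hout : ∀ p q, G.Adj p q → p ∈ A → q ∉ A → s(p, q) = e1 ∧ p = y ∨ s(p, q) = ek ∧ p = z := by
    intro p q hpq hp hq
    rcases hA.of_jump hpq (by tauto) with h | h
    · left
      refine ⟨h, ?_⟩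
      rw [hyu, Sym2.eq_iff] at h
      rcases h with ⟨h, _⟩ | ⟨h, _⟩
      · exact h
      · exact absurd (h ▸ hp) hu
    · right
      refine ⟨h, ?_⟩
      rw [hzv, Sym2.eq_iff] at h
      rcases h with ⟨h, _⟩ | ⟨h, _⟩
      · exact h
      · exact absurd (h ▸ hp) hv
  by_cases hzX : z ∈ X
  · obtain ⟨p, q, hpq, hp, hq, hne⟩ := di_cyc_not_single (X := A \ X) hcyc (a := y') (b := y) Sym2.eq_swap ⟨hy', hy'X⟩
      (fun h => h.2 hyX)
    by_cases hqA : q ∈ A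
    · have hqX : q ∈ X := by
        by_contra h; exact hq ⟨hqA, h⟩
      apply hne
      rw [Sym2.eq_swap]
      exact hX q p hpq.symm hqX hp.1 hp.2
    · rcases hout p q hpq hp.1 hqA with ⟨_, h⟩ | ⟨_, h⟩
      · exact hp.2 (h ▸ hyX)
      · exact hp.2 (h ▸ hzX)
  · have hone : ∀ p q, G.Adj p q → p ∈ X → q ∉ X → s(p, q) = e1 ∨ s(p, q) = s(y, y') := by
      intro p q hpq hp hq
      by_cases hqA : q ∈ A
      · exact Or.inr (hX p q hpq hp hqA hq)
      · rcases hout p q hpq (hXA hp) hqA with ⟨h, _⟩ | ⟨_, h⟩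
        · exact Or.inl h
        · exact absurd (h ▸ hp) hzX
    have hcut : DICut G X e1 s(y, y') := by
      refine ⟨he1.mem, hadj, Ne.symm hne1, fun p q hpq => ?_⟩
      have huX : u ∉ X := fun h => hu (hXA h)
      constructor
      · intro h
        refine ⟨fun h' => ?_, fun h' => ?_⟩
        · rw [hyu, Sym2.eq_iff] at h'
          rcases h' with ⟨rfl, rfl⟩ | ⟨rfl, rfl⟩ <;> tauto
        · rw [Sym2.eq_iff] at h'
          rcases h' with ⟨rfl, rfl⟩ | ⟨rfl, rfl⟩ <;> tauto
      · rintro ⟨h1, h2⟩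
        by_contra hj
        by_cases hp : p ∈ X
        · have := hone p q hpq hp (by tauto)
          tauto
        · have := hone q p hpq.symm (by tauto) hp
          rw [Sym2.eq_swap] at this
          tauto
    rcases hF _ hcut.rel with h | h
    · exact hne1 h
    · exact hnek h

end DI4

section DI5
open scoped Classical

variable {V : Type*} {G : SimpleGraph V}

def diSg (a : ZMod 2) : ℤ := if a = 0 then 1 else -1

theorem diSg_add_one (a : ZMod 2) : diSg (a + 1) = - diSg a := by revert a; decide

theorem diSg_ne (a : ZMod 2) : diSg a ≠ 0 := by revert a; decide

noncomputable def diB [Fintype V] (c : V → ZMod 2) (S : Set V) : ℤ := ∑ x, if x ∈ S then diSg (c x) else 0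

theorem diB_reindex [Fintype V] (c : V → ZMod 2) (S : Set V) (γ : G ≃g G) :
    diB c S = ∑ x, if γ x ∈ S then diSg (c (γ x)) else 0 :=
  (Equiv.sum_comp γ.toEquiv (fun x => if x ∈ S then diSg (c x) else 0)).symm

theorem diB_neg [Fintype V] (c : V → ZMod 2) (S : Set V) (γ : G ≃g G) (hS : ∀ x, γ x ∈ S ↔ x ∈ S)
    (h : ∀ x ∈ S, c (γ x) = c x + 1) : diB c S = 0 := by
  have h1 := diB_reindex c S γ
  have h2 : (∑ x, if γ x ∈ S then diSg (c (γ x)) else 0) = - diB c S := by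
    rw [diB, ← Finset.sum_neg_distrib]
    refine Finset.sum_congr rfl fun x _ => ?_
    by_cases hx : x ∈ S
    · simp [hS, hx, h x hx, diSg_add_one]
    · simp [hS, hx]
  rw [h2] at h1
  omega

theorem diB_compl [Fintype V] (c : V → ZMod 2) (S : Set V) : diB c S + diB c Sᶜ = diB c Set.univ := by
  rw [diB, diB, diB, ← Finset.sum_add_distrib]
  refine Finset.sum_congr rfl fun x _ => ?_
  by_cases hx : x ∈ S <;> simp [hx]

noncomputable def diC2 (c : V → ZMod 2) (y : V) : V → ZMod 2 := fun x => if x = y then c x + 1 else c x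

theorem diB_c2 [Fintype V] (c : V → ZMod 2) (y : V) (S : Set V) :
    diB (diC2 c y) S = diB c S - if y ∈ S then 2 * diSg (c y) else 0 := by
  have : (if y ∈ S then 2 * diSg (c y) else 0) = ∑ x, if x = y then (if y ∈ S then 2 * diSg (c y) else 0) else 0 := by
    simp
  rw [this, diB, diB, ← Finset.sum_sub_distrib]
  refine Finset.sum_congr rfl fun x _ => ?_
  by_cases hx : x = y
  · subst hx
    by_cases hS : x ∈ S
    · simp [hS, diC2, diSg_add_one]; ring
    · simp [hS]
  · simp [diC2, hx]

theorem di_zmod2_jump (a b : ZMod 2) : (a = b ↔ a + b = 0) := by revert a b; decide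

theorem di_pl1 {a b s t : Prop} (h : a ↔ ¬ b) (h2 : ¬ (s ↔ t)) : ((a ↔ s) ↔ (b ↔ t)) := by tauto

theorem di_pl2 {a b s t : Prop} (h : a ↔ b) (h2 : s ↔ t) : ((a ↔ s) ↔ (b ↔ t)) := by tauto

theorem di_fixy {A : Set V} {κ : G ≃g G} (hA : κ '' A = A) {y u v : V} (hy : y ∈ A) (hv : v ∉ A)
    (h : Sym2.map κ s(y, u) = s(y, v)) : κ y = y := by
  rw [Sym2.map_mk, Sym2.eq_iff] at h
  rcases h with h | h
  · exact h.1
  · exfalso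
    apply hv
    rw [← h.1, ← hA]
    exact ⟨y, hy, rfl⟩

theorem di_balanced [Fintype V] {b0 : V} {A : Set V} {y u v : V} (hconn : G.Connected) (c : V → ZMod 2)
    (hc : ∀ γ : G ≃g G, (∀ x, c (γ x) = c x) → ∀ x, γ x = x)
    (hbad : ∀ ψ : Sym2 V → ZMod 2, ∃ γ : G ≃g G, DIPres G ψ γ ∧ DINT γ)
    (hnu : ∀ e : Sym2 V, ∃ (u : V) (w : G.Walk u u), w.IsCycle ∧ e ∉ w.edges)
    (hA : DICut G A s(y, u) s(y, v)) (hbA : b0 ∉ A) (he1 : DICyc G s(y, u))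
    (hIn : ∀ X g g', DICut G X g g' → DIRel G s(y, u) g → b0 ∉ X → X ⊆ A ∧ ¬ DIHeavy G X)
    (hy : y ∈ A) (hu : u ∉ A) (hv : v ∉ A) (hV : diB c Set.univ = 0) (τ : G ≃g G) :
    diB c (τ '' A) = 0 := by
  obtain ⟨γ, hn, hpres, hγ⟩ := di_fail hconn c hc hbad (he1.image τ) (one_ne_zero (α := ZMod 2))
  set κ : G ≃g G := (τ.trans γ).trans τ.symm with hκ
  have hκm : ∀ e : Sym2 V, e.map κ = ((e.map τ).map γ).map τ.symm := by
    intro e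
    obtain ⟨a, b, rfl⟩ := di_sym2_cases e
    rfl
  have hinv : ∀ e : Sym2 V, (e.map τ).map τ.symm = e := by
    intro e
    obtain ⟨a, b, rfl⟩ := di_sym2_cases e
    simp
  have hγτ : ∀ x, γ (τ x) = τ (κ x) := by intro x; simp [hκ]
  have hrel : DIRel G s(y, u) (Sym2.map κ s(y, u)) := by
    rw [hκm]
    rcases hγ with ⟨h, _⟩ | ⟨_, X, hX⟩
    · left; rw [h, hinv]
    · have := hX.rel.image τ.symm
      rwa [hinv] at this
  obtain ⟨hκA, hsw⟩ := di_stepD hnu hA hbA hIn κ _ (Or.inl rfl) hrel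
  have hfix : κ y = y := by
    rcases hsw with h | h
    · exact di_fixy hκA hy hu h.1
    · exact di_fixy hκA hy hv h.1
  have hγy : γ (τ y) = τ y := by rw [hγτ, hfix]
  have hsw' : Sym2.map κ s(y, u) = s(y, v) ∧ Sym2.map κ s(y, v) = s(y, u) := by
    rcases hsw with h | h
    · exfalso
      have hm : (Sym2.map τ s(y, u)).map γ = Sym2.map τ s(y, u) := by
        have := h.1
        simp only [Sym2.map_mk] at this ⊢
        rw [hγτ, hγτ, ← Sym2.map_mk (f := τ), this, Sym2.map_mk]
      rcases hγ with ⟨_, h0⟩ | ⟨h', _⟩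
      · exact di_S0_fix hconn c hc h0 (a := τ y) (by rw [hγy]) hn
      · exact h' hm
    · exact h
  have hκu : κ v = u := by
    have := hsw'.2
    rw [Sym2.map_mk, hfix] at this
    exact Sym2.congr_right.1 this
  set T := τ '' A with hT
  have hcut := hA.image τ
  have hγT : ∀ x, γ x ∈ T ↔ x ∈ T := by
    intro x
    obtain ⟨x, rfl⟩ := τ.surjective x
    rw [hγτ, hT, τ.injective.mem_set_image, τ.injective.mem_set_image]
    conv_lhs => rw [← hκA]
    rw [κ.injective.mem_set_image]
  have hadjuv : ∀ p q, s(γ p, γ q) = Sym2.map τ s(y, u) ↔ s(p, q) = Sym2.map τ s(y, v) := by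
    intro p q
    have : Sym2.map τ s(y, u) = Sym2.map γ (Sym2.map τ s(y, v)) := by
      simp only [Sym2.map_mk, hγτ, hfix, hκu]
    rw [this, ← Sym2.map_mk]
    exact (Sym2.map.injective γ.injective).eq_iff
  have key : ∀ x, (c (γ x) = c x ↔ x ∈ T) := by
    intro x
    refine (di_const hconn (fun x => (c (γ x) = c x ↔ x ∈ T)) ?_ (τ y) x).1 ?_
    · intro p q hpq
      have h1 := hpres p q hpq
      have h2 := hcut.2.2.2 p q hpq
      have h3 := hcut.2.2.1
      simp only [hadjuv, diSum_mk] at h1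
      have aux : ∀ a b a' b' : ZMod 2, a' + b' = a + b → ((a' = a) ↔ (b' = b)) := by decide
      have aux2 : ∀ a b a' b' : ZMod 2, a' + b' = a + b + 1 → ((a' = a) ↔ ¬ (b' = b)) := by decide
      have aux3 : ∀ a b a' b' : ZMod 2, a' + b' + 1 = a + b → ((a' = a) ↔ ¬ (b' = b)) := by decide
      by_cases q1 : s(p, q) = Sym2.map τ s(y, u)
      · have q2 : s(p, q) ≠ Sym2.map τ s(y, v) := by rw [q1]; exact h3
        rw [if_neg q2, if_pos q1, add_zero] at h1
        exact di_pl1 (aux2 _ _ _ _ h1) (fun h => (h2.1 h).1 q1)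
      · by_cases q2 : s(p, q) = Sym2.map τ s(y, v)
        · rw [if_pos q2, if_neg q1, add_zero] at h1
          exact di_pl1 (aux3 _ _ _ _ h1) (fun h => (h2.1 h).2 q2)
        · rw [if_neg q2, if_neg q1, add_zero, add_zero] at h1
          exact di_pl2 (aux _ _ _ _ h1) (h2.2 ⟨q1, q2⟩)
    · exact ⟨fun _ => ⟨y, hy, rfl⟩, fun _ => by rw [hγy]⟩
  have hcompl : diB c Tᶜ = 0 := by
    refine diB_neg c Tᶜ γ (fun x => not_congr (hγT x)) ?_
    intro x hx
    have h1 : c (γ x) ≠ c x := fun h => hx ((key x).1 h)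
    have aux : ∀ a b : ZMod 2, a ≠ b → a = b + 1 := by decide
    exact aux _ _ h1
  have := diB_compl c T
  omega

theorem di_stepG [Fintype V] {b0 : V} {A : Set V} {y u v : V} (hconn : G.Connected) (c : V → ZMod 2)
    (hc : ∀ γ : G ≃g G, (∀ x, c (γ x) = c x) → ∀ x, γ x = x)
    (hbad : ∀ ψ : Sym2 V → ZMod 2, ∃ γ : G ≃g G, DIPres G ψ γ ∧ DINT γ)
    (hnu : ∀ e : Sym2 V, ∃ (u : V) (w : G.Walk u u), w.IsCycle ∧ e ∉ w.edges)
    (hA : DICut G A s(y, u) s(y, v)) (hbA : b0 ∉ A) (he1 : DICyc G s(y, u))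
    (hIn : ∀ X g g', DICut G X g g' → DIRel G s(y, u) g → b0 ∉ X → X ⊆ A ∧ ¬ DIHeavy G X)
    (hy : y ∈ A) (hu : u ∉ A) (hv : v ∉ A) : False := by
  have aux : ∀ a b : ZMod 2, a ≠ b → a = b + 1 := by decide
  have hV : diB c Set.univ = 0 := by
    obtain ⟨γ0, h0, hn0⟩ := hbad (diSum c)
    refine diB_neg c Set.univ γ0 (by simp) ?_
    intro x _
    exact aux _ _ (fun h => di_S0_fix hconn c hc h0 h hn0)
  have hbal := di_balanced hconn c hc hbad hnu hA hbA he1 hIn hy hu hv hV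
  have hAl : ¬ DIHeavy G A := (hIn A _ _ hA (Or.inl rfl) hbA).2
  obtain ⟨γ, hγ, hn⟩ := hbad (diSum (diC2 c y))
  set c2 := diC2 c y with hc2
  have hconst : ∀ p q, (c2 (γ p) = c2 p ↔ c2 (γ q) = c2 q) := by
    refine di_const hconn (fun x => c2 (γ x) = c2 x) ?_
    intro p q hpq
    have h1 := hγ p q hpq
    simp only [diSum_mk] at h1
    have aux : ∀ a b a' b' : ZMod 2, a' + b' = a + b → ((a' = a) ↔ (b' = b)) := by decide
    exact aux _ _ _ _ h1
  have hV2 : diB c2 Set.univ ≠ 0 := by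
    rw [hc2, diB_c2, hV]
    have := diSg_ne (c y)
    simp [this]
  have hinv : ∀ x, c2 (γ x) = c2 x := by
    by_contra hcon
    push Not at hcon
    obtain ⟨x, hx⟩ := hcon
    refine hV2 (diB_neg c2 Set.univ γ (by simp) ?_)
    intro z _
    exact aux _ _ (fun h => hx ((hconst z x).1 h))
  have hγy : γ y ≠ y := by
    intro hfix
    obtain ⟨x, hx⟩ := hn
    refine hx (hc γ ?_ x)
    intro z
    have h1 := hinv z
    have h2 : γ z = y ↔ z = y := by
      constructor
      · intro h; rw [← hfix] at h; exact γ.injective h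
      · rintro rfl; exact hfix
    simp only [hc2, diC2, h2] at h1
    by_cases hz : z = y
    · rw [hz, hfix]
    · simpa [hz] using h1
  have hcut := hA.image γ
  have hγAl : ¬ DIHeavy G (γ '' A) := by
    intro h
    have := h.image γ.symm
    rw [← Set.image_comp] at this
    apply hAl
    convert this
    ext x; simp
  by_cases hyA : y ∈ γ '' A
  · have hheavy : DIHeavy G (γ '' A)ᶜ := by
      rcases hcut.heavy_or hnu with h | h
      · exact absurd h hγAl
      · exact h
    have hsub : A ⊆ γ '' A := by
      intro z hz
      by_contra hzn
      apply hAl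
      refine hheavy.mono ?_
      intro t ht
      have := hcut.compl.conn hconn (he1.image γ) (· ∈ A) (by
        intro p q hpq hp hq
        by_contra hj
        have hp' : p ∉ γ '' A := hp
        have hq' : q ∉ γ '' A := hq
        rcases hA.of_jump hpq hj with h | h
        · rw [Sym2.eq_iff] at h
          rcases h with ⟨rfl, rfl⟩ | ⟨rfl, rfl⟩ <;> tauto
        · rw [Sym2.eq_iff] at h
          rcases h with ⟨rfl, rfl⟩ | ⟨rfl, rfl⟩ <;> tauto) (u := z) (v := t) hzn ht
      exact this.1 hz
    have heq : γ '' A = A :=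
      (Set.eq_of_subset_of_ncard_le hsub (Set.ncard_image_of_injective _ γ.injective).le (Set.toFinite _)).symm
    rw [heq] at hcut
    apply hγy
    rcases hA.unique hcut with h | h
    · exact di_fixy heq hy hu h.1
    · exact di_fixy heq hy hv h.1
  · have h1 := diB_c2 c y (γ '' A)
    rw [if_neg hyA, hbal γ] at h1
    have h2 := diB_c2 c y A
    have h3 : diB c A = 0 := by
      have := hbal (RelIso.refl _)
      simpa using this
    rw [if_pos hy, h3] at h2
    have h4 : diB (diC2 c y) (γ '' A) = diB (diC2 c y) A := by
      rw [diB_reindex _ _ γ, diB]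
      refine Finset.sum_congr rfl fun x _ => ?_
      rw [γ.injective.mem_set_image]
      have := hinv x
      rw [hc2] at this
      rw [this]
    have := diSg_ne (c y)
    omega

theorem di_nonuni_two [Fintype V] (hconn : G.Connected) (c : V → ZMod 2)
    (hc : ∀ γ : G ≃g G, (∀ x, c (γ x) = c x) → ∀ x, γ x = x)
    (hnu : ∀ e : Sym2 V, ∃ (u : V) (w : G.Walk u u), w.IsCycle ∧ e ∉ w.edges) :
    ∃ ψ : Sym2 V → ZMod 2, ∀ γ : G ≃g G, DIPres G ψ γ → ∀ x, γ x = x := by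
  by_contra hcon
  have hbad : ∀ ψ : Sym2 V → ZMod 2, ∃ γ : G ≃g G, DIPres G ψ γ ∧ DINT γ := by
    push Not at hcon
    exact hcon
  obtain ⟨b0, A, e1, ek, hA, hbA, he1, hIn⟩ := di_structure hconn hnu
    (fun u w hw => di_free_cut hconn c hc (by decide) hbad w hw)
  have hAl : ¬ DIHeavy G A := (hIn A _ _ hA (Or.inl rfl) hbA).2
  have hF := di_stepF1 hconn c hc hbad hnu hA hbA he1 hIn
  obtain ⟨y, u, rfl, hadj, hy, hu⟩ := hA.jump
  obtain ⟨z, v, rfl, hadj', hz, hv⟩ := hA.symm.jump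
  obtain rfl := di_stepF2 hA he1 hAl hF rfl rfl hy hu hz hv
  exact di_stepG hconn c hc hbad hnu hA hbA he1 hIn hy hu hv

theorem di_nonuni_three [Fintype V] (hconn : G.Connected) (c : V → ZMod 3)
    (hc : ∀ γ : G ≃g G, (∀ x, c (γ x) = c x) → ∀ x, γ x = x)
    (hnu : ∀ e : Sym2 V, ∃ (u : V) (w : G.Walk u u), w.IsCycle ∧ e ∉ w.edges) :
    ∃ ψ : Sym2 V → ZMod 3, ∀ γ : G ≃g G, DIPres G ψ γ → ∀ x, γ x = x := by
  by_contra hcon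
  have hbad : ∀ ψ : Sym2 V → ZMod 3, ∃ γ : G ≃g G, DIPres G ψ γ ∧ DINT γ := by
    push Not at hcon
    exact hcon
  obtain ⟨b0, A, e1, ek, hA, hbA, he1, hIn⟩ := di_structure hconn hnu
    (fun u w hw => di_free_cut hconn c hc (by decide) hbad w hw)
  have h1 := di_stepE hconn c hc hbad hnu hA hbA he1 hIn 1 (by decide)
  have h2 := di_stepE hconn c hc hbad hnu hA hbA he1 hIn 2 (by decide)
  rw [h1] at h2
  exact absurd (add_left_cancel h2) (by decide)

end DI5

section DI6
open scoped Classical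

variable {V : Type*} {G : SimpleGraph V} {L : Type*}

def DIPar (G : SimpleGraph V) (C : Set V) (D : V → ℕ) (p : V → V) : Prop :=
  (∀ v, D v = 0 ↔ v ∈ C) ∧ (∀ v, v ∉ C → G.Adj v (p v) ∧ D (p v) + 1 = D v) ∧
    ∀ γ : G ≃g G, (∀ v, γ v ∈ C ↔ v ∈ C) → ∀ v, D (γ v) = D v

theorem di_par_exists (hconn : G.Connected) (C : Set V) (hC : C.Nonempty) : ∃ D p, DIPar G C D p := by
  set S : V → Set ℕ := fun v => {n | ∃ z ∈ C, ∃ w : G.Walk v z, w.length = n} with hS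
  have hne : ∀ v, (S v).Nonempty := by
    intro v
    obtain ⟨z, hz⟩ := hC
    obtain ⟨w⟩ := hconn.preconnected v z
    exact ⟨_, z, hz, w, rfl⟩
  set D : V → ℕ := fun v => sInf (S v) with hD
  have hmem : ∀ v, D v ∈ S v := fun v => Nat.sInf_mem (hne v)
  have hle : ∀ v z (w : G.Walk v z), z ∈ C → D v ≤ w.length := fun v z w hz => Nat.sInf_le ⟨z, hz, w, rfl⟩
  have h0 : ∀ v, D v = 0 ↔ v ∈ C := by
    intro v
    constructor
    · intro h
      obtain ⟨z, hz, w, hw⟩ := hmem v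
      rw [h] at hw
      rw [SimpleGraph.Walk.eq_of_length_eq_zero hw]; exact hz
    · intro h
      have := hle v v SimpleGraph.Walk.nil h
      simpa using this
  have hpar : ∀ v, v ∉ C → ∃ q, G.Adj v q ∧ D q + 1 = D v := by
    intro v hv
    obtain ⟨z, hz, w, hw⟩ := hmem v
    cases w with
    | nil => exact absurd hz hv
    | cons h q =>
      rename_i t
      refine ⟨t, h, ?_⟩
      have h1 := hle _ _ q hz
      rw [SimpleGraph.Walk.length_cons] at hw
      obtain ⟨z', hz', w', hw'⟩ := hmem t
      have h2 := hle _ _ (SimpleGraph.Walk.cons h w') hz'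
      rw [SimpleGraph.Walk.length_cons] at h2
      omega
  have hinv : ∀ γ : G ≃g G, (∀ v, γ v ∈ C ↔ v ∈ C) → ∀ v, D (γ v) ≤ D v := by
    intro γ hγ v
    obtain ⟨z, hz, w, hw⟩ := hmem v
    have := hle (γ v) (γ z) (w.map γ.toHom) ((hγ z).2 hz)
    rw [SimpleGraph.Walk.length_map] at this
    omega
  refine ⟨D, fun v => if h : v ∉ C then (hpar v h).choose else v, h0, ?_, ?_⟩
  · intro v hv
    simp only [dif_pos hv]
    exact (hpar v hv).choose_spec
  · intro γ hγ v
    refine le_antisymm (hinv γ hγ v) ?_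
    have := hinv γ.symm (by intro v; rw [← hγ]; simp) (γ v)
    simpa using this

noncomputable def diChi (C : Set V) (p : V → V) (c : V → L) (o : L) : Sym2 V → L :=
  fun e => if h : ∃ v, v ∉ C ∧ e = s(v, p v) then c h.choose else o

theorem diChi_up {C : Set V} {D : V → ℕ} {p : V → V} (hP : DIPar G C D p) (c : V → L) (o : L) {v q : V}
    (hv : v ∉ C) (hq : D q + 1 = D v) : diChi C p c o s(v, q) = if q = p v then c v else o := by
  have huniq : ∀ t, t ∉ C → s(v, q) = s(t, p t) → t = v ∧ q = p v := by
    intro t ht h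
    rw [Sym2.eq_iff] at h
    rcases h with ⟨rfl, h⟩ | ⟨h1, h2⟩
    · exact ⟨rfl, h⟩
    · exfalso
      subst h2
      have := (hP.2.1 q ht).2
      rw [← h1] at this
      omega
  unfold diChi
  by_cases h : ∃ t, t ∉ C ∧ s(v, q) = s(t, p t)
  · have := huniq _ h.choose_spec.1 h.choose_spec.2
    rw [dif_pos h, this.1, if_pos this.2]
  · rw [dif_neg h, if_neg]
    rintro rfl
    exact h ⟨v, hv, rfl⟩

theorem di_decode {C : Set V} {D : V → ℕ} {p : V → V} (hP : DIPar G C D p) (c : V → L) (o : L) (γ : G ≃g G)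
    (hC : ∀ v, γ v ∈ C ↔ v ∈ C)
    (hχ : ∀ v q, v ∉ C → G.Adj v q → diChi C p c o s(γ v, γ q) = diChi C p c o s(v, q)) :
    ∀ v, v ∉ C → c (γ v) = c v := by
  have half : ∀ γ : G ≃g G, (∀ v, γ v ∈ C ↔ v ∈ C) →
    (∀ v q, v ∉ C → G.Adj v q → diChi C p c o s(γ v, γ q) = diChi C p c o s(v, q)) →
    ∀ v, v ∉ C → c v ≠ o → c (γ v) = c v := by
    intro γ hC hχ v hv hvo
    obtain ⟨h1, h2⟩ := hP.2.1 v hv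
    have h3 := hχ v (p v) hv h1
    rw [diChi_up hP c o hv h2, if_pos rfl, diChi_up hP c o (fun h => hv ((hC v).1 h))
      (by rw [hP.2.2 γ hC, hP.2.2 γ hC, h2])] at h3
    split_ifs at h3 with h4
    · exact h3
    · exact absurd h3.symm hvo
  intro v hv
  by_cases hvo : c v = o
  · by_contra hne
    have := half γ.symm (by intro v; rw [← hC]; simp) (by
      intro v q hv hq
      have := hχ (γ.symm v) (γ.symm q) (by rw [← hC]; simpa using hv) (γ.symm.map_adj_iff.2 hq)
      simpa using this.symm) (γ v) (by rwa [hC]) (by rw [← hvo]; exact hne)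
    rw [RelIso.symm_apply_apply] at this
    exact hne this.symm
  · exact half γ hC hχ v hv hvo

variable {g : ℕ}

def DIRing (G : SimpleGraph V) (g : ℕ) (x : ZMod g → V) : Prop :=
  3 ≤ g ∧ Function.Injective x ∧ ∀ i, G.Adj (x i) (x (i + 1))

theorem di_two_ne (hg : 3 ≤ g) : (2 : ZMod g) ≠ 0 := by
  intro h
  have : ((2 : ℕ) : ZMod g) = 0 := by exact_mod_cast h
  rw [ZMod.natCast_eq_zero_iff] at this
  have := Nat.le_of_dvd (by norm_num) this
  omega

theorem DIRing.edge_inj {x : ZMod g → V} (hR : DIRing G g x) {i j : ZMod g}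
    (h : s(x i, x (i + 1)) = s(x j, x (j + 1))) : i = j := by
  rw [Sym2.eq_iff] at h
  rcases h with ⟨h, _⟩ | ⟨h1, h2⟩
  · exact hR.2.1 h
  · have h1 := hR.2.1 h1
    have h2 := hR.2.1 h2
    exact absurd (by linear_combination h2 - h1) (di_two_ne hR.1)

theorem DIRing.dihedral {x : ZMod g → V} (hR : DIRing G g x) (γ : G ≃g G)
    (h : ∀ i, ∃ j, s(γ (x i), γ (x (i + 1))) = s(x j, x (j + 1))) :
    ∃ a, (∀ i, γ (x i) = x (a + i)) ∨ (∀ i, γ (x i) = x (a - i)) := by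
  have h2 := di_two_ne hR.1
  have hr : ∀ i, ∃ j, γ (x i) = x j := by
    intro i
    obtain ⟨j, hj⟩ := h i
    rw [Sym2.eq_iff] at hj
    rcases hj with hj | hj
    · exact ⟨_, hj.1⟩
    · exact ⟨_, hj.1⟩
  choose π hπ using hr
  have hinj : Function.Injective π := by
    intro i j hij
    apply hR.2.1
    apply γ.injective
    rw [hπ, hπ, hij]
  have hstep : ∀ i, π (i + 1) = π i + 1 ∨ π (i + 1) = π i - 1 := by
    intro i
    obtain ⟨j, hj⟩ := h i
    rw [hπ, hπ, Sym2.eq_iff] at hj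
    rcases hj with ⟨h1, h2⟩ | ⟨h1, h2⟩
    · left; rw [hR.2.1 h1, hR.2.1 h2]
    · right; rw [hR.2.1 h1, hR.2.1 h2]; ring
  have main : ∀ s : ZMod g, (∀ i, π (i + 1) = π i + s ∨ π (i + 1) = π i - s) → π 1 = π 0 + s →
      ∀ i, π i = π 0 + s * i := by
    intro s hs h1 i
    have : NeZero g := ⟨by have := hR.1; omega⟩
    have key : ∀ n : ℕ, π (n : ZMod g) = π 0 + s * n ∧ π ((n : ZMod g) + 1) = π 0 + s * (n + 1) := by
      intro n
      induction n with
      | zero => simp [h1]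
      | succ n ih =>
        push_cast
        refine ⟨ih.2, ?_⟩
        rcases hs ((n : ZMod g) + 1) with h | h
        · rw [h, ih.2]; ring
        · exfalso
          rw [ih.2] at h
          have : π ((n : ZMod g) + 1 + 1) = π (n : ZMod g) := by rw [h, ih.1]; ring
          have := hinj this
          exact h2 (by linear_combination this)
    have := (key i.val).1
    rwa [ZMod.natCast_zmod_val] at this
  refine ⟨π 0, ?_⟩
  have h01 := hstep 0
  rw [zero_add] at h01
  rcases h01 with h01 | h01
  · left
    intro i
    rw [hπ, main 1 hstep h01, one_mul]
  · right
    intro i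
    rw [hπ, main (-1) (by
      intro i
      rcases hstep i with h | h
      · right; rw [h]; ring
      · left; rw [h]; ring) (by rw [h01]; ring)]
    congr 1; ring

noncomputable def diPsi (x : ZMod g → V) (χ : Sym2 V → L) (l : ZMod g → L) : Sym2 V → L :=
  fun e => if h : ∃ i, e = s(x i, x (i + 1)) then l h.choose else χ e

theorem diPsi_edge {x : ZMod g → V} (hR : DIRing G g x) (χ : Sym2 V → L) (l : ZMod g → L) (i : ZMod g) :
    diPsi x χ l s(x i, x (i + 1)) = l i := by
  have h : ∃ j, s(x i, x (i + 1)) = s(x j, x (j + 1)) := ⟨i, rfl⟩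
  unfold diPsi
  rw [dif_pos h, ← hR.edge_inj h.choose_spec]

theorem diPsi_off (x : ZMod g → V) (χ : Sym2 V → L) (l : ZMod g → L) {v q : V} (hv : v ∉ Set.range x) :
    diPsi x χ l s(v, q) = χ s(v, q) := by
  unfold diPsi
  rw [dif_neg]
  rintro ⟨i, h⟩
  rw [Sym2.eq_iff] at h
  rcases h with ⟨rfl, _⟩ | ⟨rfl, _⟩
  · exact hv ⟨_, rfl⟩
  · exact hv ⟨_, rfl⟩

theorem di_decode_psi {x : ZMod g → V} {D : V → ℕ} {p : V → V}
    (hP : DIPar G (Set.range x) D p) (c : V → L) (o : L) (l : ZMod g → L) (γ : G ≃g G)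
    (hC : ∀ v, γ v ∈ Set.range x ↔ v ∈ Set.range x)
    (hγ : DIPres G (diPsi x (diChi (Set.range x) p c o) l) γ) : ∀ v, v ∉ Set.range x → c (γ v) = c v := by
  refine di_decode hP c o γ hC ?_
  intro v q hv hvq
  have := hγ v q hvq
  rwa [diPsi_off _ _ _ hv, diPsi_off _ _ _ (by rwa [hC])] at this

theorem di_triv {x : ZMod g → V} (c : V → L)
    (hc : ∀ γ : G ≃g G, (∀ x, c (γ x) = c x) → ∀ x, γ x = x) (γ : G ≃g G)
    (h1 : ∀ v, v ∉ Set.range x → c (γ v) = c v) (h2 : ∀ i, c (γ (x i)) = c (x i)) : ∀ v, γ v = v := by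
  apply hc
  intro v
  by_cases hv : v ∈ Set.range x
  · obtain ⟨i, rfl⟩ := hv
    exact h2 i
  · exact h1 v hv

theorem di_four [Finite V] (hconn : G.Connected) {x : ZMod g → V} (hR : DIRing G g x) (c : V → L)
    (hc : ∀ γ : G ≃g G, (∀ x, c (γ x) = c x) → ∀ x, γ x = x) (o a b z : L)
    (hao : a ≠ o) (hbo : b ≠ o) (hzo : z ≠ o) (hab : a ≠ b) (haz : a ≠ z) (hbz : b ≠ z) :
    ∃ ψ : Sym2 V → L, ∀ γ : G ≃g G, DIPres G ψ γ → ∀ x, γ x = x := by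
  have : NeZero g := ⟨by have := hR.1; omega⟩
  have h2 := di_two_ne hR.1
  have h10 : (1 : ZMod g) ≠ 0 := by
    intro h; apply h2; linear_combination 2 * h
  set C := Set.range x with hCdef
  obtain ⟨D, p, hP⟩ := di_par_exists hconn C ⟨x 0, 0, rfl⟩
  set l : ZMod g → L := fun i => if i = 0 then a else if i = 1 then b else z with hl
  have hlo : ∀ i, l i ≠ o := by
    intro i; simp only [hl]; split_ifs <;> assumption
  have hl0 : ∀ i, l i = l 0 → i = 0 := by
    intro i hi
    by_contra hne
    simp only [hl, if_neg hne, if_true] at hi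
    split_ifs at hi
    · exact hab hi.symm
    · exact haz hi.symm
  have hl1 : ∀ i, l i = l 1 → i = 1 := by
    intro i hi
    by_contra hne
    simp only [hl, if_neg hne, if_true, if_neg h10] at hi
    split_ifs at hi
    · exact hab hi
    · exact hbz hi.symm
  refine ⟨diPsi x (diChi C p c o) l, fun γ hγ => ?_⟩
  have hrec : ∀ i, (∃ j, s(γ (x i), γ (x (i + 1))) = s(x j, x (j + 1))) ∨
      ∃ v, v ∉ C ∧ s(γ (x i), γ (x (i + 1))) = s(v, p v) := by
    intro i
    by_contra hcon
    push Not at hcon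
    have h3 := hγ _ _ (hR.2.2 i)
    rw [diPsi_edge hR] at h3
    apply hlo i
    rw [← h3]
    unfold diPsi
    rw [dif_neg (by push Not; exact hcon.1)]
    unfold diChi
    rw [dif_neg (by push Not; exact hcon.2)]
  have hin : ∀ i, γ (x i) ∈ C := by
    obtain ⟨j, hj⟩ := Finite.exists_max (fun i => D (γ (x i)))
    have hstep : ∀ i k, D (γ (x k)) ≠ 0 → (∀ t, D (γ (x t)) ≤ D (γ (x k))) → (i + 1 = k ∨ k + 1 = i) →
        γ (x i) = p (γ (x k)) := by
      intro i k hk hm hik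
      have hkC : γ (x k) ∉ C := fun h => hk ((hP.1 _).2 h)
      have hkey : ∀ e, e = s(γ (x i), γ (x k)) → ((∃ j, e = s(x j, x (j + 1))) ∨
          ∃ v, v ∉ C ∧ e = s(v, p v)) → γ (x i) = p (γ (x k)) := by
        rintro e he (⟨j, hj⟩ | ⟨v, hv, hj⟩)
        · rw [he, Sym2.eq_iff] at hj
          exfalso
          rcases hj with hj | hj
          · exact hkC ⟨_, hj.2.symm⟩
          · exact hkC ⟨_, hj.2.symm⟩
        · rw [he, Sym2.eq_iff] at hj
          rcases hj with hj | hj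
          · exfalso
            have h4 := (hP.2.1 v hv).2
            have h5 := hm i
            rw [hj.1] at h5
            rw [← hj.2] at h4
            omega
          · rw [hj.1, hj.2]
      rcases hik with rfl | rfl
      · exact hkey _ rfl (hrec i)
      · exact hkey _ Sym2.eq_swap (hrec k)
    have hj0 : D (γ (x j)) = 0 := by
      by_contra hne
      have h3 := hstep (j + 1) j hne hj (Or.inr rfl)
      have h4 := hstep (j - 1) j hne hj (Or.inl (by ring))
      have h5 := hR.2.1 (γ.injective (h3.trans h4.symm))
      exact h2 (by linear_combination h5)
    intro i
    rw [← hP.1]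
    have := hj i
    omega
  have hE : ∀ i, ∃ j, s(γ (x i), γ (x (i + 1))) = s(x j, x (j + 1)) := by
    intro i
    rcases hrec i with h | ⟨v, hv, h⟩
    · exact h
    · exfalso
      rw [Sym2.eq_iff] at h
      rcases h with h | h
      · exact hv (h.1 ▸ hin i)
      · exact hv (h.2 ▸ hin (i + 1))
  have hfix : ∀ i, γ (x i) = x i := by
    obtain ⟨r, hr | hr⟩ := hR.dihedral γ hE
    · have h3 := hγ _ _ (hR.2.2 0)
      rw [diPsi_edge hR, hr, hr, ← add_assoc, diPsi_edge hR] at h3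
      have h4 := hl0 _ h3
      rw [add_zero] at h4
      intro i; rw [hr, h4, zero_add]
    · exfalso
      have h3 := hγ _ _ (hR.2.2 0)
      rw [diPsi_edge hR, hr, hr, Sym2.eq_swap, show r - 0 = (r - (0 + 1)) + 1 by ring, diPsi_edge hR] at h3
      have h5 := hγ _ _ (hR.2.2 1)
      rw [diPsi_edge hR, hr, hr, Sym2.eq_swap, show r - 1 = (r - (1 + 1)) + 1 by ring, diPsi_edge hR] at h5
      have h4 := hl0 _ h3
      have h6 := hl1 _ h5
      exact h2 (by linear_combination h4 - h6)
  have hCC : ∀ v, γ v ∈ C ↔ v ∈ C := by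
    intro v
    constructor
    · rintro ⟨i, hi⟩
      rw [← hfix i] at hi
      exact ⟨i, γ.injective hi⟩
    · rintro ⟨i, rfl⟩
      exact hin i
  exact di_triv (x := x) c hc γ (di_decode_psi hP c o l γ hCC hγ) (fun i => by rw [hfix])

theorem di_unicyclic (hconn : G.Connected) {x : ZMod g → V} (hR : DIRing G g x) (c : V → L)
    (hc : ∀ γ : G ≃g G, (∀ x, c (γ x) = c x) → ∀ x, γ x = x) (o o' : L) (hoo : o' ≠ o)
    (hE : ∀ γ : G ≃g G, ∀ i, ∃ j, s(γ (x i), γ (x (i + 1))) = s(x j, x (j + 1))) :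
    ∃ ψ : Sym2 V → L, ∀ γ : G ≃g G, DIPres G ψ γ → ∀ x, γ x = x := by
  by_contra hcon
  push Not at hcon
  have h2 := di_two_ne hR.1
  set C := Set.range x with hCdef
  obtain ⟨D, p, hP⟩ := di_par_exists hconn C ⟨x 0, 0, rfl⟩
  have hCim : ∀ γ : G ≃g G, ∀ v, v ∈ C → γ v ∈ C := by
    rintro γ _ ⟨i, rfl⟩
    obtain ⟨r, hr | hr⟩ := hR.dihedral γ (hE γ)
    · exact ⟨_, (hr i).symm⟩
    · exact ⟨_, (hr i).symm⟩
  have hCC : ∀ γ : G ≃g G, ∀ v, γ v ∈ C ↔ v ∈ C := by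
    intro γ v
    refine ⟨fun h => ?_, hCim γ v⟩
    have := hCim γ.symm _ h
    simpa using this
  have hfail : ∀ l : ZMod g → L, ∃ γ : G ≃g G, DINT γ ∧ (∀ v, v ∉ C → c (γ v) = c v) ∧
      ∃ r, ((∀ i, γ (x i) = x (r + i)) ∧ ∀ i, l (r + i) = l i) ∨
        ((∀ i, γ (x i) = x (r - i)) ∧ ∀ i, l (r - 1 - i) = l i) := by
    intro l
    obtain ⟨γ, hγ, hn⟩ := hcon (diPsi x (diChi C p c o) l)
    refine ⟨γ, hn, di_decode_psi hP c o l γ (hCC γ) hγ, ?_⟩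
    obtain ⟨r, hr | hr⟩ := hR.dihedral γ (hE γ)
    · refine ⟨r, Or.inl ⟨hr, fun i => ?_⟩⟩
      have h3 := hγ _ _ (hR.2.2 i)
      rwa [diPsi_edge hR, hr, hr, ← add_assoc, diPsi_edge hR] at h3
    · refine ⟨r, Or.inr ⟨hr, fun i => ?_⟩⟩
      have h3 := hγ _ _ (hR.2.2 i)
      rwa [diPsi_edge hR, hr, hr, Sym2.eq_swap, show r - i = (r - 1 - i) + 1 by ring,
        show r - (i + 1) = r - 1 - i by ring, diPsi_edge hR] at h3
  have hnt0 : ∀ γ : G ≃g G, DINT γ → (∀ v, v ∉ C → c (γ v) = c v) → (∀ i, c (γ (x i)) = c (x i)) → False := by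
    rintro γ ⟨v, hv⟩ h3 h4
    exact hv (di_triv (x := x) c hc γ h3 h4 v)
  have hrefl : ∀ r, ∃ γ : G ≃g G, (∀ v, v ∉ C → c (γ v) = c v) ∧ ∀ i, γ (x i) = x (r - i) := by
    have hodd : ∀ j : ZMod g, ∃ γ : G ≃g G, (∀ v, v ∉ C → c (γ v) = c v) ∧ ∀ i, γ (x i) = x (2 * j + 1 - i) := by
      intro j
      obtain ⟨γ, hn, hoff, r, ⟨hr, hl⟩ | ⟨hr, hl⟩⟩ := hfail (fun i => if i = j then o' else o)
      · exfalso
        have h3 := hl j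
        simp only [if_true, ite_eq_left_iff, hoo.symm, imp_false, not_not] at h3
        refine hnt0 γ hn hoff fun i => ?_
        rw [hr, show r = 0 by linear_combination h3, zero_add]
      · have h3 := hl j
        simp only [if_true, ite_eq_left_iff, hoo.symm, imp_false, not_not] at h3
        refine ⟨γ, hoff, fun i => ?_⟩
        rw [hr, show r = 2 * j + 1 by linear_combination h3]
    have heven : ∀ j : ZMod g, ∃ γ : G ≃g G, (∀ v, v ∉ C → c (γ v) = c v) ∧ ∀ i, γ (x i) = x (2 * j - i) := by
      intro j
      obtain ⟨γ, hn, hoff, r, ⟨hr, hl⟩ | ⟨hr, hl⟩⟩ := hfail (fun i => if i = j ∨ i = j - 1 then o' else o)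
      · exfalso
        have h3 := hl j
        have h4 := hl (j - 1)
        simp only [true_or, or_true, if_true, ite_eq_left_iff, hoo.symm, imp_false, not_not] at h3 h4
        have h0 : r = 0 := by
          rcases h3 with h3 | h3
          · linear_combination h3
          · rcases h4 with h4 | h4
            · exact absurd (by linear_combination h3 - h4) h2
            · linear_combination h4
        refine hnt0 γ hn hoff fun i => ?_
        rw [hr, h0, zero_add]
      · have h3 := hl j
        have h4 := hl (j - 1)
        simp only [true_or, or_true, if_true, ite_eq_left_iff, hoo.symm, imp_false, not_not] at h3 h4
        have h0 : r = 2 * j := by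
          rcases h3 with h3 | h3
          · rcases h4 with h4 | h4
            · linear_combination h4
            · exact absurd (by linear_combination h4 - h3) h2
          · linear_combination h3
        refine ⟨γ, hoff, fun i => ?_⟩
        rw [hr, h0]
    intro r
    have : NeZero g := ⟨by have := hR.1; omega⟩
    have hrv : ((r.val : ℕ) : ZMod g) = r := ZMod.natCast_zmod_val r
    rcases Nat.even_or_odd' r.val with ⟨m, hm | hm⟩
    · have := heven m
      rw [hm] at hrv
      push_cast at hrv
      rwa [hrv] at this
    · have := hodd m
      rw [hm] at hrv
      push_cast at hrv
      rwa [hrv] at this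
  obtain ⟨γ, hn, hoff, r, ⟨hr, hl⟩ | ⟨hr, hl⟩⟩ := hfail (fun i => c (x i))
  · exact hnt0 γ hn hoff fun i => by rw [hr]; exact hl i
  · obtain ⟨θ, hθ, hθr⟩ := hrefl (r - 1)
    have htr := di_triv (x := x) c hc θ hθ (fun i => by rw [hθr]; exact hl i)
    have h3 := htr (x 0)
    have h4 := htr (x 1)
    rw [hθr] at h3 h4
    have h3 := hR.2.1 h3
    have h4 := hR.2.1 h4
    exact h2 (by linear_combination h3 - h4)

end DI6

section DI7
open scoped Classical

variable {V : Type*} {G : SimpleGraph V}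

theorem di_ring {u : V} (w : G.Walk u u) (hw : w.IsCycle) :
    ∃ x : ZMod w.length → V, DIRing G w.length x ∧ ∀ e, e ∈ w.edges ↔ ∃ i, e = s(x i, x (i + 1)) := by
  have h3 := hw.three_le_length
  have : NeZero w.length := ⟨by omega⟩
  have hsucc : ∀ i : ZMod w.length, w.getVert (i + 1).val = w.getVert (i.val + 1) := by
    intro i
    have hi := ZMod.val_lt i
    by_cases h : i.val + 1 < w.length
    · have : Fact (1 < w.length) := ⟨by omega⟩
      have h1 : (1 : ZMod w.length).val = 1 := ZMod.val_one _
      rw [ZMod.val_add_of_lt (by rw [h1]; exact h), h1]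
    · have h' : i.val + 1 = w.length := by omega
      have : i + 1 = 0 := by
        have h4 : ((i.val + 1 : ℕ) : ZMod w.length) = 0 := by rw [h']; simp
        push_cast at h4
        rwa [ZMod.natCast_zmod_val] at h4
      rw [this, h', SimpleGraph.Walk.getVert_length, ZMod.val_zero, SimpleGraph.Walk.getVert_zero]
  refine ⟨fun i => w.getVert i.val, ⟨h3, ?_, ?_⟩, ?_⟩
  · intro i j hij
    have hi := ZMod.val_lt i
    have hj := ZMod.val_lt j
    exact ZMod.val_injective _ (hw.getVert_injOn' (by simp only [Set.mem_ofPred_eq]; omega) (by simp only [Set.mem_ofPred_eq]; omega) hij)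
  · intro i
    simp only [hsucc]
    exact w.adj_getVert_succ (ZMod.val_lt i)
  · intro e
    simp only [hsucc]
    constructor
    · intro he
      obtain ⟨n, hn, rfl⟩ := List.mem_iff_getElem.1 he
      rw [SimpleGraph.Walk.length_edges] at hn
      refine ⟨(n : ZMod w.length), ?_⟩
      rw [ZMod.val_natCast_of_lt hn, SimpleGraph.Walk.getElem_edges]
    · rintro ⟨i, rfl⟩
      have hi := ZMod.val_lt i
      refine List.mem_iff_getElem.2 ⟨i.val, by rwa [SimpleGraph.Walk.length_edges], ?_⟩
      rw [SimpleGraph.Walk.getElem_edges]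

theorem di_uni_edges {e0 : Sym2 V} (h0 : ∀ (u : V) (w : G.Walk u u), w.IsCycle → e0 ∈ w.edges)
    {u u2 : V} (w : G.Walk u u) (hw : w.IsCycle) (w2 : G.Walk u2 u2) (hw2 : w2.IsCycle)
    (e : Sym2 V) (he : e ∈ w.edges) : e ∈ w2.edges := by
  by_contra he2
  have he02 := h0 u2 w2 hw2
  have hne : e ≠ e0 := by rintro rfl; exact he2 he02
  obtain ⟨a, b, rfl⟩ := di_sym2_cases e
  have hab : G.Adj a b := w.edges_subset_edgeSet he
  set H := G \ SimpleGraph.fromEdgeSet {e0} with hH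
  have hHG : H ≤ G := sdiff_le
  set K := H \ SimpleGraph.fromEdgeSet {s(a, b)} with hK
  have hHadj : ∀ p q, G.Adj p q → s(p, q) ≠ e0 → H.Adj p q := by
    intro p q hpq h
    rw [hH, SimpleGraph.sdiff_adj, SimpleGraph.fromEdgeSet_adj]
    exact ⟨hpq, fun h' => h h'.1⟩
  have hb : ¬ K.Reachable a b := by
    intro hr
    obtain ⟨t, w3, hw3, -⟩ := SimpleGraph.adj_and_reachable_delete_edges_iff_exists_cycle.1
      (⟨hHadj a b hab hne, hr⟩ : H.Adj a b ∧ K.Reachable a b)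
    have h1 := h0 t (w3.mapLe hHG) (hw3.mapLe hHG)
    rw [SimpleGraph.Walk.edges_mapLe_eq_edges] at h1
    have h2 := w3.edges_subset_edgeSet h1
    obtain ⟨p, q, rfl⟩ := di_sym2_cases e0
    have h3 : H.Adj p q := h2
    rw [hH, SimpleGraph.sdiff_adj, SimpleGraph.fromEdgeSet_adj] at h3
    exact h3.2 ⟨rfl, h3.1.ne⟩
  have hnj : ∀ p q, G.Adj p q → K.Reachable a p → ¬ K.Reachable a q → s(p, q) = e0 ∨ s(p, q) = s(a, b) := by
    intro p q hpq hp hq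
    by_contra hcon
    push Not at hcon
    apply hq
    refine hp.trans (SimpleGraph.Adj.reachable ?_)
    rw [hK, SimpleGraph.sdiff_adj, SimpleGraph.fromEdgeSet_adj]
    exact ⟨hHadj p q hpq hcon.1, fun h => hcon.2 h.1⟩
  obtain ⟨p, q, hpq, hp, hq, hne2⟩ := di_cyc_not_single (X := {z | K.Reachable a z}) (e := s(a, b)) ⟨u, w, hw, he⟩ rfl
    (SimpleGraph.Reachable.refl a) hb
  have hpq0 : s(p, q) = e0 := by
    rcases hnj p q hpq hp hq with h | h
    · exact h
    · exact absurd h hne2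
  rw [← hpq0] at he02
  have := di_cyc_nojump w2 hw2 p q he02 (fun z => K.Reachable a z) (by
    intro y z hyz hne3
    have hadj : G.Adj y z := w2.edges_subset_edgeSet hyz
    have hne4 : s(y, z) ≠ s(a, b) := by
      intro h; rw [h] at hyz; exact he2 hyz
    rw [hpq0] at hne3
    constructor
    · intro hy
      by_contra hz
      rcases hnj y z hadj hy hz with h | h
      · exact hne3 h
      · exact hne4 h
    · intro hz
      by_contra hy
      rcases hnj z y hadj.symm hz hy with h | h
      · rw [Sym2.eq_swap] at h; exact hne3 h
      · rw [Sym2.eq_swap] at h; exact hne4 h)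
  exact hq (this.1 hp)

theorem di_main [Fintype V] (hconn : G.Connected) (hcyc : ¬ G.IsAcyclic) (d : ℕ) (c : V → Fin d)
    (hc : ∀ γ : G ≃g G, (∀ x, c (γ x) = c x) → ∀ x, γ x = x) :
    ∃ ψ : Sym2 V → Fin d, ∀ γ : G ≃g G, DIPres G ψ γ → ∀ x, γ x = x := by
  obtain ⟨v0⟩ := hconn.nonempty
  unfold SimpleGraph.IsAcyclic at hcyc
  push Not at hcyc
  obtain ⟨u, w, hw⟩ := hcyc
  obtain ⟨x, hR, hedges⟩ := di_ring w hw
  by_cases hd1 : d ≤ 1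
  · refine ⟨fun _ => c v0, fun γ _ => hc γ ?_⟩
    intro x
    have : Subsingleton (Fin d) := Fin.subsingleton_iff_le_one.2 hd1
    exact Subsingleton.elim _ _
  by_cases hd4 : 4 ≤ d
  · refine di_four hconn hR c hc ⟨0, by omega⟩ ⟨1, by omega⟩ ⟨2, by omega⟩ ⟨3, by omega⟩ ?_ ?_ ?_ ?_ ?_ ?_ <;>
      simp [Fin.ext_iff]
  by_cases hu : ∃ e0 : Sym2 V, ∀ (u : V) (w : G.Walk u u), w.IsCycle → e0 ∈ w.edges
  · obtain ⟨e0, h0⟩ := hu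
    refine di_unicyclic hconn hR c hc ⟨0, by omega⟩ ⟨1, by omega⟩ (by simp [Fin.ext_iff]) ?_
    intro γ i
    rw [← hedges]
    refine di_uni_edges h0 (w.map γ.toHom) (hw.map γ.injective) w hw _ ?_
    rw [SimpleGraph.Walk.edges_map]
    exact List.mem_map_of_mem (f := Sym2.map γ.toHom) ((hedges _).2 ⟨i, rfl⟩)
  · push Not at hu
    have hd : d = 2 ∨ d = 3 := by omega
    rcases hd with rfl | rfl
    · exact di_nonuni_two hconn c hc hu
    · exact di_nonuni_three hconn c hc hu

end DI7

/-- If `G` is a finite connected simple graph containing at least one cycle,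
then `D'(G) ≤ D(G)`. -/
theorem distinguishingIndex_le_distinguishingNumber_of_not_isAcyclic
    {V : Type*} [Fintype V] (G : SimpleGraph V)
    (hconn : G.Connected) (hcyc : ¬ G.IsAcyclic) :
    distinguishingIndex G ≤ distinguishingNumber G := by
  have hne : {d : ℕ | ∃ φ : V → Fin d,
      ∀ f : G ≃g G, (∀ x : V, φ (f x) = φ x) → ∀ x : V, f x = x}.Nonempty :=
    ⟨Fintype.card V, Fintype.equivFin V, fun f h x => (Fintype.equivFin V).injective (h x)⟩
  obtain ⟨c, hc⟩ := Nat.sInf_mem hne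
  obtain ⟨ψ, hψ⟩ := di_main hconn hcyc _ c hc
  refine Nat.sInf_le ⟨fun e => ψ e.1, fun f hf => hψ f ?_⟩
  intro x y hxy
  exact hf ⟨s(x, y), hxy⟩
end

section
/- Let G be a finite connected simple graph on at least 3 vertices. Then the distinguishing index of G is at most the distinguishing number of G plus one, i.e., D'(G) ≤ D(G) + 1. -/
open SimpleGraph

lemma dd_iso_dist_le {S : Type*} {T : SimpleGraph S} (hT : T.Connected) (f : T ≃g T) (x y : S) :
    T.dist (f x) (f y) ≤ T.dist x y := by
  obtain ⟨p, hp⟩ := hT.exists_walk_length_eq_dist x y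
  have := T.dist_le (p.map f.toHom)
  rw [Walk.length_map, hp] at this
  exact this

lemma dd_iso_dist {S : Type*} {T : SimpleGraph S} (hT : T.Connected) (f : T ≃g T) (x y : S) :
    T.dist (f x) (f y) = T.dist x y := by
  apply le_antisymm (dd_iso_dist_le hT f x y)
  have := dd_iso_dist_le hT f.symm (f x) (f y)
  simpa using this

lemma dd_parent_unique {S : Type*} {T : SimpleGraph S} (hT : T.IsTree) {y a b c : S}
    (hab : T.Adj a b) (hcb : T.Adj c b) (ha : T.dist y b = T.dist y a + 1)
    (hc : T.dist y b = T.dist y c + 1) : a = c := by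
  obtain ⟨p, hp⟩ := hT.connected.exists_walk_length_eq_dist y a
  obtain ⟨q, hq⟩ := hT.connected.exists_walk_length_eq_dist y c
  have h1 : (p.concat hab).IsPath := Walk.isPath_of_length_eq_dist _ (by simp [hp, ha])
  have h2 : (q.concat hcb).IsPath := Walk.isPath_of_length_eq_dist _ (by simp [hq, hc])
  have h3 := (hT.existsUnique_path y b).unique h1 h2
  have h4 : (p.concat hab).penultimate = (q.concat hcb).penultimate := by rw [h3]
  simpa using h4

lemma dd_parent_exists {S : Type*} {T : SimpleGraph S} (hT : T.Connected) (r y : S) (n : ℕ)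
    (h : T.dist r y = n + 1) : ∃ x, T.Adj x y ∧ T.dist r x = n := by
  obtain ⟨p, hp⟩ := hT.exists_walk_length_eq_dist y r
  rw [dist_comm, h] at hp
  cases p with
  | nil => simp at hp
  | cons hadj q =>
    rename_i v
    refine ⟨v, hadj.symm, ?_⟩
    simp at hp
    have h1 := T.dist_le q
    have h2 : T.dist r y ≤ T.dist r v + T.dist v y := hT.dist_triangle
    have h3 : T.dist v y = 1 := dist_eq_one_iff_adj.2 hadj.symm
    rw [dist_comm] at h1
    omega

lemma dd_root {S : Type*} [Fintype S] {T : SimpleGraph S} (hT : T.IsTree)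
    (hodd : Odd (Fintype.card S)) : ∃ r : S, ∀ f : T ≃g T, f r = r := by
  classical
  have : Nonempty S := hT.connected.nonempty
  let g : S → ℕ := fun v => ∑ y, T.dist y v
  obtain ⟨r, hr⟩ := Finite.exists_min g
  have hpar : ∀ u v, T.Adj u v → g u ≠ g v := by
    intro u v huv he
    have h1 : Odd (∑ y, (T.dist y u + T.dist y v)) := by
      rw [Finset.odd_sum_iff_odd_card_odd, Finset.filter_true_of_mem]
      · simpa using hodd
      · intro y _
        rcases hT.dist_eq_dist_add_one_of_adj y huv with h | h <;> rw [h]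
        · exact ⟨T.dist y v, by ring⟩
        · exact ⟨T.dist y u, by ring⟩
    rw [Finset.sum_add_distrib] at h1
    change Odd (g u + g v) at h1
    rw [he] at h1
    exact (Nat.not_odd_iff_even.2 ⟨g v, rfl⟩) h1
  have hconv : ∀ a b c, T.Adj a b → T.Adj c b → a ≠ c → g b + g b ≤ g a + g c := by
    intro a b c hab hcb hne
    simp only [g, ← Finset.sum_add_distrib]
    apply Finset.sum_le_sum
    intro y _
    rcases hT.dist_eq_dist_add_one_of_adj y hab with h | h <;>
      rcases hT.dist_eq_dist_add_one_of_adj y hcb with h' | h'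
    · omega
    · omega
    · omega
    · exact absurd (dd_parent_unique hT hab hcb h h') hne
  have hstep : ∀ n p c, T.Adj p c → T.dist r p = n → T.dist r c = n + 1 → g p < g c := by
    intro n
    induction n with
    | zero =>
      intro p c hpc h0 _
      have : r = p := hT.connected.dist_eq_zero_iff.1 h0
      subst this
      exact lt_of_le_of_ne (hr c) (hpar _ _ hpc)
    | succ n ih =>
      intro p c hpc hp hc
      obtain ⟨q, hq, hq'⟩ := dd_parent_exists hT.connected r p n hp
      have h1 := ih q p hq hq' hp
      have h2 := hconv q p c hq hpc.symm (by rintro rfl; omega)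
      omega
  have hmin : ∀ n c, T.dist r c = n + 1 → g r < g c := by
    intro n
    induction n with
    | zero =>
      intro c hc
      exact hstep 0 r c (dist_eq_one_iff_adj.1 hc) (by simp) hc
    | succ n ih =>
      intro c hc
      obtain ⟨q, hq, hq'⟩ := dd_parent_exists hT.connected r c _ hc
      exact (ih q hq').trans (hstep _ q c hq hq' hc)
  refine ⟨r, fun f => ?_⟩
  by_contra hne
  have h0 : 0 < T.dist r (f r) := hT.connected.pos_dist_of_ne (Ne.symm hne)
  have h1 := hmin (T.dist r (f r) - 1) (f r) (by omega)
  have h2 : g (f r) = g r := by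
    simp only [g]
    rw [← Equiv.sum_comp f.toEquiv]
    exact Finset.sum_congr rfl fun y _ => dd_iso_dist hT.connected f y r
  omega

lemma dd_main {V : Type*} [Fintype V] (G : SimpleGraph V) (S : Set V) (w : V)
    (hS : ∀ v, v ∉ S → v = w) (hconn : (G.induce S).Connected) (hnt : Nontrivial S)
    (hodd : Odd (Nat.card S)) (d : ℕ) (φ : V → Fin d)
    (hφ : ∀ f : G ≃g G, (∀ x : V, φ (f x) = φ x) → ∀ x : V, f x = x) :
    ∃ ψ : G.edgeSet → Fin (d + 1),
      ∀ f : G ≃g G, (∀ e : G.edgeSet, ψ (f.mapEdgeSet e) = ψ e) → ∀ x : V, f x = x := by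
  classical
  obtain ⟨T, hTle, hT⟩ := hconn.exists_isTree_le
  obtain ⟨r, hr⟩ := dd_root hT (by rwa [← Nat.card_eq_fintype_card])
  let P : G.edgeSet → S → Prop := fun e y =>
    ∃ x : S, T.Adj x y ∧ T.dist r y = T.dist r x + 1 ∧ e.1 = s(x.1, y.1)
  have hPu : ∀ e y y', P e y → P e y' → y = y' := by
    rintro e y y' ⟨x, hx, hd, he⟩ ⟨x', hx', hd', he'⟩
    rw [he, Sym2.eq_iff] at he'
    rcases he' with ⟨_, h⟩ | ⟨h1, h2⟩
    · exact Subtype.ext h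
    · have h1 := Subtype.ext h1
      have h2 := Subtype.ext h2
      subst h1 h2
      omega
  let ψ : G.edgeSet → Fin (d + 1) := fun e =>
    if h : ∃ y, P e y then (φ h.choose.1).succ else 0
  have hψ : ∀ e y, P e y → ψ e = (φ y.1).succ := by
    intro e y hy
    have h : ∃ y, P e y := ⟨y, hy⟩
    simp only [ψ, dif_pos h]
    rw [hPu e _ y h.choose_spec hy]
  have hGadj : ∀ x y : S, T.Adj x y → G.Adj x.1 y.1 := fun x y h => hTle h
  have hedge : ∀ x y (h : G.Adj x y), (ψ ⟨s(x, y), h⟩ ≠ 0 ↔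
      ∃ (hx : x ∈ S) (hy : y ∈ S), T.Adj ⟨x, hx⟩ ⟨y, hy⟩) := by
    intro x y h
    constructor
    · intro h0
      by_cases hex : ∃ z, P ⟨s(x, y), h⟩ z
      · obtain ⟨z, u, hu, _, he⟩ := hex
        rw [Sym2.eq_iff] at he
        rcases he with ⟨rfl, rfl⟩ | ⟨rfl, rfl⟩
        · exact ⟨u.2, z.2, hu⟩
        · exact ⟨z.2, u.2, hu.symm⟩
      · exact absurd (dif_neg hex) h0
    · rintro ⟨hx, hy, hxy⟩
      rcases hT.dist_eq_dist_add_one_of_adj r hxy with h1 | h1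
      · rw [hψ _ ⟨x, hx⟩ ⟨⟨y, hy⟩, hxy.symm, h1, Sym2.eq_swap⟩]
        exact Fin.succ_ne_zero _
      · rw [hψ _ ⟨y, hy⟩ ⟨⟨x, hx⟩, hxy, h1, rfl⟩]
        exact Fin.succ_ne_zero _
  refine ⟨ψ, fun f hf => hφ f ?_⟩
  have hf' : ∀ x y (h : G.Adj x y), ψ ⟨s(f x, f y), f.map_adj_iff.2 h⟩ = ψ ⟨s(x, y), h⟩ :=
    fun x y h => hf ⟨s(x, y), h⟩
  have hR : ∀ x y, (∃ (hx : x ∈ S) (hy : y ∈ S), T.Adj ⟨x, hx⟩ ⟨y, hy⟩) ↔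
      (∃ (hx : f x ∈ S) (hy : f y ∈ S), T.Adj ⟨f x, hx⟩ ⟨f y, hy⟩) := by
    intro x y
    by_cases h : G.Adj x y
    · rw [← hedge x y h, ← hedge (f x) (f y) (f.map_adj_iff.2 h), hf']
    · constructor
      · rintro ⟨hx, hy, hxy⟩
        exact absurd (hGadj _ _ hxy) h
      · rintro ⟨hx, hy, hxy⟩
        exact absurd (f.map_adj_iff.1 (hGadj _ _ hxy)) h
  have hSadj : ∀ x, x ∈ S ↔ ∃ y, ∃ (hx : x ∈ S) (hy : y ∈ S), T.Adj ⟨x, hx⟩ ⟨y, hy⟩ := by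
    intro x
    constructor
    · intro hx
      obtain ⟨y, hy⟩ := hT.connected.preconnected.exists_adj_of_nontrivial ⟨x, hx⟩
      exact ⟨y.1, hx, y.2, hy⟩
    · rintro ⟨_, hx, _⟩
      exact hx
  have hSf : ∀ x, x ∈ S ↔ f x ∈ S := by
    intro x
    rw [hSadj x, hSadj (f x)]
    constructor
    · rintro ⟨y, hy⟩
      exact ⟨f y, (hR x y).1 hy⟩
    · rintro ⟨y, hy⟩
      refine ⟨f.symm y, (hR x _).2 ?_⟩
      simpa using hy
  let F : T ≃g T :=
    { toEquiv := f.toEquiv.subtypeEquiv hSf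
      map_rel_iff' := by
        rintro ⟨a, ha⟩ ⟨b, hb⟩
        constructor
        · intro h
          obtain ⟨_, _, h⟩ := (hR a b).2 ⟨(hSf a).1 ha, (hSf b).1 hb, h⟩
          exact h
        · intro h
          obtain ⟨_, _, h⟩ := (hR a b).1 ⟨ha, hb, h⟩
          exact h }
  have hF : ∀ x : S, (F x).1 = f x.1 := fun x => rfl
  have hFr := hr F
  intro x
  by_cases hx : x ∈ S
  · by_cases hxr : (⟨x, hx⟩ : S) = r
    · have : f x = x := by
        have h := hF ⟨x, hx⟩
        rw [hxr, hFr, ← hxr] at h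
        exact h.symm
      rw [this]
    · have h0 : 0 < T.dist r ⟨x, hx⟩ := hT.connected.pos_dist_of_ne (Ne.symm hxr)
      obtain ⟨p, hp, hpd⟩ := dd_parent_exists hT.connected r ⟨x, hx⟩
        (T.dist r ⟨x, hx⟩ - 1) (by omega)
      have hadj := hGadj _ _ hp
      have h1 := hψ ⟨s(p.1, x), hadj⟩ ⟨x, hx⟩ ⟨p, hp, by omega, rfl⟩
      have hd : ∀ y, T.dist r (F y) = T.dist r y := by
        intro y
        have := dd_iso_dist hT.connected F r y
        rwa [hFr] at this
      have h2 := hψ ⟨s(f p.1, f x), f.map_adj_iff.2 hadj⟩ (F ⟨x, hx⟩)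
        ⟨F p, F.map_adj_iff.2 hp, by rw [hd, hd]; omega, rfl⟩
      rw [hf' _ _ hadj, h1] at h2
      exact (Fin.succ_injective _ h2).symm
  · have h1 := hS x hx
    have h2 := hS (f x) (fun h => hx ((hSf x).2 h))
    rw [h2, h1]

/-- If `G` is a finite connected simple graph on at least 3 vertices,
then `D'(G) ≤ D(G) + 1`. -/
theorem distinguishingIndex_le_distinguishingNumber_add_one
    {V : Type*} [Fintype V] (G : SimpleGraph V)
    (hconn : G.Connected) (hcard : 3 ≤ Fintype.card V) :
    distinguishingIndex G ≤ distinguishingNumber G + 1 := by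
  classical
  have hne : {d : ℕ | ∃ φ : V → Fin d,
      ∀ f : G ≃g G, (∀ x : V, φ (f x) = φ x) → ∀ x : V, f x = x}.Nonempty :=
    ⟨Fintype.card V, Fintype.equivFin V, fun f hf x => (Fintype.equivFin V).injective (hf x)⟩
  obtain ⟨φ, hφ⟩ := Nat.sInf_mem hne
  apply Nat.sInf_le
  have hnt : Nontrivial V := Fintype.one_lt_card_iff_nontrivial.1 (by omega)
  rcases Nat.even_or_odd (Fintype.card V) with he | ho
  · obtain ⟨w, hw⟩ := hconn.exists_connected_induce_compl_singleton_of_finite_nontrivial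
    have hc : Nat.card ({w}ᶜ : Set V) = Fintype.card V - 1 := by
      rw [Nat.card_eq_fintype_card, Fintype.card_compl_set]
      simp
    refine dd_main G {w}ᶜ w (by simp) hw ?_ ?_ _ φ hφ
    · apply Fintype.one_lt_card_iff_nontrivial.1
      rw [← Nat.card_eq_fintype_card, hc]
      omega
    · rw [hc]
      obtain ⟨k, hk⟩ := he
      exact ⟨k - 1, by omega⟩
  · obtain ⟨w⟩ := hconn.nonempty
    refine dd_main G Set.univ w (by simp) ?_ ?_ ?_ _ φ hφ
    · exact (induceUnivIso G).connected_iff.2 hconn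
    · exact Set.nontrivial_coe_sort.2 Set.nontrivial_univ
    · simpa using ho
end

section
/- Let G be a finite connected simple graph on at least 3 vertices. If D'(G) = D(G) + 1, then G is a tree (i.e., G is acyclic). -/
open SimpleGraph
namespace DI
open scoped Classical

section B
variable {V : Type*} (G : SimpleGraph V)

lemma two_zero (a : ZMod 2) : a + a = 0 := by revert a; decide
lemma zmod2_cases (a : ZMod 2) : a = 0 ∨ a = 1 := by revert a; decide

/-- cut space (mod 2), as functions whose values on edges come from a vertex potential -/
def Bs : AddSubgroup (Sym2 V → ZMod 2) where
  carrier := {y | ∃ X : V → ZMod 2, ∀ u v, G.Adj u v → X u + X v = y s(u, v)}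
  zero_mem' := ⟨0, by simp⟩
  add_mem' := by
    rintro a b ⟨X, hX⟩ ⟨Y, hY⟩
    refine ⟨X + Y, fun u v h => ?_⟩
    simp only [Pi.add_apply, ← hX u v h, ← hY u v h]; ring
  neg_mem' := by
    rintro a ⟨X, hX⟩
    refine ⟨-X, fun u v h => ?_⟩
    simp only [Pi.neg_apply, ← hX u v h]; ring

lemma mem_Bs {y : Sym2 V → ZMod 2} :
    y ∈ Bs G ↔ ∃ X : V → ZMod 2, ∀ u v, G.Adj u v → X u + X v = y s(u, v) := Iff.rfl

noncomputable def sg (e : Sym2 V) : Sym2 V → ZMod 2 := fun k => if k = e then 1 else 0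

lemma sg_self (e : Sym2 V) : sg e e = 1 := by simp [sg]
lemma sg_ne {e k : Sym2 V} (h : k ≠ e) : sg e k = 0 := by simp [sg, h]
lemma fn_two (y : Sym2 V → ZMod 2) : y + y = 0 := by
  funext k; exact two_zero _

lemma Bs_congr {y z : Sym2 V → ZMod 2} (h : ∀ u v, G.Adj u v → y s(u,v) = z s(u,v))
    (hy : y ∈ Bs G) : z ∈ Bs G := by
  obtain ⟨X, hX⟩ := hy
  exact ⟨X, fun u v huv => (hX u v huv).trans (h u v huv)⟩

lemma sg_diag (w : V) : sg s(w,w) ∈ Bs G := by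
  refine ⟨0, fun u v h => ?_⟩
  have : s(u,v) ≠ s(w,w) := by
    intro h'
    simp only [Sym2.eq_iff] at h'
    have := h.ne
    grind
  simp [sg_ne this]

/-- `B` extended by one vector. -/
def Bx (e : Sym2 V) : AddSubgroup (Sym2 V → ZMod 2) where
  carrier := {y | y ∈ Bs G ∨ y + sg e ∈ Bs G}
  zero_mem' := Or.inl (Bs G).zero_mem
  add_mem' := by
    rintro a b (ha | ha) (hb | hb)
    · exact Or.inl ((Bs G).add_mem ha hb)
    · right; have := (Bs G).add_mem ha hb; rwa [← add_assoc] at this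
    · right; have := (Bs G).add_mem ha hb
      have h2 : a + sg e + b = a + b + sg e := by abel
      rwa [h2] at this
    · left; have := (Bs G).add_mem ha hb
      have h2 : a + sg e + (b + sg e) = a + b + (sg e + sg e) := by abel
      rwa [h2, fn_two, add_zero] at this
  neg_mem' := by
    intro a ha
    have : -a = a := by
      funext k; have := two_zero (a k); simp only [Pi.neg_apply]; exact neg_eq_of_add_eq_zero_left this
    rwa [this]

lemma lemP [Fintype V] (y : Sym2 V → ZMod 2) (e : Sym2 V)
    (h : ∀ u v, G.Adj u v → y s(u,v) ≠ 0 → sg s(u,v) ∈ Bs G ∨ sg s(u,v) + sg e ∈ Bs G) :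
    y ∈ Bs G ∨ y + sg e ∈ Bs G := by
  change y ∈ Bx G e
  set T : Finset (Sym2 V) := Finset.univ.filter (fun k => k ∈ G.edgeSet ∧ y k ≠ 0) with hT
  have hz : (∑ k ∈ T, sg k) ∈ Bx G e := by
    apply AddSubgroup.sum_mem
    intro k hk
    rw [hT, Finset.mem_filter] at hk
    obtain ⟨-, hk1, hk2⟩ := hk
    induction k using Sym2.ind with
    | _ u v => exact h u v hk1 hk2
  have hr : y - ∑ k ∈ T, sg k ∈ Bs G := by
    refine ⟨0, fun u v huv => ?_⟩
    simp only [Pi.zero_apply, add_zero, Pi.sub_apply, Finset.sum_apply]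
    have : ∑ c ∈ T, sg c s(u,v) = if s(u,v) ∈ T then 1 else 0 := by
      simp only [sg]
      rw [Finset.sum_ite_eq]
    rw [this]
    rcases zmod2_cases (y s(u,v)) with h0 | h0
    · have : s(u,v) ∉ T := by simp [hT, h0]
      simp [this, h0]
    · have : s(u,v) ∈ T := by simp [hT, h0, huv]
      simp [this, h0]
  have := (Bx G e).add_mem (show _ ∈ Bx G e from Or.inl hr) hz
  rwa [sub_add_cancel] at this

lemma ser_symm {e k : Sym2 V} (h : sg e + sg k ∈ Bs G) : sg k + sg e ∈ Bs G := by
  rwa [add_comm]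
lemma ser_refl (e : Sym2 V) : sg e + sg e ∈ Bs G := by rw [fn_two]; exact (Bs G).zero_mem
lemma ser_trans {e k l : Sym2 V} (h : sg e + sg k ∈ Bs G) (h' : sg k + sg l ∈ Bs G) :
    sg e + sg l ∈ Bs G := by
  have := (Bs G).add_mem h h'
  have h2 : sg e + sg k + (sg k + sg l) = sg e + sg l + (sg k + sg k) := by abel
  rwa [h2, fn_two, add_zero] at this
lemma ser_bridge {e k : Sym2 V} (h : sg e + sg k ∈ Bs G) (h' : sg e ∈ Bs G) : sg k ∈ Bs G := by
  have := (Bs G).add_mem h' h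
  rwa [← add_assoc, fn_two, zero_add] at this

/-- at a vertex, a second edge outside the class of `e` and not a bridge -/
lemma lemN [Fintype V] (e : Sym2 V) {w w' : V} (hw : G.Adj w w') (h1 : sg s(w,w') ∉ Bs G)
    (h2 : sg s(w,w') + sg e ∉ Bs G) :
    ∃ w2, w2 ≠ w' ∧ G.Adj w w2 ∧ sg s(w,w2) ∉ Bs G ∧ sg s(w,w2) + sg e ∉ Bs G := by
  by_contra hcon
  push Not at hcon
  set y : Sym2 V → ZMod 2 := fun k => (if w ∈ k then 1 else 0) with hy
  have hyB : y ∈ Bs G := by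
    refine ⟨fun v => if v = w then 1 else 0, fun u v huv => ?_⟩
    have := huv.ne
    simp only [hy, Sym2.mem_iff]
    by_cases a : u = w <;> by_cases b : v = w <;> simp_all [eq_comm]
  have := lemP G (y + sg s(w,w')) e (by
    intro u v huv hne
    by_cases hww : w ∈ s(u,v)
    · have key : ∀ z, G.Adj w z → (y + sg s(w,w')) s(w,z) ≠ 0 → sg s(w,z) ∈ Bs G ∨ sg s(w,z) + sg e ∈ Bs G := by
        intro z hz hnz
        by_cases hzw : z = w'
        · subst hzw
          exfalso; apply hnz
          simp only [Pi.add_apply, sg_self, hy]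
          simp; decide
        · by_cases hb : sg s(w,z) ∈ Bs G
          · exact Or.inl hb
          · exact Or.inr (hcon z hzw hz hb)
      rcases Sym2.mem_iff.1 hww with h | h
      · subst h; exact key v huv hne
      · subst h
        have e' : s(u,w) = s(w,u) := Sym2.eq_swap
        rw [e'] at hne ⊢
        exact key u huv.symm hne
    · exfalso; apply hne
      have : s(u,v) ≠ s(w,w') := by
        rintro h; apply hww; rw [h]; simp
      simp [hy, hww, sg_ne this])
  rcases this with h | h
  · apply h1
    have := (Bs G).add_mem hyB h
    rwa [← add_assoc, fn_two, zero_add] at this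
  · apply h2
    have := (Bs G).add_mem hyB h
    rwa [← add_assoc, ← add_assoc, fn_two, zero_add] at this

/-- at most two class edges leave a set on which class potentials are constant -/
lemma lemRing (W : Set V) (e y₁ z₁ y₂ z₂ y₃ z₃) (he : sg e ∉ Bs G)
    (hW : ∀ X : V → ZMod 2, (∀ u v, G.Adj u v → X u ≠ X v → sg s(u,v) + sg e ∈ Bs G) →
      ∀ a ∈ W, ∀ b ∈ W, X a = X b)
    (a1 : G.Adj y₁ z₁) (a2 : G.Adj y₂ z₂) (a3 : G.Adj y₃ z₃)
    (h1 : y₁ ∈ W) (h2 : y₂ ∈ W) (h3 : y₃ ∈ W)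
    (c1 : sg s(y₁,z₁) + sg e ∈ Bs G) (c2 : sg s(y₂,z₂) + sg e ∈ Bs G) (c3 : sg s(y₃,z₃) + sg e ∈ Bs G)
    (n12 : s(y₁,z₁) ≠ s(y₂,z₂)) (n13 : s(y₁,z₁) ≠ s(y₃,z₃)) (n23 : s(y₂,z₂) ≠ s(y₃,z₃)) : False := by
  have key : ∀ y z y' z' : V, sg s(y,z) + sg e ∈ Bs G → sg s(y',z') + sg e ∈ Bs G → s(y,z) ≠ s(y',z') →
     ∃ Z : V → ZMod 2, (∀ u v, G.Adj u v → Z u + Z v = sg s(y,z) s(u,v) + sg s(y',z') s(u,v)) ∧ ∀ a ∈ W, Z a = 0 := by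
    intro y z y' z' c c' n
    obtain ⟨Z, hZ⟩ := ser_trans G c (ser_symm G c')
    have hc : ∀ a ∈ W, ∀ b ∈ W, Z a = Z b := by
      apply hW
      intro u v huv hne
      have h0 := hZ u v huv
      by_cases p1 : s(u,v) = s(y,z)
      · rw [p1]; exact c
      by_cases p2 : s(u,v) = s(y',z')
      · rw [p2]; exact c'
      exfalso
      simp only [Pi.add_apply, sg_ne p1, sg_ne p2, add_zero] at h0
      apply hne
      revert h0; generalize Z u = a; generalize Z v = b; revert a b; decide
    by_cases hne : W.Nonempty
    · obtain ⟨w, hw⟩ := hne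
      refine ⟨fun v => Z v + Z w, fun u v huv => ?_, fun a ha => ?_⟩
      · have h0 := hZ u v huv
        simp only [Pi.add_apply] at h0
        rw [← h0]
        have := two_zero (Z w)
        linear_combination this
      · show Z a + Z w = 0
        rw [hc a ha w hw]; exact two_zero _
    · exact ⟨Z, fun u v huv => hZ u v huv, fun a ha => (hne ⟨a, ha⟩).elim⟩
  obtain ⟨Z, hZ, hZ0⟩ := key _ _ _ _ c1 c2 n12
  obtain ⟨Y, hY, hY0⟩ := key _ _ _ _ c1 c3 n13
  have : sg s(y₁,z₁) ∈ Bs G := by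
    refine ⟨fun v => Z v * Y v, fun u v huv => ?_⟩
    show Z u * Y u + Z v * Y v = sg s(y₁,z₁) s(u,v)
    have hz := hZ u v huv
    have hy := hY u v huv
    by_cases p1 : s(u,v) = s(y₁,z₁)
    · rw [p1, sg_self, sg_ne n12] at hz
      rw [p1, sg_self, sg_ne n13] at hy
      rw [p1, sg_self]
      simp only [Sym2.eq_iff] at p1
      rcases p1 with ⟨rfl, rfl⟩ | ⟨rfl, rfl⟩
      · have q1 := hZ0 _ h1
        have q2 := hY0 _ h1
        rw [q1] at hz ⊢
        rw [q2] at hy ⊢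
        simp at hz hy; simp [hz, hy]
      · have q1 := hZ0 _ h1
        have q2 := hY0 _ h1
        rw [q1] at hz ⊢
        rw [q2] at hy ⊢
        simp at hz hy; simp [hz, hy]
    by_cases p2 : s(u,v) = s(y₂,z₂)
    · rw [p2, sg_ne (Ne.symm n12)]
      rw [p2, sg_ne (Ne.symm n12), sg_ne n23] at hy
      have e1 : Y u = Y v := by
        revert hy; generalize Y u = a; generalize Y v = b; revert a b; decide
      simp only [Sym2.eq_iff] at p2
      rcases p2 with ⟨rfl, rfl⟩ | ⟨rfl, rfl⟩
      · rw [← e1, hY0 _ h2]; simp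
      · rw [e1, hY0 _ h2]; simp
    by_cases p3 : s(u,v) = s(y₃,z₃)
    · rw [p3, sg_ne (Ne.symm n13)]
      rw [p3, sg_ne (Ne.symm n13), sg_ne (Ne.symm n23)] at hz
      have e1 : Z u = Z v := by
        revert hz; generalize Z u = a; generalize Z v = b; revert a b; decide
      simp only [Sym2.eq_iff] at p3
      rcases p3 with ⟨rfl, rfl⟩ | ⟨rfl, rfl⟩
      · rw [← e1, hZ0 _ h3]; simp
      · rw [e1, hZ0 _ h3]; simp
    rw [sg_ne p1, sg_ne p2] at hz
    rw [sg_ne p1, sg_ne p3] at hy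
    rw [sg_ne p1]
    revert hz hy
    generalize Y u = a; generalize Y v = b; generalize Z u = c; generalize Z v = d
    revert a b c d; decide
  exact he (ser_bridge G c1 this)

/-- a set with at most one leaving edge contains a nonbridge -/
lemma lemQ [Fintype V] (hd : ∀ v, ∃ a b, a ≠ b ∧ G.Adj v a ∧ G.Adj v b) :
    ∀ (n : ℕ) (Q : Finset V) (w w' : V), Q.card = n → w ∈ Q →
     (∀ p q, G.Adj p q → p ∈ Q → q ∉ Q → p = w ∧ q = w') →
     ∃ x ∈ Q, ∃ y ∈ Q, G.Adj x y ∧ sg s(x,y) ∉ Bs G := by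
  intro n
  induction n using Nat.strong_induction_on with
  | _ n ih =>
  intro Q w w' hn hw hc
  obtain ⟨w2, h2, hw2⟩ : ∃ w2, G.Adj w w2 ∧ w2 ∈ Q := by
    obtain ⟨a, b, hab, ha, hb⟩ := hd w
    by_contra hcon
    push Not at hcon
    have := (hc w a ha hw (hcon a ha)).2
    have := (hc w b hb hw (hcon b hb)).2
    grind
  by_cases hbr : sg s(w,w2) ∈ Bs G
  · obtain ⟨Z, hZ⟩ := hbr
    have hZ' : ∀ p q, G.Adj p q → Z p ≠ Z q → s(p,q) = s(w,w2) := by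
      intro p q hpq hne
      by_contra hcc
      have h0 := hZ p q hpq
      rw [sg_ne hcc] at h0
      apply hne
      revert h0; generalize Z p = a; generalize Z q = b; revert a b; decide
    have hZ2 : Z w2 ≠ Z w := by
      have := hZ w w2 h2
      rw [sg_self] at this
      intro h; rw [h, two_zero] at this; exact absurd this (by decide)
    obtain ⟨x, hx, y, hy, hxy⟩ := ih (Q.filter (fun v => Z v ≠ Z w)).card (by
        rw [← hn]; apply Finset.card_lt_card
        refine ⟨Finset.filter_subset _ _, fun h => ?_⟩
        have := h hw; simp at this) (Q.filter (fun v => Z v ≠ Z w)) w2 w rfl (by simp [hw2, hZ2]) (by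
        intro p q hpq hp hq
        simp only [Finset.mem_filter, not_and, not_not] at hp hq
        by_cases hqQ : q ∈ Q
        · have e := hZ' p q hpq (by rw [hq hqQ]; exact hp.2)
          simp only [Sym2.eq_iff] at e
          rcases e with e | e
          · exact absurd (by rw [e.1]) hp.2
          · exact e
        · have := hc p q hpq hp.1 hqQ
          exact absurd (by rw [this.1]) hp.2)
    exact ⟨x, (Finset.mem_filter.1 hx).1, y, (Finset.mem_filter.1 hy).1, hxy⟩
  · exact ⟨w, hw, w2, hw2, h2, hbr⟩

end B
end DI

open SimpleGraph
namespace DI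
lemma zz2 : ∀ c d : ZMod 2, c ≠ 0 → d ≠ 0 → ¬ c = d → 2 * c - d = 0 := by decide
lemma zz3 : ∀ c d : ZMod 3, c ≠ 0 → d ≠ 0 → ¬ c = d → 2 * c - d = 0 := by decide
set_option linter.unusedSectionVars false
set_option linter.unusedVariables false
open scoped Classical

lemma const_of_reach {V α : Type*} {G : SimpleGraph V} {x : V → α}
    (h : ∀ u v, G.Adj u v → x u = x v) {u v : V} (r : G.Reachable u v) : x u = x v := by
  obtain ⟨w⟩ := r
  induction w with
  | nil => rfl
  | cons a _ ih => exact (h _ _ a).trans ih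

/-- preservation of an edge labeling -/
def Prs {V M : Type*} (G : SimpleGraph V) (ψ : Sym2 V → M) (f : Equiv.Perm V) : Prop :=
  ∀ u v, G.Adj u v → ψ s(f u, f v) = ψ s(u, v)

/-- basic labeling -/
def ps {V : Type*} {p : ℕ} (φ : V → ZMod p) : Sym2 V → ZMod p :=
  Sym2.lift ⟨fun u v => φ u + φ v, fun _ _ => add_comm _ _⟩

lemma ps_mk {V : Type*} {p : ℕ} (φ : V → ZMod p) (u v : V) : ps φ s(u,v) = φ u + φ v := rfl

structure Ctx {V : Type*} [Fintype V] (G : SimpleGraph V) (p : ℕ) (Γ : Subgroup (Equiv.Perm V))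
    (φ ε : V → ZMod p) : Prop where
  hp : p = 2 ∨ p = 3
  conn : G.Connected
  two : ∀ v, ∃ a b, a ≠ b ∧ G.Adj v a ∧ G.Adj v b
  aut : ∀ f ∈ Γ, ∀ u v, G.Adj u v → G.Adj (f u) (f v)
  dst : ∀ f ∈ Γ, (∀ v, φ (f v) = φ v) → f = 1
  anti : ∀ u v, G.Adj u v → ε u = - ε v
  sq : ∀ v, ε v * ε v = 1
  sum : ∑ v, ε v = 0

section C
variable {V : Type*} [Fintype V] {G : SimpleGraph V} {p : ℕ} {Γ : Subgroup (Equiv.Perm V)}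
    {φ ε : V → ZMod p}

lemma Ctx.inv_adj (C : Ctx G p Γ φ ε) {f} (hf : f ∈ Γ) (u v : V) (h : G.Adj u v) :
    G.Adj (f⁻¹ u) (f⁻¹ v) := C.aut _ (Γ.inv_mem hf) _ _ h

lemma Prs.mul {M : Type*} {ψ : Sym2 V → M} {f g : Equiv.Perm V} (C : Ctx G p Γ φ ε)
    (hg : g ∈ Γ) (h1 : Prs G ψ f) (h2 : Prs G ψ g) :
    Prs G ψ (f * g) := fun u v h => (h1 _ _ (C.aut g hg _ _ h)).trans (h2 _ _ h)

lemma Prs.inv {M : Type*} {ψ : Sym2 V → M} {f : Equiv.Perm V} (C : Ctx G p Γ φ ε)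
    (hf : f ∈ Γ) (h1 : Prs G ψ f) : Prs G ψ f⁻¹ := by
  intro u v h
  have := h1 _ _ (C.inv_adj hf _ _ h)
  simpa using this.symm

lemma Ctx.ct (C : Ctx G p Γ φ ε) {f} (_hf : f ∈ Γ) (h : Prs G (ps φ) f) :
    ∃ c, ∀ v, φ (f v) = φ v + c * ε v := by
  have key : ∀ u v, G.Adj u v → ε u * (φ (f u) - φ u) = ε v * (φ (f v) - φ v) := by
    intro u v huv
    have h1 := h u v huv
    rw [ps_mk, ps_mk] at h1
    rw [C.anti u v huv]
    linear_combination (-ε v) * h1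
  obtain ⟨r⟩ := C.conn.nonempty
  refine ⟨ε r * (φ (f r) - φ r), fun v => ?_⟩
  rw [const_of_reach key (C.conn.preconnected r v)]
  linear_combination (- (φ (f v) - φ v)) * C.sq v

lemma Ctx.ne0 (C : Ctx G p Γ φ ε) (v : V) : ε v ≠ 0 := by
  intro h
  have := C.sq v
  rw [h] at this
  rcases C.hp with rfl | rfl <;> exact absurd this (by decide)

lemma Ctx.fix (C : Ctx G p Γ φ ε) {f} (hf : f ∈ Γ) (h : Prs G (ps φ) f) {a : V} (ha : f a = a) :
    f = 1 := by
  obtain ⟨c, hc⟩ := C.ct hf h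
  have h1 := hc a
  rw [ha] at h1
  have h2 : c = 0 := by linear_combination (-ε a) * h1 - c * C.sq a
  exact C.dst f hf (fun v => by rw [hc v, h2]; ring)

lemma Ctx.swap (C : Ctx G p Γ φ ε) {f} (hf : f ∈ Γ) {a b : V}
    (hab : G.Adj a b) (h1 : f a = b) (v) : ε (f v) = - ε v := by
  have key : ∀ u v, G.Adj u v → ε (f u) * ε u = ε (f v) * ε v := by
    intro u v huv
    rw [C.anti _ _ huv, C.anti _ _ (C.aut f hf _ _ huv)]; ring
  have := const_of_reach key (C.conn.preconnected a v)
  rw [h1, C.anti _ _ hab] at this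
  have s1 := C.sq b
  have s2 := C.sq v
  linear_combination (- ε v) * this - ε v * s1 - ε (f v) * s2

/-- not reversed by the stabilizer of the basic labeling -/
def Good (G : SimpleGraph V) (Γ : Subgroup (Equiv.Perm V)) (φ : V → ZMod p) (a b : V) : Prop :=
  ∀ f ∈ Γ, Prs G (ps φ) f → f a = b → f b = a → False

lemma Good.symm {a b : V} (h : Good G Γ φ a b) : Good G Γ φ b a :=
  fun f hf hp h1 h2 => h f hf hp h2 h1

lemma Ctx.good (C : Ctx G p Γ φ ε) {a b₁ b₂ : V} (h1 : G.Adj a b₁) (h2 : G.Adj a b₂)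
    (hne : b₁ ≠ b₂) : Good G Γ φ a b₁ ∨ Good G Γ φ a b₂ := by
  by_contra hcon
  simp only [Good] at hcon
  push Not at hcon
  obtain ⟨⟨f, hf, pf, fa, fb, -⟩, ⟨g, hg, pg, ga, gb, -⟩⟩ := hcon
  obtain ⟨c, hc⟩ := C.ct hf pf
  obtain ⟨d, hd⟩ := C.ct hg pg
  have ef := C.swap hf h1 fa
  have eg := C.swap hg h2 ga
  have gg : g * g = 1 := C.fix (Γ.mul_mem hg hg) (Prs.mul C hg pg pg) (a := a) (by simp [ga, gb])
  have hc0 : c ≠ 0 := by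
    intro h
    have := C.dst f hf (fun v => by rw [hc v, h]; ring)
    rw [this] at fa; exact h1.ne fa
  have hd0 : d ≠ 0 := by
    intro h
    have := C.dst g hg (fun v => by rw [hd v, h]; ring)
    rw [this] at ga; exact h2.ne ga
  by_cases hcd : c = d
  · have : f * g = 1 := C.dst _ (Γ.mul_mem hf hg) (fun v => by
      simp only [Equiv.Perm.mul_apply]
      rw [hc, hd, eg, hcd]; ring)
    have h3 : f = g := by
      calc f = f * (g * g) := by rw [gg, mul_one]
        _ = g := by rw [← mul_assoc, this, one_mul]
    rw [← h3] at ga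
    exact hne (fa.symm.trans ga)
  · have h3 : 2 * c - d = 0 := by
      clear hc hd
      rcases C.hp with rfl | rfl
      · exact zz2 c d hc0 hd0 hcd
      · exact zz3 c d hc0 hd0 hcd
    have h4 : f * (g * f) = 1 := C.dst _ (Γ.mul_mem hf (Γ.mul_mem hg hf)) (fun v => by
      simp only [Equiv.Perm.mul_apply]
      rw [hc, hd, hc, eg, ef]
      linear_combination (ε v) * h3)
    have ff : f * f = 1 := C.fix (Γ.mul_mem hf hf) (Prs.mul C hf pf pf) (a := a) (by simp [fa, fb])
    have h5 : g = 1 := by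
      calc g = (f * f) * g * (f * f) := by rw [ff]; simp
        _ = f * (f * (g * f)) * f := by simp only [mul_assoc]
        _ = 1 := by rw [h4, mul_one, ff]
    rw [h5] at ga; exact h2.ne ga

lemma sg_map (f : Equiv.Perm V) (a b u v : V) :
    sg s(f a, f b) s(u,v) = sg s(a,b) s(f⁻¹ u, f⁻¹ v) := by
  have : s(u,v) = s(f a, f b) ↔ s(f⁻¹ u, f⁻¹ v) = s(a,b) := by
    simp only [Sym2.eq_iff, Equiv.Perm.inv_eq_iff_eq]
  simp only [sg, this]

lemma Ctx.equiv (C : Ctx G p Γ φ ε) {f} (hf : f ∈ Γ) {a b c d : V}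
    (h : sg s(a,b) + sg s(c,d) ∈ Bs G) : sg s(f a,f b) + sg s(f c,f d) ∈ Bs G := by
  obtain ⟨X, hX⟩ := h
  refine ⟨fun v => X (f⁻¹ v), fun u v huv => ?_⟩
  simp only [Pi.add_apply, sg_map]
  exact hX _ _ (C.inv_adj hf _ _ huv)

/-- modified labeling -/
noncomputable def Jl (φ : V → ZMod p) (e : Sym2 V) (κ : ZMod p) : Sym2 V → ZMod p :=
  fun k => ps φ k + if k = e then κ else 0

lemma Jl_fix (C : Ctx G p Γ φ ε) {f : Equiv.Perm V} {a b : V} {κ : ZMod p}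
    (h : Prs G (Jl φ s(a,b) κ) f) (he : s(f a, f b) = s(a,b)) : Prs G (ps φ) f := by
  intro u v huv
  have h1 := h u v huv
  have : s(f u, f v) = s(a,b) ↔ s(u,v) = s(a,b) := by
    conv_lhs => rw [← he]
    simp
  simp only [Jl, this] at h1
  exact add_right_cancel h1

lemma Jl_move (C : Ctx G p Γ φ ε) {f : Equiv.Perm V} (hf : f ∈ Γ) {a b : V} {κ : ZMod p}
    (hκ : κ ≠ 0) (hab : G.Adj a b) (hnb : sg s(a,b) ∉ Bs G)
    (h : Prs G (Jl φ s(a,b) κ) f) : sg s(f a, f b) + sg s(a,b) ∈ Bs G := by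
  by_cases he : s(f a, f b) = s(a,b)
  · rw [he]; exact ser_refl G _
  set a' := f⁻¹ a with ha'
  set b' := f⁻¹ b with hb'
  have fa' : f a' = a := by simp [ha']
  have fb' : f b' = b := by simp [hb']
  have he' : ∀ u v, s(f u, f v) = s(a,b) ↔ s(u,v) = s(a',b') := by
    intro u v
    rw [← fa', ← fb']; simp
  have hne : s(a,b) ≠ s(a',b') := fun h => he ((he' a b).2 h)
  suffices H : sg s(a,b) + sg s(a',b') ∈ Bs G by
    have := C.equiv hf H
    rwa [fa', fb'] at this
  set x : V → ZMod p := fun v => ε v * (φ (f v) - φ v) with hx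
  have hxd : ∀ u v, G.Adj u v → x u - x v = ε u * ((if s(u,v) = s(a,b) then κ else 0) -
      (if s(u,v) = s(a',b') then κ else 0)) := by
    intro u v huv
    have h1 := h u v huv
    simp only [Jl, ps_mk, he'] at h1
    have h2 := C.anti u v huv
    simp only [hx]
    linear_combination (ε u) * h1 - (φ (f v) - φ v) * h2
  have hx0 : ∀ u v, G.Adj u v → s(u,v) ≠ s(a,b) → s(u,v) ≠ s(a',b') → x u = x v := by
    intro u v huv h1 h2
    have := hxd u v huv
    rw [if_neg h1, if_neg h2] at this
    linear_combination this
  have hεκ : ∀ v, ε v * κ ≠ 0 := by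
    intro v h0
    apply hκ
    linear_combination ε v * h0 - κ * C.sq v
  have hxa : x a ≠ x b := by
    intro h0
    have := hxd a b hab
    rw [if_pos rfl, if_neg hne, h0] at this
    exact hεκ a (by linear_combination -this)
  set Z : V → ZMod 2 := fun v => if x v = x a then 0 else 1 with hZ
  have Za : Z a = 0 := by simp [hZ]
  have Zb : Z b = 1 := by simp [hZ, hxa.symm]
  have hZ0 : ∀ u v, G.Adj u v → s(u,v) ≠ s(a,b) → s(u,v) ≠ s(a',b') → Z u + Z v = 0 := by
    intro u v huv h1 h2
    simp only [hZ, hx0 u v huv h1 h2]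
    exact two_zero _
  have hZe : ∀ u v, s(u,v) = s(a,b) → Z u + Z v = 1 := by
    intro u v he
    simp only [Sym2.eq_iff] at he
    rcases he with ⟨rfl, rfl⟩ | ⟨rfl, rfl⟩ <;> simp [Za, Zb]
  have hZe' : ∀ u v, s(u,v) = s(a',b') → Z u + Z v = Z a' + Z b' := by
    intro u v he
    simp only [Sym2.eq_iff] at he
    rcases he with ⟨rfl, rfl⟩ | ⟨rfl, rfl⟩
    · rfl
    · rw [add_comm]
  rcases zmod2_cases (Z a' + Z b') with h0 | h0
  · exfalso; apply hnb
    refine ⟨Z, fun u v huv => ?_⟩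
    by_cases h1 : s(u,v) = s(a,b)
    · rw [hZe u v h1, h1, sg_self]
    rw [sg_ne h1]
    by_cases h2 : s(u,v) = s(a',b')
    · rw [hZe' u v h2, h0]
    exact hZ0 u v huv h1 h2
  · refine ⟨Z, fun u v huv => ?_⟩
    rw [Pi.add_apply]
    by_cases h1 : s(u,v) = s(a,b)
    · rw [hZe u v h1, h1, sg_self, sg_ne hne, add_zero]
    rw [sg_ne h1]
    by_cases h2 : s(u,v) = s(a',b')
    · rw [hZe' u v h2, h0, h2, sg_self, zero_add]
    rw [hZ0 u v huv h1 h2, sg_ne h2, add_zero]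

end C
end DI

open SimpleGraph
namespace DI
set_option linter.unusedSectionVars false
set_option linter.unusedVariables false
lemma z2eq : ∀ a b : ZMod 2, a + b = 0 → a = b := by decide
lemma z2ne : ∀ a b : ZMod 2, a ≠ b → a + b = 1 := by decide
open scoped Classical

/-- `G` with the series class of `e` removed -/
def He {V : Type*} (G : SimpleGraph V) (e : Sym2 V) : SimpleGraph V where
  Adj u v := G.Adj u v ∧ sg s(u,v) + sg e ∉ Bs G
  symm := ⟨by intro u v h; rw [Sym2.eq_swap]; exact ⟨h.1.symm, h.2⟩⟩
  loopless := ⟨fun v h => h.1.ne rfl⟩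

section C
variable {V : Type*} [Fintype V] {G : SimpleGraph V} {p : ℕ} {Γ : Subgroup (Equiv.Perm V)}
    {φ ε : V → ZMod p}

lemma cls_const {e : Sym2 V} {X : V → ZMod 2}
    (h : ∀ u v, G.Adj u v → X u ≠ X v → sg s(u,v) + sg e ∈ Bs G) {u v : V}
    (r : (He G e).Reachable u v) : X u = X v := by
  refine const_of_reach (fun a b hab => ?_) r
  by_contra hne
  exact hab.2 (h a b hab.1 hne)

lemma lem1c {e : Sym2 V} {x y c d : V} (hxy : (He G e).Adj x y) (hnb : sg s(x,y) ∉ Bs G)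
    (hcx : ¬ (He G e).Reachable x c) (hcd : (He G e).Adj c d) : sg s(c,d) + sg s(x,y) ∉ Bs G := by
  rintro ⟨Z, hZ⟩
  set H := He G e
  have hdx : ¬ H.Reachable x d := fun h => hcx (h.trans hcd.symm.reachable)
  set T : V → ZMod 2 := fun v => if H.Reachable x v then Z v else 0 with hT
  set Y : Sym2 V → ZMod 2 := Sym2.lift ⟨fun u v => T u + T v, fun _ _ => add_comm _ _⟩ with hY
  have hYm : ∀ u v, Y s(u,v) = T u + T v := fun _ _ => rfl
  have hYB : Y ∈ Bs G := ⟨T, fun u v _ => rfl⟩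
  have := lemP G (Y + sg s(x,y)) e (by
    intro u v huv hne
    right
    by_contra hH
    have hA : H.Adj u v := ⟨huv, hH⟩
    apply hne
    rw [Pi.add_apply, hYm]
    by_cases hu : H.Reachable x u
    · have hv : H.Reachable x v := hu.trans hA.reachable
      simp only [hT, if_pos hu, if_pos hv]
      have h1 := hZ u v huv
      have hn : s(u,v) ≠ s(c,d) := by
        intro h
        simp only [Sym2.eq_iff] at h
        rcases h with ⟨rfl, rfl⟩ | ⟨rfl, rfl⟩
        · exact hcx hu
        · exact hcx hv
      rw [h1, Pi.add_apply, sg_ne hn, zero_add]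
      exact two_zero _
    · have hv : ¬ H.Reachable x v := fun h => hu (h.trans hA.symm.reachable)
      have hn : s(u,v) ≠ s(x,y) := by
        intro h
        simp only [Sym2.eq_iff] at h
        rcases h with ⟨rfl, rfl⟩ | ⟨rfl, rfl⟩
        · exact hu (Reachable.refl _)
        · exact hv (Reachable.refl _)
      simp [hT, if_neg hu, if_neg hv, sg_ne hn])
  rcases this with h | h
  · apply hnb
    have := (Bs G).add_mem hYB h
    rwa [← add_assoc, fn_two, zero_add] at this
  · apply hxy.2
    have := (Bs G).add_mem hYB h
    rwa [← add_assoc, ← add_assoc, fn_two, zero_add] at this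

lemma lem1a (htwo : ∀ v, ∃ a b, a ≠ b ∧ G.Adj v a ∧ G.Adj v b) {e : Sym2 V} {v0 a u w w' : V}
    (ha : (He G e).Reachable v0 a) (hau : G.Adj a u) (hcl : sg s(a,u) + sg e ∈ Bs G)
    (hw : ¬ (He G e).Reachable v0 w) (hww : (He G e).Adj w w') :
    ∃ x y, (He G e).Adj x y ∧ sg s(x,y) ∉ Bs G ∧ ¬ (He G e).Reachable v0 x := by
  set H := He G e
  by_cases hb : sg s(w,w') ∈ Bs G
  swap
  · exact ⟨w, w', hww, hb, hw⟩
  have hw' : ¬ H.Reachable v0 w' := fun h => hw (h.trans hww.symm.reachable)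
  obtain ⟨Z, hZ⟩ := hb
  have hZ1 : ∀ p q, G.Adj p q → s(p,q) ≠ s(w,w') → Z p = Z q := by
    intro p q hpq hn
    have := hZ p q hpq
    rw [sg_ne hn] at this
    exact z2eq _ _ this
  have hZX : ∀ v, H.Reachable v0 v → Z v = Z v0 := by
    intro v hv
    rw [SimpleGraph.reachable_iff_reflTransGen] at hv
    induction hv with
    | refl => rfl
    | @tail b c h1 h2 ih =>
      rw [← SimpleGraph.reachable_iff_reflTransGen] at h1
      rw [← ih]
      refine (hZ1 b c h2.1 ?_).symm
      intro h
      simp only [Sym2.eq_iff] at h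
      rcases h with ⟨rfl, rfl⟩ | ⟨rfl, rfl⟩
      · exact hw h1
      · exact hw' h1
  have hZw : Z w ≠ Z w' := by
    intro h
    have := hZ w w' hww.1
    rw [sg_self, h, two_zero] at this
    exact absurd this (by simp)
  -- orient
  obtain ⟨q, q', hqq, hq, hq'⟩ : ∃ q q', s(q,q') = s(w,w') ∧ Z q ≠ Z v0 ∧ Z q' = Z v0 := by
    by_cases h : Z w = Z v0
    · exact ⟨w', w, Sym2.eq_swap, by rw [← h]; exact hZw.symm, h⟩
    · refine ⟨w, w', rfl, h, ?_⟩
      rcases zmod2_cases (Z w) with h1 | h1 <;> rcases zmod2_cases (Z w') with h2 | h2 <;>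
        rcases zmod2_cases (Z v0) with h3 | h3 <;> simp_all
  set Q : Finset V := Finset.univ.filter (fun v => Z v ≠ Z v0) with hQ
  have hQm : ∀ v, v ∈ Q ↔ Z v ≠ Z v0 := by simp [hQ]
  have hleave : ∀ r t, G.Adj r t → r ∈ Q → t ∉ Q → r = q ∧ t = q' := by
    intro r t hrt hr ht
    rw [hQm] at hr ht
    have ht := not_not.1 ht
    have : s(r,t) = s(q,q') := by
      by_contra hne
      rw [hqq] at hne
      exact hr ((hZ1 r t hrt hne).trans ht)
    simp only [Sym2.eq_iff] at this
    rcases this with h | ⟨rfl, rfl⟩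
    · exact h
    · exact absurd hq' hr
  obtain ⟨x, hx, y, hy, hxy, hnb⟩ := lemQ G htwo _ Q q q' rfl ((hQm _).2 hq) hleave
  have hxX : ¬ H.Reachable v0 x := fun h => (hQm _).1 hx (hZX x h)
  refine ⟨x, y, ⟨hxy, fun hcc => ?_⟩, hnb, hxX⟩
  obtain ⟨Y, hY⟩ := ser_trans G hcc (ser_symm G hcl)
  have haQ : a ∉ Q := fun h => (hQm _).1 h (hZX a ha)
  apply hnb
  refine ⟨fun v => if v ∈ Q then Y v + Y q else 0, fun r t hrt => ?_⟩
  have main : ∀ r t, G.Adj r t → r ∈ Q → t ∉ Q → (if r ∈ Q then Y r + Y q else 0) +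
      (if t ∈ Q then Y t + Y q else 0) = sg s(x,y) s(r,t) := by
    intro r t hrt hr ht
    obtain ⟨rfl, rfl⟩ := hleave r t hrt hr ht
    have : s(r,t) ≠ s(x,y) := by
      intro h
      simp only [Sym2.eq_iff] at h
      rcases h with ⟨rfl, rfl⟩ | ⟨rfl, rfl⟩
      · exact ht hy
      · exact ht hx
    rw [if_pos hr, if_neg ht, sg_ne this, two_zero, add_zero]
  by_cases hr : r ∈ Q <;> by_cases ht : t ∈ Q
  · simp only [if_pos hr, if_pos ht]
    have h1 := hY r t hrt
    have hn : s(r,t) ≠ s(a,u) := by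
      intro h
      simp only [Sym2.eq_iff] at h
      rcases h with ⟨rfl, rfl⟩ | ⟨rfl, rfl⟩
      · exact haQ hr
      · exact haQ ht
    rw [Pi.add_apply, sg_ne hn, add_zero] at h1
    rw [← h1]
    linear_combination two_zero (Y q)
  · exact main r t hrt hr ht
  · rw [show s(r,t) = s(t,r) from Sym2.eq_swap, ← main t r hrt.symm ht hr, add_comm]
  · simp only [if_neg hr, if_neg ht]
    have hn : s(r,t) ≠ s(x,y) := by
      intro h
      simp only [Sym2.eq_iff] at h
      rcases h with ⟨rfl, rfl⟩ | ⟨rfl, rfl⟩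
      · exact hr hx
      · exact ht hx
    rw [sg_ne hn, add_zero]

end C
end DI

open SimpleGraph
namespace DI
set_option linter.unusedSectionVars false
set_option linter.unusedVariables false
lemma zone (p : ℕ) (hp : p = 2 ∨ p = 3) : (1 : ZMod p) ≠ 0 := by
  rcases hp with rfl | rfl <;> decide
open scoped Classical

section C
variable {V : Type*} [Fintype V] {G : SimpleGraph V} {p : ℕ} {Γ : Subgroup (Equiv.Perm V)}
    {φ ε : V → ZMod p}

lemma Ctx.exists_good (C : Ctx G p Γ φ ε) :
    ∃ a b, G.Adj a b ∧ sg s(a,b) ∉ Bs G ∧ Good G Γ φ a b := by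
  obtain ⟨r⟩ := C.conn.nonempty
  obtain ⟨x, -, y, -, hxy, hnb⟩ := lemQ G C.two _ Finset.univ r r rfl (Finset.mem_univ _)
    (fun _ q _ _ h => (h (Finset.mem_univ _)).elim)
  obtain ⟨y2, hne, hxy2, hnb2, -⟩ := lemN G s(r,r) hxy hnb (fun h => hnb (by
    have := (Bs G).add_mem h (sg_diag G r)
    rwa [add_assoc, fn_two, add_zero] at this))
  rcases C.good hxy hxy2 hne.symm with h | h
  · exact ⟨x, y, hxy, hnb, h⟩
  · exact ⟨x, y2, hxy2, hnb2, h⟩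

lemma Ctx.exists_ring (C : Ctx G p Γ φ ε)
    (hz : ∃ z a b c, G.Adj z a ∧ G.Adj z b ∧ G.Adj z c ∧ a ≠ b ∧ a ≠ c ∧ b ≠ c)
    (hno : ∀ ψ : Sym2 V → ZMod p, ∃ f ∈ Γ, Prs G ψ f ∧ f ≠ 1) :
    ∃ (e : Sym2 V) (X : Set V), sg e ∉ Bs G ∧ (∀ v, v ∈ X ↔ ∃ w, (He G e).Adj v w) ∧
      (∀ Y : V → ZMod 2, (∀ u v, G.Adj u v → Y u ≠ Y v → sg s(u,v) + sg e ∈ Bs G) →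
        ∀ a ∈ X, ∀ b ∈ X, Y a = Y b) ∧ ∃ a ∈ X, ∃ u, u ∉ X ∧ G.Adj a u := by
  obtain ⟨a1, b1, h1⟩ := C.exists_good
  set S : Finset (V × V × V) := Finset.univ.filter (fun t =>
    G.Adj t.1 t.2.1 ∧ sg s(t.1,t.2.1) ∉ Bs G ∧ Good G Γ φ t.1 t.2.1) with hS
  let cmp : V × V × V → Finset V := fun t =>
    Finset.univ.filter (fun v => (He G s(t.1,t.2.1)).Reachable t.2.2 v)
  obtain ⟨⟨a0, b0, v0⟩, hm, hmax⟩ := Finset.exists_max_image S (fun t => (cmp t).card)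
    ⟨(a1, b1, a1), by simp only [hS, Finset.mem_filter]; exact ⟨Finset.mem_univ _, h1⟩⟩
  simp only [hS, Finset.mem_filter, Finset.mem_univ, true_and] at hm
  obtain ⟨hab, hnb, hgood⟩ := hm
  have hmax' : ∀ x y, G.Adj x y → sg s(x,y) ∉ Bs G → Good G Γ φ x y →
     ∀ v, (∀ w, (He G s(a0,b0)).Reachable v0 w → (He G s(x,y)).Reachable v0 w) →
      (He G s(x,y)).Reachable v0 v → (He G s(a0,b0)).Reachable v0 v := by
    intro x y h1 h2 h3 v h4 h5
    by_contra h6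
    have := hmax (x, y, v0) (by simp only [hS, Finset.mem_filter, Finset.mem_univ, true_and]; exact ⟨h1, h2, h3⟩)
    apply absurd this
    rw [not_le]
    apply Finset.card_lt_card
    refine ⟨fun w hw => ?_, fun hss => ?_⟩
    · simp only [cmp, Finset.mem_filter, Finset.mem_univ, true_and] at hw ⊢
      exact h4 w hw
    · have : v ∈ cmp (x,y,v0) := by simp only [cmp, Finset.mem_filter, Finset.mem_univ, true_and]; exact h5
      have := hss this
      simp only [cmp, Finset.mem_filter, Finset.mem_univ, true_and] at this
      exact h6 this
  clear hmax
  set e := s(a0,b0) with he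
  set H := He G e with hH
  set X : Set V := {v | H.Reachable v0 v} with hX
  have hW : ∀ Y : V → ZMod 2, (∀ u v, G.Adj u v → Y u ≠ Y v → sg s(u,v) + sg e ∈ Bs G) →
        ∀ a ∈ X, ∀ b ∈ X, Y a = Y b := fun Y hY a ha b hb =>
    cls_const hY (Reachable.trans (Reachable.symm ha) hb)
  -- X is not everything
  have hXne : ∃ v, v ∉ X := by
    obtain ⟨f, hf, pf, f1⟩ := hno (Jl φ e 1)
    have hne : s(f a0, f b0) ≠ e := by
      intro h
      have h2 := Jl_fix C pf h
      simp only [he, Sym2.eq_iff] at h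
      rcases h with h | h
      · exact f1 (C.fix hf h2 h.1)
      · exact hgood f hf h2 h.1 h.2
    have hmv := Jl_move C hf (zone p C.hp) hab hnb pf
    have hmv' := hmv
    obtain ⟨Y, hY⟩ := hmv
    by_contra hcon
    push Not at hcon
    have hYc := hW Y (fun u v huv hn => by
      have h3 := hY u v huv
      by_cases p1 : s(u,v) = s(f a0, f b0)
      · rw [p1]; exact hmv'
      by_cases p2 : s(u,v) = e
      · rw [p2]; exact ser_refl G _
      rw [Pi.add_apply, sg_ne p1, sg_ne p2, add_zero] at h3
      exact absurd (z2eq _ _ h3) hn) a0 (hcon _) b0 (hcon _)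
    have h3 := hY a0 b0 hab
    rw [Pi.add_apply, sg_ne hne.symm, sg_self, hYc, two_zero] at h3
    exact absurd h3 (by simp)
  have hv0 : v0 ∈ X := Reachable.refl _
  obtain ⟨a, ha, u, hu, hau⟩ : ∃ a ∈ X, ∃ u, u ∉ X ∧ G.Adj a u := by
    by_contra hcon
    push Not at hcon
    obtain ⟨v, hv⟩ := hXne
    have := const_of_reach (x := fun v => (v ∈ X : Prop)) (G := G) (fun r t hrt => by
      apply propext
      constructor
      · intro hr; by_contra ht; exact hcon r hr t ht hrt
      · intro ht; by_contra hr; exact hcon t ht r hr hrt.symm) (C.conn.preconnected v0 v)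
    exact hv (this ▸ hv0)
  have hcl : sg s(a,u) + sg e ∈ Bs G := by
    by_contra h
    exact hu (Reachable.trans ha (Adj.reachable (show H.Adj a u from ⟨hau, h⟩)))
  have claim : ∀ w w', H.Adj w w' → w ∈ X := by
    intro w w' hww
    by_contra hw
    obtain ⟨x, y, hxy, hnb', hx⟩ := lem1a C.two ha hau hcl hw hww
    obtain ⟨x, y, hxy, hnb', hx, hg⟩ : ∃ x y, H.Adj x y ∧ sg s(x,y) ∉ Bs G ∧
        ¬ H.Reachable v0 x ∧ Good G Γ φ x y := by
      obtain ⟨y2, n2, a2, nb2, c2⟩ := lemN G e hxy.1 hnb' hxy.2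
      rcases C.good hxy.1 a2 n2.symm with h | h
      · exact ⟨x, y, hxy, hnb', hx, h⟩
      · exact ⟨x, y2, ⟨a2, c2⟩, nb2, hx, h⟩
    have hsub : ∀ w, H.Reachable v0 w → (He G s(x,y)).Reachable v0 w := by
      intro w hw
      rw [SimpleGraph.reachable_iff_reflTransGen] at hw
      induction hw with
      | refl => exact Reachable.refl _
      | @tail b c h1 h2 ih =>
        rw [← SimpleGraph.reachable_iff_reflTransGen] at h1
        refine ih.trans (Adj.reachable ⟨h2.1, ?_⟩)
        exact lem1c hxy hnb' (fun h => hx (h1.trans h.symm)) h2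
    apply hu
    apply hmax' x y hxy.1 hnb' hg u hsub
    refine (hsub a ha).trans (Adj.reachable ⟨hau, fun h => hxy.2 ?_⟩)
    exact ser_trans G (ser_symm G h) hcl
  refine ⟨e, X, hnb, fun v => ⟨fun hv => ?_, fun ⟨w, hw⟩ => claim v w hw⟩, hW, a, ha, u, hu, hau⟩
  obtain ⟨z, z1, z2, z3, h1, h2, h3, n12, n13, n23⟩ := hz
  have hzH : ∃ z', H.Adj z z' := by
    by_contra hcon
    push Not at hcon
    have hc : ∀ y, G.Adj z y → sg s(z,y) + sg e ∈ Bs G := by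
      intro y hy
      by_contra h
      exact hcon y ⟨hy, h⟩
    refine lemRing G {z} e z z1 z z2 z z3 hnb ?_ h1 h2 h3 rfl rfl rfl (hc _ h1) (hc _ h2) (hc _ h3) ?_ ?_ ?_
    · rintro Y - a rfl b rfl; rfl
    all_goals simp [n12, n13, n23, h1.ne', h2.ne']
  obtain ⟨z', hz'⟩ := hzH
  by_cases hvz : v = z
  · rw [hvz]; exact ⟨z', hz'⟩
  have hr : H.Reachable v z := Reachable.trans (Reachable.symm hv) (claim z z' hz')
  obtain ⟨wk⟩ := hr
  cases wk with
  | nil => exact absurd rfl hvz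
  | cons h _ => exact ⟨_, h⟩

end C
end DI

open SimpleGraph
namespace DI
set_option linter.unusedSectionVars false
set_option linter.unusedVariables false
lemma z3ex : ∀ a b : ZMod 3, ∃ κ : ZMod 3, κ ≠ 0 ∧ a + κ ≠ b := by decide
lemma z2one : ∀ a : ZMod 2, a * a = 1 → a = 1 := by decide
lemma z2sub : ∀ a b : ZMod 2, a - b = a + b := by decide
lemma z2add1 : ∀ a b : ZMod 2, a ≠ b → a + 1 = b := by decide
open scoped Classical

section C
variable {V : Type*} [Fintype V] {G : SimpleGraph V} {p : ℕ} {Γ : Subgroup (Equiv.Perm V)}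
    {φ ε : V → ZMod p}

lemma sum_sub_perm (φ : V → ZMod p) (f : Equiv.Perm V) : ∑ v, (φ (f v) - φ v) = 0 := by
  rw [Finset.sum_sub_distrib, Equiv.sum_comp f φ, sub_self]

theorem Ctx.noncycle (C : Ctx G p Γ φ ε)
    (hz : ∃ z a b c, G.Adj z a ∧ G.Adj z b ∧ G.Adj z c ∧ a ≠ b ∧ a ≠ c ∧ b ≠ c) :
    ∃ ψ : Sym2 V → ZMod p, ∀ f ∈ Γ, Prs G ψ f → f = 1 := by
  by_contra hcon
  have hno : ∀ ψ : Sym2 V → ZMod p, ∃ f ∈ Γ, Prs G ψ f ∧ f ≠ 1 := by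
    push Not at hcon; exact hcon
  obtain ⟨e, X, hnb, hXiff, hW, a, ha, u, hu, hau⟩ := C.exists_ring hz hno
  have hcls : ∀ w, w ∉ X → ∀ w', G.Adj w w' → sg s(w,w') + sg e ∈ Bs G := by
    intro w hw w' hww
    by_contra h
    exact hw ((hXiff w).2 ⟨w', hww, h⟩)
  have hcls' : ∀ w, w ∉ X → ∀ w', G.Adj w' w → sg s(w',w) + sg e ∈ Bs G := by
    intro w hw w' hww
    rw [show s(w',w) = s(w,w') from Sym2.eq_swap]; exact hcls w hw w' hww.symm
  have hnbc : ∀ k, sg k + sg e ∈ Bs G → sg k ∉ Bs G := fun k hk h => hnb (ser_bridge G hk h)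
  obtain ⟨c, hc, d, hd, hcd, hne⟩ : ∃ c ∈ X, ∃ d, d ∉ X ∧ G.Adj c d ∧ s(c,d) ≠ s(a,u) := by
    by_contra hcon
    push Not at hcon
    apply hnbc _ (hcls' u hu a hau)
    have key : ∀ r t, G.Adj r t → r ∈ X → t ∉ X → (if r ∈ X then (1 : ZMod 2) else 0) +
        (if t ∈ X then 1 else 0) = sg s(a,u) s(r,t) := by
      intro r t hrt hr ht
      rw [if_pos hr, if_neg ht, hcon r hr t ht hrt, sg_self, add_zero]
    have hn : ∀ r t, (r ∈ X ↔ t ∈ X) → s(r,t) ≠ s(a,u) := by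
      intro r t hrt h
      simp only [Sym2.eq_iff] at h
      rcases h with ⟨rfl, rfl⟩ | ⟨rfl, rfl⟩ <;> tauto
    refine ⟨fun v => if v ∈ X then 1 else 0, fun r t hrt => ?_⟩
    by_cases hr : r ∈ X <;> by_cases ht : t ∈ X
    · rw [sg_ne (hn r t (by tauto))]; simp only [if_pos hr, if_pos ht]; exact two_zero _
    · exact key r t hrt hr ht
    · rw [show s(r,t) = s(t,r) from Sym2.eq_swap, ← key t r hrt.symm ht hr, add_comm]
    · rw [sg_ne (hn r t (by tauto))]; simp only [if_neg hr, if_neg ht, add_zero]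
  have hleave : ∀ r t, G.Adj r t → r ∈ X → t ∉ X → s(r,t) = s(a,u) ∨ s(r,t) = s(c,d) := by
    intro r t hrt hr ht
    by_contra hh
    push Not at hh
    exact lemRing G X e r t a u c d hnb hW hrt hau hcd hr ha hc (hcls' t ht r hrt)
      (hcls' u hu a hau) (hcls' d hd c hcd) hh.1 hh.2 hne.symm
  -- preservation of X
  have hpresX0 : ∀ f ∈ Γ, ∀ x y κ, κ ≠ 0 → G.Adj x y → sg s(x,y) + sg e ∈ Bs G →
      Prs G (Jl φ s(x,y) κ) f → ∀ v, v ∉ X → f v ∉ X := by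
    intro f hf x y κ hκ hxy hcl pf v hv hfv
    obtain ⟨w, hw⟩ := (hXiff _).1 hfv
    apply hw.2
    have h1 := hcls v hv (f⁻¹ w) (by have := C.inv_adj hf _ _ hw.1; simpa using this)
    have h2 := C.equiv hf (ser_trans G h1 (ser_symm G hcl))
    have h3 := Jl_move C hf hκ hxy (hnbc _ hcl) pf
    have h4 := ser_trans G (ser_trans G h2 h3) hcl
    simpa using h4
  have hpresX : ∀ f ∈ Γ, ∀ x y κ, κ ≠ 0 → G.Adj x y → sg s(x,y) + sg e ∈ Bs G →
      Prs G (Jl φ s(x,y) κ) f → ∀ v, v ∈ X → f v ∈ X := by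
    intro f hf x y κ hκ hxy hcl pf v hv
    by_contra h
    have := hpresX0 f⁻¹ (Γ.inv_mem hf) x y κ hκ hxy hcl (Prs.inv C hf pf) _ h
    simp at this
    exact this hv
  have hmove : ∀ f ∈ Γ, ∀ x y κ, κ ≠ 0 → G.Adj x y → sg s(x,y) + sg e ∈ Bs G →
      Prs G (Jl φ s(x,y) κ) f → s(f a, f u) = s(a,u) ∨ s(f a, f u) = s(c,d) := by
    intro f hf x y κ hκ hxy hcl pf
    exact hleave _ _ (C.aut f hf _ _ hau) (hpresX f hf x y κ hκ hxy hcl pf a ha)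
      (hpresX0 f hf x y κ hκ hxy hcl pf u hu)
  have hfixa : ∀ f ∈ Γ, ∀ x y κ, κ ≠ 0 → G.Adj x y → sg s(x,y) + sg e ∈ Bs G →
      Prs G (Jl φ s(x,y) κ) f → s(f a, f u) = s(a,u) → f a = a ∧ f u = u := by
    intro f hf x y κ hκ hxy hcl pf h
    simp only [Sym2.eq_iff] at h
    rcases h with h | h
    · exact h
    · exact absurd (hpresX f hf x y κ hκ hxy hcl pf a ha) (h.1 ▸ hu)
  have hau_cl := hcls' u hu a hau
  by_cases hκ : ∃ κ : ZMod p, κ ≠ 0 ∧ ps φ s(a,u) + κ ≠ ps φ s(c,d)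
  · obtain ⟨κ, hκ0, hκ⟩ := hκ
    obtain ⟨f, hf, pf, f1⟩ := hno (Jl φ s(a,u) κ)
    have h1 : s(f a, f u) = s(a,u) := by
      rcases hmove f hf a u κ hκ0 hau hau_cl pf with h | h
      · exact h
      · exfalso
        have := pf a u hau
        rw [h] at this
        simp only [Jl, if_neg hne, if_pos, add_zero] at this
        exact hκ this.symm
    exact f1 (C.fix hf (Jl_fix C pf h1) (hfixa f hf a u κ hκ0 hau hau_cl pf h1).1)
  push Not at hκ
  have hp2 : p = 2 := by
    rcases C.hp with h | rfl
    · exact h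
    · obtain ⟨κ, h1, h2⟩ := z3ex (ps φ s(a,u)) (ps φ s(c,d))
      exact absurd (hκ κ h1) h2
  subst hp2
  have hne2 : ps φ s(a,u) ≠ ps φ s(c,d) := by
    rw [← hκ 1 (by simp)]
    intro h
    have : (1 : ZMod 2) = 0 := by linear_combination -h
    exact absurd this (by simp)
  have hone : (1 : ZMod 2) ≠ 0 := by simp
  obtain ⟨u2, hu2, hu2a⟩ : ∃ u2, G.Adj u u2 ∧ u2 ≠ a := by
    obtain ⟨x, y, hxy, hx, hy⟩ := C.two u
    by_cases h : x = a
    · exact ⟨y, hy, fun h' => hxy (h.trans h'.symm)⟩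
    · exact ⟨x, hx, h⟩
  have hnbr : ∀ w, G.Adj u w → w = a ∨ w = u2 := by
    intro w hw
    by_contra hh
    push Not at hh
    refine lemRing G {u} e u a u u2 u w hnb ?_ hau.symm hu2 hw rfl rfl rfl (hcls u hu _ hau.symm)
      (hcls u hu _ hu2) (hcls u hu _ hw) ?_ ?_ ?_
    · rintro Y - a rfl b rfl; rfl
    · simp [hu2a.symm, hau.ne]
    · simp [hh.1.symm, hau.ne]
    · simp [hh.2.symm, hu2.ne']
  have hu2_cl := hcls u hu u2 hu2
  by_cases hes : s(u,u2) = s(c,d)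
  · obtain ⟨f, hf, pf, f1⟩ := hno (Jl φ s(a,u) 1)
    have pf' := Prs.inv C hf pf
    have hf' := Γ.inv_mem hf
    by_cases h1 : s(f a, f u) = s(a,u)
    · exact f1 (C.fix hf (Jl_fix C pf h1) (hfixa f hf a u 1 hone hau hau_cl pf h1).1)
    have h2 : s(f⁻¹ a, f⁻¹ u) = s(c,d) := by
      rcases hmove _ hf' a u 1 hone hau hau_cl pf' with h | h
      · exfalso; apply h1
        have := congrArg (Sym2.map f) h
        simpa using this.symm
      · exact h
    have h3 : ∀ r t, s(f r, f t) = s(a,u) ↔ s(r,t) = s(c,d) := by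
      intro r t
      rw [← h2]
      constructor
      · intro h
        have := congrArg (Sym2.map (⇑(f⁻¹ : Equiv.Perm V))) h
        simpa using this
      · intro h
        have := congrArg (Sym2.map f) h
        simpa using this
    have hεo : ∀ v, ε v = 1 := fun v => z2one _ (C.sq v)
    have hcard : ∑ v : V, (1 : ZMod 2) = 0 := by
      rw [← C.sum]; exact Finset.sum_congr rfl (fun v _ => (hεo v).symm)
    set δ : V → ZMod 2 := fun v => (φ (f v) - φ v) + (if v = u then 1 else 0) with hδ
    have hδc : ∀ r t, G.Adj r t → δ r = δ t := by
      intro r t hrt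
      have h4 := pf r t hrt
      simp only [Jl, ps_mk, h3] at h4
      rw [← hes] at h4
      have key : ((if s(r,t) = s(a,u) then (1 : ZMod 2) else 0) + (if s(r,t) = s(u,u2) then 1 else 0))
         = (if r = u then 1 else 0) + (if t = u then 1 else 0) := by
        have main : ∀ t, G.Adj u t → ((if s(u,t) = s(a,u) then (1 : ZMod 2) else 0) + (if s(u,t) = s(u,u2) then 1 else 0)) = 1 := by
          intro t ht
          rcases hnbr t ht with rfl | rfl
          · rw [if_pos Sym2.eq_swap, if_neg, add_zero]
            simp [hu2a.symm, hau.ne]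
          · rw [if_pos rfl, if_neg, zero_add]
            simp [hu2a, hau.ne']
        by_cases hr : r = u
        · subst hr
          rw [main t hrt, if_pos rfl, if_neg hrt.ne', add_zero]
        · by_cases ht : t = u
          · subst ht
            rw [show s(r,t) = s(t,r) from Sym2.eq_swap, main r hrt.symm, if_pos rfl, if_neg hr, zero_add]
          · rw [if_neg hr, if_neg ht, if_neg, if_neg]
            · intro h; simp only [Sym2.eq_iff] at h; tauto
            · intro h; simp only [Sym2.eq_iff] at h; tauto
      apply z2eq
      simp only [hδ]
      have t1 := two_zero (if s(r,t) = s(u,u2) then (1 : ZMod 2) else 0)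
      have t2 := two_zero (if r = u then (1 : ZMod 2) else 0)
      have t3 := two_zero (if t = u then (1 : ZMod 2) else 0)
      linear_combination h4 + key - t1 + t2 + t3
    have hs : ∑ v, δ v = 1 := by
      simp only [hδ]
      rw [Finset.sum_add_distrib, sum_sub_perm, Finset.sum_ite_eq']
      simp
    have hs' : ∑ v, δ v = δ a * ∑ v : V, (1 : ZMod 2) := by
      rw [Finset.mul_sum]
      refine Finset.sum_congr rfl (fun v _ => ?_)
      rw [mul_one]
      exact const_of_reach hδc (C.conn.preconnected v a)
    rw [hs, hcard, mul_zero] at hs'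
    exact hone hs'
  · obtain ⟨f, hf, pf, f1⟩ := hno (Jl φ s(u,u2) 1)
    have hn0 : s(a,u) ≠ s(u,u2) := by simp [hu2a.symm, hau.ne]
    have h1 : s(f a, f u) = s(a,u) := by
      rcases hmove f hf u u2 1 hone hu2 hu2_cl pf with h | h
      · exact h
      · exfalso
        have := pf a u hau
        rw [h] at this
        simp only [Jl, if_neg (Ne.symm hes), if_neg hn0, add_zero] at this
        exact hne2 this.symm
    obtain ⟨fa, fu⟩ := hfixa f hf u u2 1 hone hu2 hu2_cl pf h1
    have fu2 : f u2 = u2 := by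
      have h2 := C.aut f hf _ _ hu2
      rw [fu] at h2
      rcases hnbr _ h2 with h | h
      · exact absurd (f.injective (h.trans fa.symm)) hu2a
      · exact h
    exact f1 (C.fix hf (Jl_fix C pf (by rw [fu, fu2])) fa)

end C
end DI

open SimpleGraph
namespace DI
set_option linter.unusedSectionVars false
set_option linter.unusedVariables false
lemma sq2 : ∀ x : ZMod 2, x ≠ 0 → x * x = 1 := by decide
lemma sq3 : ∀ x : ZMod 3, x ≠ 0 → x * x = 1 := by decide
lemma z3a : (1 : ZMod 3) ≠ 0 ∧ (2 : ZMod 3) ≠ 0 ∧ (1 : ZMod 3) ≠ 2 := by decide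
lemma z2or : ∀ a b c : ZMod 2, b ≠ c → a = b ∨ a = c := by decide
lemma z2trans : ∀ a b c d : ZMod 2, a ≠ b → c ≠ d → a = c → b = d := by decide
open scoped Classical

section C
variable {V : Type*} [Fintype V] {G : SimpleGraph V} {p : ℕ} {Γ : Subgroup (Equiv.Perm V)}
    {φ ε : V → ZMod p}

/-- 2-regular -/
def Reg2 (G : SimpleGraph V) : Prop := ∀ v a b w, a ≠ b → G.Adj v a → G.Adj v b → G.Adj v w → w = a ∨ w = b

lemma reg_fix (C : Ctx G p Γ φ ε) (hr : Reg2 G) {f} (hf : f ∈ Γ) {v a : V} (h1 : f v = v)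
    (h2 : f a = a) (hva : G.Adj v a) : ∀ w, G.Adj v w → f w = w := by
  intro w hw
  by_cases hwa : w = a
  · rw [hwa, h2]
  have := C.aut f hf _ _ hw
  rw [h1] at this
  rcases hr v a w (f w) (Ne.symm hwa) hva hw this with h | h
  · exact absurd (f.injective (h.trans h2.symm)) hwa
  · exact h

lemma reg_one (C : Ctx G p Γ φ ε) (hr : Reg2 G) {f} (hf : f ∈ Γ) {v a : V} (h1 : f v = v)
    (h2 : f a = a) (hva : G.Adj v a) : f = 1 := by
  have key : ∀ u w, G.Adj u w → (f u = u ∧ ∀ x, G.Adj u x → f x = x) → (f w = w ∧ ∀ x, G.Adj w x → f x = x) := by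
    rintro u w huw ⟨q1, q2⟩
    exact ⟨q2 w huw, reg_fix C hr hf (q2 w huw) q1 huw.symm⟩
  ext x
  have := const_of_reach (x := fun u => (f u = u ∧ ∀ x, G.Adj u x → f x = x : Prop)) (G := G)
    (fun u w h => propext ⟨key u w h, key w u h.symm⟩) (C.conn.preconnected v x)
  have h3 : f v = v ∧ ∀ x, G.Adj v x → f x = x := ⟨h1, reg_fix C hr hf h1 h2 hva⟩
  exact (this ▸ h3).1

lemma cyc3 {φ ε : V → ZMod 3} (C : Ctx G 3 Γ φ ε) (hr : Reg2 G) :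
    ∃ ψ : Sym2 V → ZMod 3, ∀ f ∈ Γ, Prs G ψ f → f = 1 := by
  obtain ⟨r⟩ := C.conn.nonempty
  obtain ⟨a, b, hab, ha, hb⟩ := C.two r
  obtain ⟨z1, z2, z3⟩ := z3a
  have hn : s(r,b) ≠ s(r,a) := by simp [hab.symm, ha.ne]
  refine ⟨fun k => if k = s(r,a) then 1 else if k = s(r,b) then 2 else 0, fun f hf pf => ?_⟩
  have h1 := pf r a ha
  have h2 := pf r b hb
  simp only [if_pos, if_neg hn] at h1 h2
  have h3 : s(f r, f a) = s(r,a) := by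
    by_contra h
    rw [if_neg h] at h1
    split_ifs at h1
    · exact z3 h1.symm
    · exact z1 h1.symm
  have h4 : s(f r, f b) = s(r,b) := by
    by_contra h
    rw [if_neg h] at h2
    split_ifs at h2
    · exact z3 h2
    · exact z2 h2.symm
  simp only [Sym2.eq_iff] at h3 h4
  have hfr : f r = r := by grind
  have hfa : f a = a := by grind
  exact reg_one C hr hf hfr hfa ha

noncomputable def ind (J : Set (Sym2 V)) : Sym2 V → ZMod 2 := fun k => if k ∈ J then 1 else 0

lemma ind_pres {J : Set (Sym2 V)} {f : Equiv.Perm V} (h : Prs G (ind J) f) {u v : V} (huv : G.Adj u v) :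
    s(f u, f v) ∈ J ↔ s(u,v) ∈ J := by
  have := h u v huv
  simp only [ind] at this
  split_ifs at this <;> simp_all

lemma card_closed (C : Ctx G p Γ φ ε) (S : Finset V) {r} (hr : r ∈ S)
    (h : ∀ v ∈ S, ∀ w, G.Adj v w → w ∈ S) : ∀ v, v ∈ S := by
  intro v
  have := const_of_reach (x := fun v => (v ∈ S : Prop)) (G := G) (fun u w huw =>
    propext ⟨fun q => h u q w huw, fun q => h w q u huw.symm⟩) (C.conn.preconnected r v)
  exact this ▸ hr

lemma cyc4_cherry {φ ε : V → ZMod 2} (C : Ctx G 2 Γ φ ε) {z x y o : V} (hV : ∀ v, v = z ∨ v = x ∨ v = y ∨ v = o)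
    (hx : G.Adj z x) (hy : G.Adj z y) (hxy : x ≠ y) (hφ : φ x = φ y) :
    ∃ ψ : Sym2 V → ZMod 2, ∀ f ∈ Γ, Prs G ψ f → f = 1 := by
  refine ⟨ind {s(z,x), s(z,y)}, fun f hf pf => C.dst f hf ?_⟩
  have h1 := (ind_pres pf hx).2 (by simp)
  have h2 := (ind_pres pf hy).2 (by simp)
  simp only [Set.mem_insert_iff, Set.mem_singleton_iff, Sym2.eq_iff] at h1 h2
  have i1 : f x ≠ f y := fun h => hxy (f.injective h)
  have n1 := hx.ne
  have n2 := hy.ne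
  have fz : f z = z := by grind
  have fx : f x = x ∨ f x = y := by grind
  have fy : f y = x ∨ f y = y := by grind
  intro v
  by_cases v1 : v = z
  · rw [v1, fz]
  by_cases v2 : v = x
  · rw [v2]; grind
  by_cases v3 : v = y
  · rw [v3]; grind
  have v4 : v = o := by have := hV v; tauto
  have k1 : f v ≠ f z := fun h => v1 (f.injective h)
  have k2 : f v ≠ f x := fun h => v2 (f.injective h)
  have k3 : f v ≠ f y := fun h => v3 (f.injective h)
  have : f v = v := by have := hV (f v); grind
  rw [this]

lemma cyc4_edge {φ ε : V → ZMod 2} (C : Ctx G 2 Γ φ ε) {z x y o : V} (hV : ∀ v, v = z ∨ v = x ∨ v = y ∨ v = o)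
    (hx : G.Adj z x) (hφ : φ z = φ x) (hφ' : φ y = φ o) :
    ∃ ψ : Sym2 V → ZMod 2, ∀ f ∈ Γ, Prs G ψ f → f = 1 := by
  refine ⟨ind {s(z,x)}, fun f hf pf => C.dst f hf ?_⟩
  have h1 := (ind_pres pf hx).2 (by simp)
  simp only [Set.mem_singleton_iff, Sym2.eq_iff] at h1
  intro v
  by_cases v1 : v = z
  · rw [v1]; grind
  by_cases v2 : v = x
  · rw [v2]; grind
  have k1 : f v ≠ f z := fun h => v1 (f.injective h)
  have k2 : f v ≠ f x := fun h => v2 (f.injective h)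
  have := hV (f v)
  have := hV v
  grind

lemma cyc2 {φ ε : V → ZMod 2} (C : Ctx G 2 Γ φ ε) (hr : Reg2 G) :
    ∃ ψ : Sym2 V → ZMod 2, ∀ f ∈ Γ, Prs G ψ f → f = 1 := by
  have hev : (Fintype.card V : ZMod 2) = 0 := by
    have h1 : ∑ v : V, (1 : ZMod 2) = 0 := by
      rw [← C.sum]; exact Finset.sum_congr rfl (fun v _ => (z2one _ (C.sq v)).symm)
    simpa using h1
  have hcl : ∀ (S : Finset V) r, r ∈ S → (∀ v ∈ S, ∀ w, G.Adj v w → w ∈ S) → Even S.card := by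
    intro S r h1 h2
    have h3 := card_closed C S h1 h2
    have : S = Finset.univ := by ext v; simp [h3 v]
    rw [this, Finset.card_univ]
    rwa [← ZMod.natCast_eq_zero_iff_even]
  obtain ⟨r1⟩ := C.conn.nonempty
  obtain ⟨r0, r2, n02, a10, a12⟩ := C.two r1
  have other : ∀ v a, G.Adj v a → ∃ b, b ≠ a ∧ G.Adj v b := by
    intro v a _
    obtain ⟨x, y, hxy, hx, hy⟩ := C.two v
    by_cases h : x = a
    · exact ⟨y, fun h' => hxy (h.trans h'.symm), hy⟩
    · exact ⟨x, h, hx⟩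
  obtain ⟨r3, n31, a23⟩ := other r2 r1 a12.symm
  obtain ⟨r4, n42, a34⟩ := other r3 r2 a23.symm
  have N1 := fun w => hr r1 r0 r2 w n02 a10 a12
  have N2 := fun w => hr r2 r1 r3 w n31.symm a12.symm a23
  have N3 := fun w => hr r3 r2 r4 w n42.symm a23.symm a34
  have n01 := a10.ne'
  have n12 := a12.ne
  have n23 := a23.ne
  have n34 := a34.ne
  have n03 : r0 ≠ r3 := by
    rintro rfl
    have N0 := fun w => hr r0 r1 r2 w n12 a10.symm a23.symm
    have := hcl {r0, r1, r2} r0 (by simp) (by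
      intro v hv w hw
      simp only [Finset.mem_insert, Finset.mem_singleton] at hv ⊢
      rcases hv with rfl | rfl | rfl
      · have := N0 w hw; tauto
      · have := N1 w hw; tauto
      · have := N2 w hw; tauto)
    rw [Finset.card_eq_three.2 ⟨r0, r1, r2, n01, n02, n12, rfl⟩] at this
    exact absurd this (by decide)
  have n14 : r1 ≠ r4 := by
    rintro rfl
    rcases N1 r3 a34.symm with h | h
    · exact n03 h.symm
    · exact n23 h.symm
  by_cases n04 : r0 = r4
  · subst n04
    have N0 := fun w => hr r0 r1 r3 w n31.symm a10.symm a34.symm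
    have hV := card_closed C {r0, r1, r2, r3} (r := r0) (by simp) (by
      intro v hv w hw
      simp only [Finset.mem_insert, Finset.mem_singleton] at hv ⊢
      rcases hv with rfl | rfl | rfl | rfl
      · have := N0 w hw; tauto
      · have := N1 w hw; tauto
      · have := N2 w hw; tauto
      · have := N3 w hw; tauto)
    simp only [Finset.mem_insert, Finset.mem_singleton] at hV
    by_cases p1 : φ r0 = φ r2
    · exact cyc4_cherry C (z := r1) (x := r0) (y := r2) (o := r3) (fun v => by have := hV v; tauto) a10 a12 n02 p1
    by_cases p2 : φ r1 = φ r3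
    · exact cyc4_cherry C (z := r2) (x := r1) (y := r3) (o := r0) (fun v => by have := hV v; tauto) a12.symm a23 n31.symm p2
    rcases z2or (φ r1) _ _ p1 with h | h
    · exact cyc4_edge C (z := r1) (x := r0) (y := r3) (o := r2) (fun v => by have := hV v; tauto) a10 h
        (z2trans _ _ _ _ p2 p1 h)
    · exact cyc4_edge C (z := r1) (x := r2) (y := r3) (o := r0) (fun v => by have := hV v; tauto) a12 h
        (z2trans _ _ _ _ p2 (Ne.symm p1) h)
  have nadj4 : ¬ G.Adj r4 r0 := by
    intro a40
    have N0 := fun w => hr r0 r1 r4 w n14 a10.symm a40.symm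
    have N4 := fun w => hr r4 r3 r0 w n03.symm a34.symm a40
    have := hcl {r0, r1, r2, r3, r4} r0 (by simp) (by
      intro v hv w hw
      simp only [Finset.mem_insert, Finset.mem_singleton] at hv ⊢
      rcases hv with rfl | rfl | rfl | rfl | rfl
      · have := N0 w hw; tauto
      · have := N1 w hw; tauto
      · have := N2 w hw; tauto
      · have := N3 w hw; tauto
      · have := N4 w hw; tauto)
    have h5 : ({r0, r1, r2, r3, r4} : Finset V).card = 5 := by
      rw [Finset.card_insert_of_notMem, Finset.card_insert_of_notMem, Finset.card_insert_of_notMem,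
        Finset.card_insert_of_notMem, Finset.card_singleton] <;>
      simp <;> tauto
    rw [h5] at this
    exact absurd this (by decide)
  have nadj3 : ¬ G.Adj r3 r0 := by
    intro h
    rcases N3 _ h with h | h
    · exact n02 h
    · exact n04 h
  refine ⟨ind {s(r0,r1), s(r1,r2), s(r3,r4)}, fun f hf pf => ?_⟩
  have h1 := (ind_pres pf a10).2 (by simp)
  have h2 := (ind_pres pf a12).2 (by simp)
  have h3 := (ind_pres pf a34).2 (by simp)
  simp only [Set.mem_insert_iff, Set.mem_singleton_iff, Sym2.eq_iff] at h1 h2 h3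
  have i02 : f r0 ≠ f r2 := fun h => n02 (f.injective h)
  have f1 : f r1 = r1 := by grind
  have f0 : f r0 = r0 ∨ f r0 = r2 := by grind
  rcases f0 with f0 | f0
  · exact reg_one C hr hf f1 f0 a10
  exfalso
  have f2 : f r2 = r0 := by grind
  have i31 : f r3 ≠ f r1 := fun h => n31 (f.injective h)
  have i30 : f r3 ≠ f r0 := fun h => n03 (f.injective h).symm
  have i32 : f r3 ≠ f r2 := fun h => n23 (f.injective h).symm
  have f3 : f r3 = r3 ∨ f r3 = r4 := by grind
  have a3 := C.aut f hf _ _ a23.symm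
  rw [f2] at a3
  rcases f3 with h | h <;> rw [h] at a3
  · exact nadj3 a3
  · exact nadj4 a3

/-- core theorem -/
theorem core (hp : p = 2 ∨ p = 3) (conn : G.Connected)
    (two : ∀ v, ∃ a b, a ≠ b ∧ G.Adj v a ∧ G.Adj v b) (Γ : Subgroup (Equiv.Perm V))
    (aut : ∀ f ∈ Γ, ∀ u v, G.Adj u v → G.Adj (f u) (f v)) (φ : V → ZMod p)
    (dst : ∀ f ∈ Γ, (∀ v, φ (f v) = φ v) → f = 1) :
    ∃ ψ : Sym2 V → ZMod p, ∀ f ∈ Γ, Prs G ψ f → f = 1 := by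
  by_cases h0 : ∀ f ∈ Γ, Prs G (ps φ) f → f = 1
  · exact ⟨_, h0⟩
  push Not at h0
  obtain ⟨t, ht, pt, t1⟩ := h0
  set ε : V → ZMod p := fun v => φ (t v) - φ v with hε
  have anti : ∀ u v, G.Adj u v → ε u = - ε v := by
    intro u v huv
    have := pt u v huv
    rw [ps_mk, ps_mk] at this
    simp only [hε]
    linear_combination this
  have hne : ∀ v, ε v ≠ 0 := by
    intro v hv
    apply t1
    apply dst t ht
    intro w
    have key : ∀ u w, G.Adj u w → ε u = 0 → ε w = 0 := by
      intro u w huw h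
      rw [anti w u huw.symm, h, neg_zero]
    have := const_of_reach (x := fun v => (ε v = 0 : Prop)) (G := G)
      (fun u w h => propext ⟨key u w h, key w u h.symm⟩) (conn.preconnected v w)
    have h2 : ε w = 0 := this ▸ hv
    simp only [hε] at h2
    linear_combination h2
  have C : Ctx G p Γ φ ε := ⟨hp, conn, two, aut, dst, anti, by
    intro v
    have := hne v
    generalize ε v = x at this
    rcases hp with rfl | rfl
    · exact sq2 x this
    · exact sq3 x this, sum_sub_perm φ t⟩
  by_cases hz : ∃ z a b c, G.Adj z a ∧ G.Adj z b ∧ G.Adj z c ∧ a ≠ b ∧ a ≠ c ∧ b ≠ c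
  · exact C.noncycle hz
  have hr : Reg2 G := by
    intro v a b w hab ha hb hw
    by_contra hcon
    push Not at hcon
    exact hz ⟨v, a, b, w, ha, hb, hw, hab, hcon.1.symm, hcon.2.symm⟩
  rcases hp with rfl | rfl
  · exact cyc2 C hr
  · exact cyc3 C hr

end C
end DI

open SimpleGraph
namespace DI
set_option linter.unusedSectionVars false
set_option linter.unusedVariables false
open scoped Classical

section D
variable {V : Type*} [Fintype V] {G : SimpleGraph V}

/-- layer function from `K` -/
structure Lay (G : SimpleGraph V) (K : Set V) (ly : V → ℕ) : Prop where
  zero : ∀ v, ly v = 0 ↔ v ∈ K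
  lip : ∀ u v, G.Adj u v → ly v ≤ ly u + 1
  desc : ∀ v, v ∉ K → ∃ u, G.Adj v u ∧ ly u + 1 = ly v

lemma exists_lay (conn : G.Connected) (K : Set V) (hK : K.Nonempty) : ∃ ly, Lay G K ly := by
  let T : V → Set ℕ := fun v => {n | ∃ k ∈ K, ∃ w : G.Walk v k, w.length = n}
  have hT : ∀ v, (T v).Nonempty := by
    intro v
    obtain ⟨k, hk⟩ := hK
    obtain ⟨w⟩ := conn.preconnected v k
    exact ⟨w.length, k, hk, w, rfl⟩
  have lip : ∀ u v, G.Adj u v → sInf (T v) ≤ sInf (T u) + 1 := by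
    intro u v huv
    obtain ⟨k, hk, w, hw⟩ := Nat.sInf_mem (hT u)
    apply Nat.sInf_le
    exact ⟨k, hk, Walk.cons huv.symm w, by simp [hw]⟩
  refine ⟨fun v => sInf (T v), fun v => ⟨fun h => ?_, fun h => ?_⟩, lip, fun v hv => ?_⟩
  · obtain ⟨k, hk, w, hw⟩ := Nat.sInf_mem (hT v)
    rw [h] at hw
    have := Walk.eq_of_length_eq_zero hw
    rwa [this]
  · have : sInf (T v) ≤ 0 := Nat.sInf_le ⟨v, h, Walk.nil, rfl⟩
    exact Nat.le_zero.1 this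
  · obtain ⟨k, hk, w, hw⟩ := Nat.sInf_mem (hT v)
    cases w with
    | nil => exact absurd hk hv
    | @cons _ u _ a w' =>
      refine ⟨u, a, le_antisymm ?_ (lip u v a.symm)⟩
      have : sInf (T u) ≤ w'.length := Nat.sInf_le ⟨k, hk, w', rfl⟩
      simp only [Walk.length_cons] at hw
      show sInf (T u) + 1 ≤ sInf (T v)
      omega

lemma Lay.le {K : Set V} {ly : V → ℕ} (L : Lay G K ly) (f : G ≃g G) (hf : ∀ k ∈ K, f k ∈ K) :
    ∀ n v, ly v = n → ly (f v) ≤ n := by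
  intro n
  induction n with
  | zero => intro v hv; exact ((L.zero _).2 (hf v ((L.zero v).1 hv))).le
  | succ n ih =>
    intro v hv
    obtain ⟨u, hu, hl⟩ := L.desc v (fun h => by rw [(L.zero v).2 h] at hv; omega)
    have h1 := ih u (by omega)
    have h2 := L.lip (f u) (f v) (f.map_adj_iff.2 hu.symm)
    omega

lemma Lay.eq {K : Set V} {ly : V → ℕ} (L : Lay G K ly) (f : G ≃g G) (hf : ∀ k ∈ K, f k ∈ K)
    (hf' : ∀ k ∈ K, f.symm k ∈ K) (v) : ly (f v) = ly v := by
  apply le_antisymm (L.le f hf _ v rfl)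
  have := L.le f.symm hf' _ (f v) rfl
  simpa using this

/-- preservation for graph automorphisms -/
def PI {M : Type*} (G : SimpleGraph V) (ψ : Sym2 V → M) (f : G ≃g G) : Prop :=
  ∀ u v, G.Adj u v → ψ s(f u, f v) = ψ s(u, v)

lemma PI.symm {M : Type*} {ψ : Sym2 V → M} {f : G ≃g G} (h : PI G ψ f) : PI G ψ f.symm := by
  intro u v huv
  have := h (f.symm u) (f.symm v) (f.symm.map_adj_iff.2 huv)
  simpa using this.symm

lemma exists_EC (h : ¬ G.IsAcyclic) : ∃ (E : SimpleGraph V) (K : Set V), K.Nonempty ∧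
    (∀ u v, E.Adj u v → G.Adj u v) ∧ (∀ u v, E.Adj u v → u ∈ K) ∧
    (∀ k ∈ K, ∃ a b, a ≠ b ∧ ∀ w, E.Adj k w ↔ w = a ∨ w = b) ∧
    ∀ u ∈ K, ∀ v ∈ K, E.Reachable u v := by
  simp only [IsAcyclic] at h
  push Not at h
  obtain ⟨x, c, hc⟩ := h
  refine ⟨c.toSubgraph.spanningCoe, c.toSubgraph.verts, ⟨x, c.start_mem_verts_toSubgraph⟩,
    fun u v h => c.toSubgraph.adj_sub h, fun u v h => c.toSubgraph.edge_vert h, fun k hk => ?_, ?_⟩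
  · have h1 := hc.ncard_neighborSet_toSubgraph_eq_two (c.mem_verts_toSubgraph.1 hk)
    obtain ⟨a, b, hab, he⟩ := Set.ncard_eq_two.1 h1
    refine ⟨a, b, hab, fun w => ?_⟩
    have : w ∈ c.toSubgraph.neighborSet k ↔ w ∈ ({a, b} : Set V) := by rw [he]
    simpa using this
  · intro u hu v hv
    have h1 := c.toSubgraph_connected.coe.preconnected ⟨u, hu⟩ ⟨v, hv⟩
    exact h1.map (⟨Subtype.val, fun h => h⟩ : c.toSubgraph.coe →g c.toSubgraph.spanningCoe)

theorem partA {L : Type*} (l0 l1 l2 l3 : L) (n01 : l0 ≠ l1) (n02 : l0 ≠ l2) (n03 : l0 ≠ l3)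
    (n12 : l1 ≠ l2) (n13 : l1 ≠ l3) (n23 : l2 ≠ l3) (conn : G.Connected) (hac : ¬ G.IsAcyclic)
    (φ : V → L) (hφ : ∀ f : G ≃g G, (∀ x, φ (f x) = φ x) → ∀ x, f x = x) :
    ∃ ψ : Sym2 V → L, ∀ f : G ≃g G, PI G ψ f → ∀ x, f x = x := by
  obtain ⟨E, K, hK, hEG, hEK, hnb, hreach⟩ := exists_EC hac
  obtain ⟨ly, L⟩ := exists_lay conn K hK
  have hEK' : ∀ u v, E.Adj u v → v ∈ K := fun u v h => hEK v u h.symm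
  have hpar : ∀ v, ∃ u, v ∉ K → (G.Adj v u ∧ ly u + 1 = ly v) := by
    intro v
    by_cases h : v ∈ K
    · exact ⟨v, fun h' => absurd h h'⟩
    · obtain ⟨u, hu⟩ := L.desc v h
      exact ⟨u, fun _ => hu⟩
  choose par hpar using hpar
  have huniq : ∀ v w, v ∉ K → w ∉ K → s(v, par v) = s(w, par w) → v = w := by
    intro v w hv hw h
    simp only [Sym2.eq_iff] at h
    rcases h with h | ⟨h1, h2⟩
    · exact h.1
    · have e1 := (hpar v hv).2
      have e2 := (hpar w hw).2
      rw [h2] at e1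
      rw [← h1] at e2
      omega
  have hup : ∀ v, v ∉ K → s(v, par v) ∉ E.edgeSet := fun v hv h => hv (hEK _ _ h)
  obtain ⟨r, hr⟩ := hK
  obtain ⟨a, b, hab, hrn⟩ := hnb r hr
  have hra : E.Adj r a := (hrn a).2 (Or.inl rfl)
  have hrb : E.Adj r b := (hrn b).2 (Or.inr rfl)
  have hn : s(r,b) ≠ s(r,a) := by simp [hab.symm, hra.ne]
  set ψ : Sym2 V → _ := fun k => if k = s(r,a) then l1 else if k = s(r,b) then l2 else
    if k ∈ E.edgeSet then l0 else if h : ∃ v, v ∉ K ∧ k = s(v, par v) then φ (Classical.choose h) else l3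
    with hψ
  have ψa : ψ s(r,a) = l1 := by simp [hψ]
  have ψb : ψ s(r,b) = l2 := by simp only [hψ, if_neg hn, if_pos]
  have ψE3 : ∀ k ∈ E.edgeSet, ψ k ≠ l3 := by
    intro k hk
    simp only [hψ, if_pos hk]
    split_ifs <;> assumption
  have ψE1 : ∀ k ∈ E.edgeSet, ψ k = l1 → k = s(r,a) := by
    intro k hk h
    by_contra hne
    simp only [hψ, if_pos hk, if_neg hne] at h
    split_ifs at h
    · exact n12 h.symm
    · exact n01 h
  have ψE2 : ∀ k ∈ E.edgeSet, ψ k = l2 → k = s(r,b) := by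
    intro k hk h
    by_contra hne
    simp only [hψ, if_pos hk, if_neg hne] at h
    split_ifs at h
    · exact n12 h
    · exact n02 h
  have ψU : ∀ v, v ∉ K → ψ s(v, par v) = φ v := by
    intro v hv
    have h1 := hup v hv
    have h2 : s(v, par v) ≠ s(r,a) := fun h => h1 (by rw [h]; exact hra)
    have h3 : s(v, par v) ≠ s(r,b) := fun h => h1 (by rw [h]; exact hrb)
    have h4 : ∃ w, w ∉ K ∧ s(v, par v) = s(w, par w) := ⟨v, hv, rfl⟩
    simp only [hψ, if_neg h1, if_neg h2, if_neg h3, dif_pos h4]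
    have := Classical.choose_spec h4
    rw [← huniq v _ hv this.1 this.2]
  have ψ3 : ∀ k, ψ k ≠ l3 → k ∈ E.edgeSet ∨ ∃ v, v ∉ K ∧ k = s(v, par v) := by
    intro k hk
    by_contra hcon
    push Not at hcon
    apply hk
    have h1 : k ≠ s(r,a) := fun h => hcon.1 (by rw [h]; exact hra)
    have h2 : k ≠ s(r,b) := fun h => hcon.1 (by rw [h]; exact hrb)
    have h4 : ¬ ∃ w, w ∉ K ∧ k = s(w, par w) := by push Not; exact hcon.2
    simp only [hψ, if_neg h1, if_neg h2, if_neg hcon.1, dif_neg h4]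
  clear_value ψ
  refine ⟨ψ, ?_⟩
  have step1 : ∀ f : G ≃g G, PI G ψ f → ∀ k ∈ K, f k ∈ K := by
    intro f pf
    obtain ⟨k, hk, hmax⟩ := Set.exists_max_image K (fun k => ly (f k)) (Set.toFinite _) ⟨r, hr⟩
    by_cases h0 : ly (f k) = 0
    · intro j hj
      rw [← L.zero]
      have := hmax j hj
      omega
    exfalso
    have hfk : f k ∉ K := fun h => h0 ((L.zero _).2 h)
    obtain ⟨x, y, hxy, hkn⟩ := hnb k hk
    have key : ∀ x, E.Adj k x → f x = par (f k) := by
      intro x hx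
      have h1 := pf k x (hEG _ _ hx)
      have h2 := ψE3 s(k,x) hx
      rw [← h1] at h2
      rcases ψ3 _ h2 with h | ⟨w, hw, h⟩
      · exact absurd (hEK _ _ h) hfk
      · simp only [Sym2.eq_iff] at h
        rcases h with ⟨e1, e2⟩ | ⟨e1, e2⟩
        · rw [e2, e1]
        · have h3 := (hpar w hw).2
          rw [← e1, ← e2] at h3
          have := hmax x (hEK' _ _ hx)
          omega
    exact hxy (f.injective ((key x ((hkn x).2 (Or.inl rfl))).trans (key y ((hkn y).2 (Or.inr rfl))).symm))
  have step2 : ∀ f : G ≃g G, PI G ψ f → ∀ u v, E.Adj u v → E.Adj (f u) (f v) := by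
    intro f pf u v huv
    have h1 := pf u v (hEG _ _ huv)
    have h2 := ψE3 s(u,v) huv
    rw [← h1] at h2
    rcases ψ3 _ h2 with h | ⟨w, hw, h⟩
    · exact h
    · exfalso
      have f1 := step1 f pf u (hEK _ _ huv)
      have f2 := step1 f pf v (hEK' _ _ huv)
      simp only [Sym2.eq_iff] at h
      rcases h with ⟨e1, e2⟩ | ⟨e1, e2⟩
      · rw [e1] at f1; exact hw f1
      · rw [e2] at f2; exact hw f2
  have step3 : ∀ f : G ≃g G, PI G ψ f → ∀ k ∈ K, f k = k := by
    intro f pf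
    have h3 := ψE1 s(f r, f a) (step2 f pf _ _ hra) (by rw [pf r a (hEG _ _ hra), ψa])
    have h4 := ψE2 s(f r, f b) (step2 f pf _ _ hrb) (by rw [pf r b (hEG _ _ hrb), ψb])
    simp only [Sym2.eq_iff] at h3 h4
    have hfr : f r = r := by grind
    have hfa : f a = a := by grind
    have hfb : f b = b := by
      have := hrb.ne
      grind
    have fix : ∀ v a, f v = v → E.Adj v a → f a = a → ∀ w, E.Adj v w → f w = w := by
      intro v a hv hva ha w hw
      obtain ⟨x, y, hxy, hvn⟩ := hnb v (hEK _ _ hva)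
      have h1 := step2 f pf _ _ hw
      rw [hv] at h1
      have q1 := (hvn _).1 h1
      have q2 := (hvn _).1 hva
      have q3 := (hvn _).1 hw
      by_cases hwa : w = a
      · rw [hwa, ha]
      have : f w ≠ f a := fun h => hwa (f.injective h)
      rw [ha] at this
      grind
    have key : ∀ u w, E.Adj u w → (f u = u ∧ ∀ x, E.Adj u x → f x = x) → (f w = w ∧ ∀ x, E.Adj w x → f x = x) := by
      rintro u w huw ⟨q1, q2⟩
      exact ⟨q2 w huw, fix w u (q2 w huw) huw.symm q1⟩
    intro k hk
    have := const_of_reach (x := fun u => (f u = u ∧ ∀ x, E.Adj u x → f x = x : Prop)) (G := E)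
      (fun u w h => propext ⟨key u w h, key w u h.symm⟩) (hreach r hr k hk)
    have h5 : f r = r ∧ ∀ x, E.Adj r x → f x = x := ⟨hfr, fix r a hfr hra hfa⟩
    exact (this ▸ h5).1
  have step4 : ∀ f : G ≃g G, PI G ψ f → ∀ v, v ∉ K → f v ∉ K := by
    intro f pf v hv h
    have := step1 f.symm pf.symm _ h
    simp at this
    exact hv this
  have step5 : ∀ f : G ≃g G, PI G ψ f → ∀ v, v ∉ K → φ v ≠ l3 → φ (f v) = φ v := by
    intro f pf v hv hne
    have hly := L.eq f (step1 f pf) (step1 f.symm pf.symm)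
    have h1 := pf v (par v) (hpar v hv).1
    rw [ψU v hv] at h1
    have h2 := hne
    rw [← h1] at h2
    have hfv := step4 f pf v hv
    rcases ψ3 _ h2 with h | ⟨w, hw, h⟩
    · exact absurd (hEK _ _ h) hfv
    · have h' := h
      simp only [Sym2.eq_iff] at h
      rcases h with ⟨e1, e2⟩ | ⟨e1, e2⟩
      · rw [h', ψU w hw, ← e1] at h1; exact h1
      · exfalso
        have q1 := (hpar w hw).2
        have q2 := (hpar v hv).2
        rw [← e1, ← e2, hly, hly] at q1
        omega
  intro f pf
  apply hφ f
  intro v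
  by_cases hv : v ∈ K
  · rw [step3 f pf v hv]
  by_cases h3 : φ v = l3
  · by_contra hne
    have := step5 f.symm pf.symm (f v) (step4 f pf v hv) (fun h => hne (h.trans h3.symm))
    simp at this
    exact hne this.symm
  · exact step5 f pf v hv h3

end D
end DI

open SimpleGraph
namespace DI
set_option linter.unusedSectionVars false
set_option linter.unusedVariables false
open scoped Classical

section F
variable {V : Type*} [Fintype V] {G : SimpleGraph V}

/-- every vertex of `A` has two neighbours in `A` -/
def Leafless (G : SimpleGraph V) (A : Set V) : Prop :=
  ∀ v ∈ A, ∃ a b, a ∈ A ∧ b ∈ A ∧ a ≠ b ∧ G.Adj v a ∧ G.Adj v b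

/-- the two-core -/
def RR (G : SimpleGraph V) : Set V := {v | ∃ A, v ∈ A ∧ Leafless G A}

lemma RR_leafless : Leafless G (RR G) := by
  rintro v ⟨A, hv, hA⟩
  obtain ⟨a, b, ha, hb, h⟩ := hA v hv
  exact ⟨a, b, ⟨A, ha, hA⟩, ⟨A, hb, hA⟩, h⟩

lemma RR_map (f : G ≃g G) : ∀ k ∈ RR G, f k ∈ RR G := by
  rintro k ⟨A, hv, hA⟩
  refine ⟨f '' A, ⟨k, hv, rfl⟩, ?_⟩
  rintro _ ⟨v, hv, rfl⟩
  obtain ⟨a, b, ha, hb, hab, h1, h2⟩ := hA v hv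
  exact ⟨f a, f b, ⟨a, ha, rfl⟩, ⟨b, hb, rfl⟩, fun h => hab (f.injective h),
    f.map_adj_iff.2 h1, f.map_adj_iff.2 h2⟩

lemma RR_nonempty (h : ¬ G.IsAcyclic) : (RR G).Nonempty := by
  obtain ⟨E, K, ⟨k, hk⟩, hEG, hEK, hnb, -⟩ := exists_EC h
  refine ⟨k, K, hk, ?_⟩
  intro v hv
  obtain ⟨a, b, hab, hw⟩ := hnb v hv
  have h1 := (hw a).2 (Or.inl rfl)
  have h2 := (hw b).2 (Or.inr rfl)
  exact ⟨a, b, hEK _ _ h1.symm, hEK _ _ h2.symm, hab, hEG _ _ h1, hEG _ _ h2⟩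

lemma RR_path {u v : V} (hu : u ∈ RR G) (hv : v ∈ RR G) (w : G.Walk u v) (hw : w.IsPath) :
    ∀ x ∈ w.support, x ∈ RR G := by
  intro x hx
  refine ⟨RR G ∪ {x | x ∈ w.support}, Or.inr hx, ?_⟩
  have hR : ∀ y ∈ RR G, ∃ a b, a ∈ RR G ∪ {x | x ∈ w.support} ∧ b ∈ RR G ∪ {x | x ∈ w.support} ∧
      a ≠ b ∧ G.Adj y a ∧ G.Adj y b := by
    intro y hy
    obtain ⟨a, b, ha, hb, h⟩ := RR_leafless y hy
    exact ⟨a, b, Or.inl ha, Or.inl hb, h⟩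
  rintro y (hy | hy)
  · exact hR y hy
  · obtain ⟨i, rfl, hi⟩ := Walk.mem_support_iff_exists_getVert.1 hy
    by_cases h0 : i = 0
    · subst h0; apply hR; simpa using hu
    by_cases h1 : i = w.length
    · subst h1; apply hR; simpa using hv
    have h2 := hw.ncard_neighborSet_toSubgraph_internal_eq_two h0 (by omega)
    obtain ⟨a, b, hab, he⟩ := Set.ncard_eq_two.1 h2
    have ha : w.toSubgraph.Adj (w.getVert i) a := by
      have : a ∈ w.toSubgraph.neighborSet (w.getVert i) := by rw [he]; simp
      exact this
    have hb : w.toSubgraph.Adj (w.getVert i) b := by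
      have : b ∈ w.toSubgraph.neighborSet (w.getVert i) := by rw [he]; simp
      exact this
    exact ⟨a, b, Or.inr (w.mem_verts_toSubgraph.1 (w.toSubgraph.edge_vert ha.symm)),
      Or.inr (w.mem_verts_toSubgraph.1 (w.toSubgraph.edge_vert hb.symm)), hab,
      w.toSubgraph.adj_sub ha, w.toSubgraph.adj_sub hb⟩

lemma RR_conn (conn : G.Connected) (h : ¬ G.IsAcyclic) : (G.induce (RR G)).Connected := by
  obtain ⟨r, hr⟩ := RR_nonempty h
  have : Nonempty (RR G) := ⟨⟨r, hr⟩⟩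
  refine ⟨?_⟩
  rintro ⟨u, hu⟩ ⟨v, hv⟩
  obtain ⟨w, hw⟩ := conn.exists_isPath u v
  exact ⟨w.induce (RR G) (RR_path hu hv w hw)⟩

theorem partB {p : ℕ} (hp : p = 2 ∨ p = 3) (conn : G.Connected) (hac : ¬ G.IsAcyclic)
    (φ : V → ZMod p) (hφ : ∀ f : G ≃g G, (∀ x, φ (f x) = φ x) → ∀ x, f x = x) :
    ∃ ψ : Sym2 V → ZMod p, ∀ f : G ≃g G, PI G ψ f → ∀ x, f x = x := by
  obtain ⟨ly, L⟩ := exists_lay conn (RR G) (RR_nonempty hac)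
  let Γ : Subgroup (Equiv.Perm (RR G)) :=
    { carrier := {g | ∃ f : G ≃g G, (∀ v, v ∉ RR G → φ (f v) = φ v) ∧ ∀ r : RR G, (g r : V) = f r}
      one_mem' := ⟨RelIso.refl _, fun _ _ => rfl, fun _ => rfl⟩
      mul_mem' := by
        rintro g g' ⟨f, h1, h2⟩ ⟨f', h1', h2'⟩
        refine ⟨f'.trans f, fun v hv => ?_, fun r => ?_⟩
        · have : f' v ∉ RR G := fun h => hv (by simpa using RR_map f'.symm _ h)
          exact (h1 _ this).trans (h1' v hv)
        · show ((g (g' r) : RR G) : V) = f (f' r)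
          rw [h2, h2']
      inv_mem' := by
        rintro g ⟨f, h1, h2⟩
        refine ⟨f.symm, fun v hv => ?_, fun r => ?_⟩
        · have : f.symm v ∉ RR G := fun h => hv (by simpa using RR_map f _ h)
          simpa using (h1 _ this).symm
        · have := h2 (g⁻¹ r)
          rw [show g (g⁻¹ r) = r from g.apply_symm_apply r] at this
          rw [this]; simp }
  obtain ⟨ψR, hψR⟩ := core (G := G.induce (RR G)) hp (RR_conn conn hac)
    (by
      rintro ⟨v, hv⟩
      obtain ⟨a, b, ha, hb, hab, h1, h2⟩ := RR_leafless v hv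
      exact ⟨⟨a, ha⟩, ⟨b, hb⟩, fun h => hab (congrArg Subtype.val h), h1, h2⟩) Γ
    (by
      rintro g ⟨f, h1, h2⟩ u v huv
      show G.Adj (g u : V) (g v : V)
      rw [h2, h2]
      exact f.map_adj_iff.2 huv)
    (fun r => φ r)
    (by
      rintro g ⟨f, h1, h2⟩ hg
      have h3 := hφ f (fun x => by
        by_cases hx : x ∈ RR G
        · have := hg ⟨x, hx⟩
          rw [h2] at this
          exact this
        · exact h1 x hx)
      ext r
      rw [h2, h3]; rfl)
  let F : V → V → ZMod p := fun u v =>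
    if h : u ∈ RR G ∧ v ∈ RR G then ψR s(⟨u, h.1⟩, ⟨v, h.2⟩) else
      if ly u < ly v then φ v else if ly v < ly u then φ u else 0
  have Fs : ∀ u v, F u v = F v u := by
    intro u v
    simp only [F]
    by_cases h : u ∈ RR G ∧ v ∈ RR G
    · rw [dif_pos h, dif_pos h.symm, Sym2.eq_swap]
    · rw [dif_neg h, dif_neg (fun h' => h h'.symm)]
      split_ifs <;> first | rfl | omega
  have F1 : ∀ v u, v ∉ RR G → ly u < ly v → F v u = φ v := by
    intro v u hv hl
    simp only [F]
    rw [dif_neg (fun h => hv h.1), if_neg (by omega), if_pos hl]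
  refine ⟨Sym2.lift ⟨F, Fs⟩, fun f pf => ?_⟩
  have pf' : ∀ u v, G.Adj u v → F (f u) (f v) = F u v := pf
  have hly := L.eq f (RR_map f) (RR_map f.symm)
  have hR : ∀ v, f v ∈ RR G ↔ v ∈ RR G := fun v =>
    ⟨fun h => by simpa using RR_map f.symm _ h, RR_map f v⟩
  have off : ∀ v, v ∉ RR G → φ (f v) = φ v := by
    intro v hv
    obtain ⟨u, hu, hl⟩ := L.desc v hv
    have := pf' v u hu
    rwa [F1 v u hv (by omega), F1 _ _ (fun h => hv ((hR v).1 h)) (by rw [hly, hly]; omega)] at this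
  let g : Equiv.Perm (RR G) := f.toEquiv.subtypeEquiv (fun v => (hR v).symm)
  have hg : g ∈ Γ := ⟨f, off, fun r => rfl⟩
  have g1 := hψR g hg (by
    rintro ⟨u, hu⟩ ⟨v, hv⟩ huv
    have := pf' u v huv
    simp only [F] at this
    rw [dif_pos ⟨(hR u).2 hu, (hR v).2 hv⟩, dif_pos ⟨hu, hv⟩] at this
    exact this)
  have on : ∀ v ∈ RR G, f v = v := by
    intro v hv
    have : (g ⟨v, hv⟩ : V) = v := by rw [g1]; rfl
    exact this
  apply hφ f
  intro x
  by_cases hx : x ∈ RR G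
  · rw [on x hx]
  · exact off x hx

theorem main_aux {d : ℕ} (hd : d ≠ 0) (conn : G.Connected) (hac : ¬ G.IsAcyclic)
    (φ : V → Fin d) (hφ : ∀ f : G ≃g G, (∀ x, φ (f x) = φ x) → ∀ x, f x = x) :
    ∃ ψ : Sym2 V → Fin d, ∀ f : G ≃g G, PI G ψ f → ∀ x, f x = x := by
  match d, hd, φ, hφ with
  | 1, _, φ, hφ => exact ⟨fun _ => 0, fun f _ => hφ f (fun x => Subsingleton.elim _ _)⟩
  | 2, _, φ, hφ => exact partB (p := 2) (Or.inl rfl) conn hac φ hφ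
  | 3, _, φ, hφ => exact partB (p := 3) (Or.inr rfl) conn hac φ hφ
  | d + 4, _, φ, hφ =>
    exact partA (⟨0, by omega⟩ : Fin (d + 4)) ⟨1, by omega⟩ ⟨2, by omega⟩ ⟨3, by omega⟩
      (by simp) (by simp) (by simp) (by simp) (by simp) (by simp) conn hac φ hφ

end F
end DI



open SimpleGraph

/-- If `G` is a finite connected simple graph on at least 3 vertices with
`D'(G) = D(G) + 1`, then `G` is acyclic (hence a tree). -/
theorem isAcyclic_of_distinguishingIndex_eq_distinguishingNumber_add_one
    {V : Type*} [Fintype V] (G : SimpleGraph V)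
    (hconn : G.Connected) (hcard : 3 ≤ Fintype.card V)
    (h : distinguishingIndex G = distinguishingNumber G + 1) :
    G.IsAcyclic := by
  by_contra hac
  obtain ⟨φ, hφ⟩ := Nat.sInf_mem (s := {d : ℕ | ∃ φ : V → Fin d,
    ∀ f : G ≃g G, (∀ x : V, φ (f x) = φ x) → ∀ x : V, f x = x})
    ⟨Fintype.card V, Fintype.equivFin V, fun f hf x => (Fintype.equivFin V).injective (hf x)⟩
  change V → Fin (distinguishingNumber G) at φ
  obtain ⟨v⟩ := hconn.nonempty
  have hd : distinguishingNumber G ≠ 0 := fun h0 => by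
    have := (φ v).2
    omega
  obtain ⟨ψ, hψ⟩ := DI.main_aux hd hconn hac φ hφ
  have hle : distinguishingIndex G ≤ distinguishingNumber G := by
    refine Nat.sInf_le ⟨fun e => ψ e.1, fun f hf => hψ f ?_⟩
    intro a b hab
    exact hf ⟨s(a, b), hab⟩
  omega
end
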